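/- arXiv:1212.1529 — 8 statements merged into one kernel-verified Lean document; each statement's English description precedes it below -/
import Mathlib

section
/- The class na(B_u) satisfies the Ramsey property: for all structures (A, <_A), (B, <_B) in na(B_u) such that (A, <_A) embeds into (B, <_B), and every integer k ≥ 2, there exists a structure (C, <_C) in na(B_u) such that for every coloring of the copies of (A, <_A) in (C, <_C) with k colors there is a copy B' of (B, <_B) in (C, <_C) all of whose copies of (A, <_A) receive the same color. -/
/-- A finite Boolean algebra with one distinguished subset and a distinguished binary
relation (the linear ordering). -/
structure OrdAlgU : Type 1 where
  carrier : Type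
  [ba : BooleanAlgebra carrier]
  [fin : Fintype carrier]
  P : Set carrier
  lt : carrier → carrier → Prop

attribute [instance] OrdAlgU.ba OrdAlgU.fin

namespace OrdAlgU

/-- The predicate is a (nontrivial) ideal. -/
def Ideal (A : OrdAlgU) : Prop :=
  (⊤ : A.carrier) ∉ A.P ∧
  (∀ x ∈ A.P, ∀ y : A.carrier, y ≤ x → y ∈ A.P) ∧
  (∀ x ∈ A.P, ∀ y ∈ A.P, x ⊔ y ∈ A.P)

/-- The ordering is proper on atoms: every atom in `P` precedes every atom not in `P`. -/
def Proper (A : OrdAlgU) : Prop :=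
  ∀ a b : A.carrier, IsAtom a → IsAtom b → a ∈ A.P → b ∉ A.P → A.lt a b

/-- The ordering is natural: a strict total (i.e. linear) order whose restriction to the
atoms is proper, and which is the antilexicographical extension of its restriction to atoms:
for distinct `a`, `b`, `a < b` iff the `<`-greatest atom lying below exactly one of `a`, `b`
lies below `b`. -/
def Natural (A : OrdAlgU) : Prop :=
  IsStrictTotalOrder A.carrier A.lt ∧ A.Proper ∧
  ∀ a b : A.carrier, a ≠ b →
    (A.lt a b ↔ ∃ c : A.carrier, IsAtom c ∧ c ≤ b ∧ ¬ c ≤ a ∧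
      ∀ d : A.carrier, IsAtom d → ¬ (d ≤ a ↔ d ≤ b) → d = c ∨ A.lt d c)

/-- Membership in the class `na(B_u)`: a naturally ordered finite Boolean algebra with an
ideal `P` such that exactly one atom does not belong to `P`. -/
def InNaBu (A : OrdAlgU) : Prop :=
  A.Ideal ∧ A.Natural ∧ ∃! a : A.carrier, IsAtom a ∧ a ∉ A.P

/-- An embedding: an injective map preserving `⊔`, `⊓`, `ᶜ`, `⊥`, `⊤`, the linear order
and the predicate. -/
structure Emb (A B : OrdAlgU) : Type where
  toFun : A.carrier → B.carrier
  inj : Function.Injective toFun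
  map_sup : ∀ x y : A.carrier, toFun (x ⊔ y) = toFun x ⊔ toFun y
  map_inf : ∀ x y : A.carrier, toFun (x ⊓ y) = toFun x ⊓ toFun y
  map_compl : ∀ x : A.carrier, toFun xᶜ = (toFun x)ᶜ
  map_bot : toFun ⊥ = ⊥
  map_top : toFun ⊤ = ⊤
  map_lt : ∀ x y : A.carrier, A.lt x y ↔ B.lt (toFun x) (toFun y)
  map_P : ∀ x : A.carrier, x ∈ A.P ↔ toFun x ∈ B.P

/-- The copies of `A` in `C`: images of embeddings of `A` into `C`. -/
def Copies (A C : OrdAlgU) : Set (Set C.carrier) :=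
  {S | ∃ e : Emb A C, Set.range e.toFun = S}

end OrdAlgU

/-!
STATEMENT 8: The class na(B_u) satisfies the Ramsey property.
-/

namespace DualRamsey

/-- Rigid surjection of the natural numbers: first occurrences come in increasing order. -/
def Rig (f : ℕ → ℕ) : Prop := ∀ v, ∃ i, f i = v ∧ ∀ j < i, f j < v

/-- `f` codes a rigid surjection from `N` to `n` which is the identity on the first `t` numbers;
beyond `N` it is continued by a shift. -/
structure R (t N n : ℕ) (f : ℕ → ℕ) : Prop where
  rig : Rig f
  idt : ∀ i < t, f i = i
  lt : ∀ i < N, f i < n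
  tail : ∀ j, f (N + j) = n + j

lemma Rig.comp {F g : ℕ → ℕ} (hF : Rig F) (hg : Rig g) : Rig (g ∘ F) := by
  intro v
  obtain ⟨i, hi, hi'⟩ := hg v
  obtain ⟨j, hj, hj'⟩ := hF i
  exact ⟨j, by simp [hj, hi], fun l hl => hi' _ (hj' _ hl)⟩

lemma R.comp {t N m n : ℕ} {F g : ℕ → ℕ} (hF : R t N m F) (hg : R t m n g) :
    R t N n (g ∘ F) where
  rig := hF.rig.comp hg.rig
  idt i hi := by simp [hF.idt i hi, hg.idt i hi]
  lt i hi := hg.lt _ (hF.lt i hi)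
  tail j := by simp [hF.tail, hg.tail]

lemma R.id (t N : ℕ) : R t N N id where
  rig v := ⟨v, rfl, fun _ h => h⟩
  idt _ _ := rfl
  lt _ h := h
  tail _ := rfl

lemma R.mono {t s N n : ℕ} {f : ℕ → ℕ} (h : s ≤ t) (hf : R t N n f) : R s N n f :=
  ⟨hf.rig, fun i hi => hf.idt i (by omega), hf.lt, hf.tail⟩

lemma R.le {t N m : ℕ} {F : ℕ → ℕ} (hF : R t N m F) (h : t ≤ m) : t ≤ N := by
  by_contra hc
  have h1 := hF.idt N (by omega)
  have h2 := hF.tail 0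
  simp only [add_zero] at h2
  omega

/-- `q` is the first position where the value `t` occurs. -/
structure Fst (t q : ℕ) (g : ℕ → ℕ) : Prop where
  idt : ∀ i < t, g i = i
  at_q : g q = t
  lt : ∀ i < q, g i < t

lemma R.exists_fst {t m n : ℕ} {g : ℕ → ℕ} (hg : R t m n g) (hn : t ≤ n) :
    ∃ q, Fst t q g ∧ t ≤ q ∧ q ≤ m := by
  obtain ⟨q, hq, hq'⟩ := hg.rig t
  refine ⟨q, ⟨hg.idt, hq, hq'⟩, ?_, ?_⟩
  · by_contra hc
    have := hg.idt q (by omega)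
    omega
  · by_contra hc
    have := hq' m (by omega)
    have h2 := hg.tail 0
    simp only [add_zero] at h2
    omega

lemma R.fst_lt {t m n q : ℕ} {g : ℕ → ℕ} (hg : R t m n g) (hn : t < n) (hq : Fst t q g) :
    q < m := by
  by_contra hc
  have h2 := hg.tail (q - m)
  rw [show m + (q - m) = q by omega, hq.at_q] at h2
  omega

lemma Fst.unique {t p q : ℕ} {g : ℕ → ℕ} (hp : Fst t p g) (hq : Fst t q g) : p = q := by
  rcases lt_trichotomy p q with h | h | h
  · have := hq.lt p h; have := hp.at_q; omega
  · exact h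
  · have := hp.lt q h; have := hq.at_q; omega

/-- The first position of the value `q` in `F`. -/
lemma R.fst_comp {t N m q : ℕ} {F : ℕ → ℕ} (hF : R t N m F) (hq : q ≤ m) :
    ∃ Q, Q ≤ N ∧ F Q = q ∧ ∀ g, Fst t q g → Fst t Q (g ∘ F) := by
  obtain ⟨Q, hQ, hQ'⟩ := hF.rig q
  refine ⟨Q, ?_, hQ, fun g hg => ⟨fun i hi => ?_, ?_, fun i hi => ?_⟩⟩
  · by_contra hc
    have := hQ' N (by omega)
    have h2 := hF.tail 0
    simp only [add_zero] at h2
    omega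
  · simp [hF.idt i hi, hg.idt i hi]
  · simp [hQ, hg.at_q]
  · exact hg.lt _ (hQ' i hi)

open Classical in
/-- The initial part of `g` before the first occurrence of a value `≥ t`. -/
noncomputable def pre (t : ℕ) (g : ℕ → ℕ) (i : ℕ) : ℕ := if ∀ j ≤ i, g j < t then g i else t

lemma pre_le (t : ℕ) (g : ℕ → ℕ) (i : ℕ) : pre t g i ≤ t := by
  unfold pre
  split_ifs with h
  · exact (h i le_rfl).le
  · exact le_rfl

lemma Fst.pre_lt {t q : ℕ} {g : ℕ → ℕ} (h : Fst t q g) {i : ℕ} (hi : i < q) :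
    pre t g i = g i := by
  unfold pre
  rw [if_pos]
  intro j hj
  exact h.lt j (by omega)

lemma Fst.pre_ge {t q : ℕ} {g : ℕ → ℕ} (h : Fst t q g) {i : ℕ} (hi : q ≤ i) :
    pre t g i = t := by
  unfold pre
  rw [if_neg]
  intro hj
  have := hj q hi
  have := h.at_q
  omega

/-- Put the letter block `u` of length `p` between the positions `< t` and `≥ t` of `w`. -/
def cat (t p : ℕ) (u w : ℕ → ℕ) (i : ℕ) : ℕ :=
  if i < t then i else if i < t + p then u (i - t) else w (i - p)

def bump (t v : ℕ) : ℕ := if v < t then v else v + 1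

def del (t : ℕ) (g : ℕ → ℕ) (i : ℕ) : ℕ := if i < t then g i else g (i + 1)

def ins (t a : ℕ) (h : ℕ → ℕ) (i : ℕ) : ℕ := if i < t then h i else if i = t then a else h (i - 1)

def up (t : ℕ) (f : ℕ → ℕ) (i : ℕ) : ℕ :=
  if i < t then f i else if i = t then t else bump t (f (i - 1))

lemma Fst.pre_eq {t q : ℕ} {g g' : ℕ → ℕ} (h : Fst t q g) (h' : Fst t q g')
    (hh : ∀ i < q, g i = g' i) : pre t g = pre t g' := by
  funext i
  rcases lt_or_ge i q with hi | hi
  · rw [h.pre_lt hi, h'.pre_lt hi, hh i hi]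
  · rw [h.pre_ge hi, h'.pre_ge hi]

lemma Fst.del {t q : ℕ} {g : ℕ → ℕ} (h : Fst t q g) (ht : t < q) :
    Fst t (q - 1) (del t g) where
  idt i hi := by simp [DualRamsey.del, hi, h.idt i hi]
  at_q := by
    simp only [DualRamsey.del, show ¬ (q - 1 < t) by omega, if_false]
    rw [show q - 1 + 1 = q by omega, h.at_q]
  lt i hi := by
    unfold DualRamsey.del
    split_ifs
    · exact h.lt i (by omega)
    · exact h.lt _ (by omega)

lemma pre_cat {t p q : ℕ} {u w : ℕ → ℕ} (hu : ∀ i < p, u i < t) (hw : Fst t q w) (hq : t ≤ q) :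
    pre t (cat t p u w) = cat t p u (pre t w) := by
  have hF : Fst t (p + q) (cat t p u w) := by
    refine ⟨fun i hi => by simp [cat, hi], ?_, fun i hi => ?_⟩
    · rw [cat, if_neg (by omega), if_neg (by omega), show p + q - p = q by omega, hw.at_q]
    · unfold cat
      split_ifs with h1 h2
      · exact h1
      · exact hu _ (by omega)
      · exact hw.lt _ (by omega)
  funext i
  rcases lt_or_ge i (p + q) with hi | hi
  · rw [hF.pre_lt hi]
    unfold cat
    split_ifs with h1 h2
    · rfl
    · rfl
    · rw [hw.pre_lt (by omega)]
  · rw [hF.pre_ge hi]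
    unfold cat
    rw [if_neg (by omega), if_neg (by omega), hw.pre_ge (by omega)]

/-- Stage two: Hales–Jewett for initial parts. -/
lemma stage_two (t : ℕ) (d : ℕ) (κ : Type) [Finite κ] :
    ∃ M, ∀ φ : (ℕ → ℕ) → κ, ∃ F, R t M (t + d) F ∧ ∀ q g g', t ≤ q → q ≤ t + d →
      Fst t q g → Fst t q g' → φ (pre t (g ∘ F)) = φ (pre t (g' ∘ F)) := by
  induction d with
  | zero =>
    refine ⟨t, fun φ => ⟨_root_.id, R.id t t, fun q g g' h1 h2 hg hg' => ?_⟩⟩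
    have : q = t := by omega
    subst this
    congr 1
    exact Fst.pre_eq hg hg' (fun i hi => by
      simp only [Function.comp_apply, _root_.id]; rw [hg.idt i hi, hg'.idt i hi])
  | succ d ih =>
    obtain ⟨N, hN⟩ := ih
    obtain ⟨ι, _, hι⟩ := Combinatorics.Line.exists_mono_in_high_dimension (Fin t)
      ((Fin N → Fin (t + 1)) → κ)
    let p := Fintype.card ι
    let e : ι ≃ Fin p := Fintype.equivFin ι
    refine ⟨p + N, fun φ => ?_⟩
    let ext : (Fin N → Fin (t + 1)) → ℕ → ℕ := fun w i => if h : i < N then (w ⟨i, h⟩ : ℕ) else t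
    let blk : (ι → Fin t) → ℕ → ℕ := fun u i => if h : i < p then (u (e.symm ⟨i, h⟩) : ℕ) else 0
    obtain ⟨L, c, hL⟩ := hι (fun u w => φ (cat t p (blk u) (ext w)))
    let res : (ℕ → ℕ) → Fin N → Fin (t + 1) := fun w i => ⟨min (w i) t, by omega⟩
    obtain ⟨F, hF, hF'⟩ := hN (fun w => c (res w))
    have htN : t ≤ N := hF.le (by omega)
    let LL : ℕ → ℕ := fun i => if h : i < p then
      ((L.idxFun (e.symm ⟨i, h⟩)).elim t (fun a => (a : ℕ))) else 0
    have hLLle : ∀ i, LL i ≤ t := by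
      intro i
      simp only [LL]
      split_ifs with h
      · cases hh : L.idxFun (e.symm ⟨i, h⟩) with
        | none => simp
        | some a => simp [a.2.le]
      · omega
    have hLLex : ∃ i < p, LL i = t := by
      obtain ⟨x, hx⟩ := L.proper
      refine ⟨e x, (e x).2, ?_⟩
      simp [LL, hx]
    have hLLmin : ∃ i < p, LL i = t ∧ ∀ j < i, LL j < t := by
      classical
      have hs := Nat.find_spec hLLex
      refine ⟨Nat.find hLLex, hs.1, hs.2, fun j hj => ?_⟩
      have h1 := Nat.find_min hLLex hj
      have h2 := hLLle j
      have h3 : LL j ≠ t := fun h => h1 ⟨by have := hs.1; omega, h⟩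
      omega
    obtain ⟨i0, hi0p, hi0, hi0'⟩ := hLLmin
    let G : ℕ → ℕ := cat t p LL (fun i => bump t (F i))
    have hGlow : ∀ i < t, G i = i := fun i hi => by simp [G, cat, hi]
    have hGmid : ∀ i < p, G (t + i) = LL i := fun i hi => by
      simp only [G, cat]
      rw [if_neg (by omega), if_pos (by omega), show t + i - t = i by omega]
    have hGhi : ∀ i, t ≤ i → G (p + i) = bump t (F i) := fun i hi => by
      simp only [G, cat]
      rw [if_neg (by omega), if_neg (by omega), show p + i - p = i by omega]
    have hsplit : ∀ i, i < t ∨ (∃ j < p, i = t + j) ∨ ∃ j, t ≤ j ∧ i = p + j := by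
      intro i
      by_cases h1 : i < t
      · exact Or.inl h1
      by_cases h2 : i < t + p
      · exact Or.inr (Or.inl ⟨i - t, by omega, by omega⟩)
      · exact Or.inr (Or.inr ⟨i - p, by omega, by omega⟩)
    have hGF : R t (p + N) (t + (d + 1)) G := by
      refine ⟨?_, hGlow, ?_, ?_⟩
      · intro v
        rcases lt_trichotomy v t with hv | hv | hv
        · refine ⟨v, hGlow v hv, fun j hj => ?_⟩
          rw [hGlow j (by omega)]; exact hj
        · subst hv
          refine ⟨v + i0, by rw [hGmid _ hi0p, hi0], fun j hj => ?_⟩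
          rcases hsplit j with h | ⟨l, h, rfl⟩ | ⟨l, h, rfl⟩
          · rw [hGlow _ h]; exact h
          · rw [hGmid _ h]; exact hi0' _ (by omega)
          · omega
        · obtain ⟨i, hi, hi'⟩ := hF.rig (v - 1)
          have hti : t ≤ i := by
            by_contra hc
            have := hF.idt i (by omega)
            omega
          refine ⟨p + i, ?_, fun j hj => ?_⟩
          · rw [hGhi _ hti, hi, bump, if_neg (by omega)]; omega
          · rcases hsplit j with h | ⟨l, h, rfl⟩ | ⟨l, h, rfl⟩
            · rw [hGlow _ h]; omega
            · rw [hGmid _ h]; have := hLLle l; omega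
            · rw [hGhi _ h]
              have := hi' l (by omega)
              unfold bump; split_ifs <;> omega
      · intro i hi
        rcases hsplit i with h | ⟨l, h, rfl⟩ | ⟨l, h, rfl⟩
        · rw [hGlow _ h]; omega
        · rw [hGmid _ h]; have := hLLle l; omega
        · rw [hGhi _ h]
          have := hF.lt l (by omega)
          unfold bump; split_ifs <;> omega
      · intro j
        rw [show p + N + j = p + (N + j) by omega, hGhi _ (by omega), hF.tail, bump,
          if_neg (by omega)]
        omega
    refine ⟨G, hGF, fun q g g' htq hqm hg hg' => ?_⟩
    rcases htq.eq_or_lt with rfl | htq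
    · obtain ⟨Q, hQ, hQt, hQ'⟩ := hGF.fst_comp hqm
      congr 1
      refine (hQ' g hg).pre_eq (hQ' g' hg') (fun i hi => ?_)
      have h1 := (hQ' g hg).lt i hi
      have h3 : G i < t := by
        obtain ⟨Q2, h2, h2'⟩ := hGF.rig t
        have : Q2 = Q := by
          rcases lt_trichotomy Q2 Q with h | h | h
          · have := (hQ' g hg).lt _ h
            simp only [Function.comp_apply, h2, hg.at_q] at this
            omega
          · exact h
          · have := h2' _ h; omega
        subst this
        exact h2' i hi
      simp only [Function.comp_apply]
      rw [hg.idt _ h3, hg'.idt _ h3]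
    · have key : ∀ g, Fst t q g → φ (pre t (g ∘ G)) = c (res (pre t (del t g ∘ F))) := by
        intro g hg
        have hgt : g t < t := hg.lt t htq
        obtain ⟨Q, hQN, hQq, hQ⟩ := hF.fst_comp (q := q - 1) (by omega)
        have hfst := hQ _ (hg.del htq)
        have htQ : t ≤ Q := by
          by_contra hc
          have := hF.idt Q (by omega)
          omega
        have h1 : g ∘ G = cat t p (blk (L ⟨g t, hgt⟩)) (del t g ∘ F) := by
          funext i
          rcases hsplit i with h | ⟨l, h, rfl⟩ | ⟨l, h, rfl⟩
          · simp only [Function.comp_apply]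
            rw [hGlow _ h, hg.idt _ h, cat, if_pos h]
          · simp only [Function.comp_apply]
            rw [hGmid _ h, cat, if_neg (by omega), if_pos (by omega), show t + l - t = l by omega]
            simp only [LL, blk, h, dif_pos, Combinatorics.Line.coe_apply]
            cases hh : L.idxFun (e.symm ⟨l, h⟩) with
            | none => simp
            | some a => simp [hg.idt a a.2]
          · simp only [Function.comp_apply]
            rw [hGhi _ h, cat, if_neg (by omega), if_neg (by omega), show p + l - p = l by omega]
            simp only [Function.comp_apply, bump, del]
            split_ifs <;> rfl
        rw [h1, pre_cat _ hfst htQ]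
        · have h2 : pre t (del t g ∘ F) = ext (res (pre t (del t g ∘ F))) := by
            funext i
            simp only [ext, res]
            split_ifs with hi
            · have := pre_le t (del t g ∘ F) i
              simp only [min_eq_left this]
            · rw [hfst.pre_ge (by omega)]
          conv_lhs => rw [h2]
          exact congrFun (hL ⟨g t, hgt⟩) _
        · intro i hi
          simp only [blk, hi, dif_pos]
          exact Fin.is_lt _
      rw [key g hg, key g' hg']
      exact hF' (q - 1) _ _ (by omega) (by omega) (hg.del htq) (hg'.del htq)

/-- The Graham–Rothschild property. -/
def GR (t n : ℕ) : Prop := ∀ m, t ≤ m → ∀ (κ : Type) [Finite κ], ∃ N, ∀ χ : (ℕ → ℕ) → κ,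
  ∃ F, R t N m F ∧ ∀ g g', R t m n g → R t m n g' → χ (g ∘ F) = χ (g' ∘ F)

lemma up_R {t M m : ℕ} {f : ℕ → ℕ} (hf : R t M m f) (htm : t ≤ m) :
    R (t + 1) (M + 1) (m + 1) (up t f) := by
  have htM := hf.le htm
  have hlow : ∀ i < t, up t f i = i := fun i hi => by simp [up, hi, hf.idt i hi]
  have hmid : up t f t = t := by simp [up]
  have hhi : ∀ i, t ≤ i → up t f (i + 1) = bump t (f i) := fun i hi => by
    rw [up, if_neg (by omega), if_neg (by omega)]; rfl
  have hsplit : ∀ i, i < t ∨ i = t ∨ ∃ j, t ≤ j ∧ i = j + 1 := by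
    intro i
    by_cases h1 : i < t
    · exact Or.inl h1
    by_cases h2 : i = t
    · exact Or.inr (Or.inl h2)
    · exact Or.inr (Or.inr ⟨i - 1, by omega, by omega⟩)
  refine ⟨fun v => ?_, fun i hi => ?_, fun i hi => ?_, fun j => ?_⟩
  · rcases lt_trichotomy v t with hv | hv | hv
    · refine ⟨v, hlow v hv, fun j hj => ?_⟩
      rw [hlow j (by omega)]; exact hj
    · subst hv
      refine ⟨v, hmid, fun j hj => ?_⟩
      rw [hlow j hj]; exact hj
    · obtain ⟨i, hi, hi'⟩ := hf.rig (v - 1)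
      have hti : t ≤ i := by
        by_contra hc
        have := hf.idt i (by omega)
        omega
      refine ⟨i + 1, ?_, fun j hj => ?_⟩
      · rw [hhi _ hti, hi, bump, if_neg (by omega)]; omega
      · rcases hsplit j with h | rfl | ⟨l, h, rfl⟩
        · rw [hlow _ h]; omega
        · rw [hmid]; omega
        · rw [hhi _ h]
          have := hi' l (by omega)
          unfold bump; split_ifs <;> omega
  · rcases hsplit i with h | rfl | ⟨l, h, rfl⟩
    · exact hlow _ h
    · exact hmid
    · omega
  · rcases hsplit i with h | rfl | ⟨l, h, rfl⟩
    · rw [hlow _ h]; omega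
    · rw [hmid]; omega
    · rw [hhi _ h]
      have := hf.lt l (by omega)
      unfold bump; split_ifs <;> omega
  · rw [show M + 1 + j = (M + j) + 1 by omega, hhi _ (by omega), hf.tail, bump, if_neg (by omega)]
    omega

lemma del_R {t m n : ℕ} {g : ℕ → ℕ} (hg : R t (m + 1) n g) (htm : t ≤ m) (hgt : g t < t) :
    R t m n (del t g) := by
  refine ⟨fun v => ?_, fun i hi => ?_, fun i hi => ?_, fun j => ?_⟩
  · obtain ⟨i, hi, hi'⟩ := hg.rig v
    have hit : i ≠ t := by
      rintro rfl
      have h1 := hi' (g i) hgt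
      have h2 := hg.idt (g i) hgt
      omega
    rcases lt_or_gt_of_ne hit with h | h
    · refine ⟨i, by simp [del, h, hi], fun j hj => ?_⟩
      rw [del, if_pos (by omega)]; exact hi' j hj
    · refine ⟨i - 1, ?_, fun j hj => ?_⟩
      · rw [del, if_neg (by omega), show i - 1 + 1 = i by omega, hi]
      · unfold del
        split_ifs
        · exact hi' _ (by omega)
        · exact hi' _ (by omega)
  · simp [del, hi, hg.idt i hi]
  · unfold del
    split_ifs
    · exact hg.lt _ (by omega)
    · exact hg.lt _ (by omega)
  · rw [del, if_neg (by omega), show m + j + 1 = m + 1 + j by omega, hg.tail]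

lemma comp_up {t M m n : ℕ} {f g : ℕ → ℕ} (hf : R t M m f) (_ : R t (m + 1) n g) :
    g ∘ up t f = ins t (g t) (del t g ∘ f) := by
  funext i
  simp only [Function.comp_apply, up, ins, bump, del]
  by_cases h1 : i < t
  · simp [h1, hf.idt i h1]
  · by_cases h2 : i = t
    · simp [h2]
    · simp only [h1, h2, if_false]
      split_ifs <;> rfl

lemma pre_del {t : ℕ} {g : ℕ → ℕ} (hid : ∀ i < t, g i = i) (hgt : g t < t) :
    pre t (del t g) = del t (pre t g) := by
  funext i
  by_cases h : i < t
  · have h1 : ∀ j ≤ i, g j < t := fun j hj => by rw [hid j (by omega)]; omega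
    have h2 : ∀ j ≤ i, del t g j < t := fun j hj => by
      rw [del, if_pos (by omega)]; exact h1 j hj
    rw [pre, if_pos h2, del, if_pos h, del, if_pos h, pre, if_pos h1]
  · have h1 : (∀ j ≤ i, del t g j < t) ↔ ∀ j ≤ i + 1, g j < t := by
      constructor
      · intro H j hj
        rcases lt_trichotomy j t with hj' | hj' | hj'
        · rw [hid j hj']; exact hj'
        · rw [hj']; exact hgt
        · have := H (j - 1) (by omega)
          rwa [del, if_neg (by omega), show j - 1 + 1 = j by omega] at this
      · intro H j hj
        unfold del
        split_ifs
        · exact H _ (by omega)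
        · exact H _ (by omega)
    rw [del, if_neg h]
    by_cases h2 : ∀ j ≤ i + 1, g j < t
    · rw [pre, if_pos (h1.2 h2), pre, if_pos h2, del, if_neg h]
    · rw [pre, if_neg (fun hh => h2 (h1.1 hh)), pre, if_neg h2]

lemma pre_at {t : ℕ} {g : ℕ → ℕ} (hid : ∀ i < t, g i = i) : pre t g t = min (g t) t := by
  unfold pre
  by_cases h : g t < t
  · rw [if_pos]
    · omega
    · intro j hj
      rcases hj.eq_or_lt with rfl | hj
      · exact h
      · rw [hid j hj]; exact hj
  · rw [if_neg (fun hh => h (hh t le_rfl))]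
    omega

lemma R.succ_of_le {t m n : ℕ} {g : ℕ → ℕ} (hg : R t m n g) (h : t ≤ g t) : R (t + 1) m n g := by
  refine ⟨hg.rig, fun i hi => ?_, hg.lt, hg.tail⟩
  rcases (Nat.lt_succ_iff.1 hi).eq_or_lt with rfl | hi
  · obtain ⟨j, hj, hj'⟩ := hg.rig i
    rcases lt_trichotomy j i with h1 | h1 | h1
    · have := hg.idt j h1; omega
    · rwa [h1] at hj
    · have := hj' i h1; omega
  · exact hg.idt i hi

/-- Stage one: make the colour depend only on the initial part. -/
lemma stage_one (t n : ℕ) (htn : t < n) (H : GR (t + 1) n) (d : ℕ) :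
    ∀ (κ : Type) [Finite κ], ∃ N, ∀ χ : (ℕ → ℕ) → κ, ∃ F, R t N (t + d) F ∧
      ∀ g g', R t (t + d) n g → R t (t + d) n g' → pre t g = pre t g' →
        χ (g ∘ F) = χ (g' ∘ F) := by
  induction d with
  | zero =>
    intro κ _
    refine ⟨t, fun χ => ⟨_root_.id, R.id t t, fun g g' hg => ?_⟩⟩
    exfalso
    obtain ⟨q, hq, h1, h2⟩ := hg.exists_fst htn.le
    have := hg.fst_lt htn hq
    omega
  | succ d ih =>
    intro κ _
    obtain ⟨M, hM⟩ := ih (Fin t → κ)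
    by_cases htM : t ≤ M
    swap
    · refine ⟨0, fun χ => ?_⟩
      obtain ⟨F, hF, -⟩ := hM (fun h _ => χ h)
      exact absurd (hF.le (by omega)) htM
    obtain ⟨N, hN⟩ := H (M + 1) (by omega) κ
    refine ⟨N, fun χ => ?_⟩
    obtain ⟨G, hG, hG'⟩ := hN χ
    obtain ⟨f, hf, hf'⟩ := hM (fun h a => χ (ins t a h ∘ G))
    have hup := up_R hf (by omega)
    refine ⟨up t f ∘ G, (hG.comp hup).mono (by omega), fun g g' hg hg' hpre => ?_⟩
    have hat := congrFun hpre t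
    rw [pre_at hg.idt, pre_at hg'.idt] at hat
    by_cases hgt : g t < t
    · have hgg : g' t = g t := by omega
      have e1 := comp_up hf hg
      have e2 := comp_up hf hg'
      have hdel : pre t (del t g) = pre t (del t g') := by
        rw [pre_del hg.idt hgt, pre_del hg'.idt (by omega), hpre]
      have := congrFun (hf' _ _ (del_R hg (by omega) hgt) (del_R hg' (by omega) (by omega)) hdel)
        ⟨g t, hgt⟩
      simp only at this
      rw [← Function.comp_assoc, ← Function.comp_assoc, e1, e2, hgg]
      exact this
    · have h1 := hg.succ_of_le (by omega)
      have h2 := hg'.succ_of_le (by omega)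
      rw [← Function.comp_assoc, ← Function.comp_assoc]
      exact hG' _ _ (hup.comp h1) (hup.comp h2)

open Classical in
/-- The map collapsing everything outside `S` to `0` and enumerating `S`. -/
noncomputable def enumMap (S : ℕ → Prop) (i : ℕ) : ℕ := if S i then Nat.count S i else 0

open Classical in
lemma enumMap_R {S : ℕ → Prop} {t m' m : ℕ} (ht : 1 ≤ t) (htm : t ≤ m) (hlow : ∀ i < t, S i)
    (hhi : ∀ i, m' ≤ i → S i) (hc : Nat.count S m' = m) : R t m' m (enumMap S) := by
  have hinf : (Set.ofPred S).Infinite :=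
    Set.infinite_of_forall_exists_gt (fun a => ⟨max (a + 1) m', hhi _ (by omega), by simp⟩)
  refine ⟨fun v => ?_, fun i hi => ?_, fun i hi => ?_, fun j => ?_⟩
  · refine ⟨Nat.nth S v, ?_, fun j hj => ?_⟩
    · rw [enumMap, if_pos (Nat.nth_mem_of_infinite hinf v), Nat.count_nth_of_infinite hinf]
    · unfold enumMap
      split_ifs with hs
      · have := Nat.count_strict_mono hs hj
        rwa [Nat.count_nth_of_infinite hinf] at this
      · rcases Nat.eq_zero_or_pos v with rfl | h
        · exfalso
          rw [Nat.nth_zero_of_zero (hlow 0 (by omega))] at hj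
          omega
        · exact h
  · rw [enumMap, if_pos (hlow i hi), Nat.count_iff_forall.2]
    intro j hj
    exact hlow j (by omega)
  · unfold enumMap
    split_ifs with hs
    · rw [← hc]; exact Nat.count_strict_mono hs hi
    · omega
  · rw [enumMap, if_pos (hhi _ (by omega)), Nat.count_add, hc, Nat.count_iff_forall.2]
    intro k hk
    exact hhi _ (by omega)

lemma pigeon (t d : ℕ) (ht : 1 ≤ t) (κ : Type) [Finite κ] : ∃ d', ∀ c : ℕ → κ,
    ∃ H, R t (t + d') (t + d) H ∧ ∃ c0, ∀ q Q, t ≤ q → q < t + d → H Q = q → c Q = c0 := by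
  classical
  cases nonempty_fintype κ
  refine ⟨Fintype.card κ * d, fun c => ?_⟩
  have : Nonempty κ := ⟨c 0⟩
  obtain ⟨c0, -, hc0⟩ := Finset.exists_le_card_fiber_of_mul_le_card_of_maps_to
    (s := Finset.Ico t (t + Fintype.card κ * d)) (t := (Finset.univ : Finset κ)) (f := c) (n := d)
    (fun _ _ => Finset.mem_univ _) Finset.univ_nonempty (by simp)
  obtain ⟨T, hT, hTc⟩ := Finset.exists_subset_card_eq hc0
  have hTm : ∀ i ∈ T, t ≤ i ∧ i < t + Fintype.card κ * d ∧ c i = c0 := by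
    intro i hi
    have := hT hi
    simp only [Finset.mem_filter, Finset.mem_Ico] at this
    tauto
  let S : ℕ → Prop := fun i => i < t ∨ i ∈ T ∨ t + Fintype.card κ * d ≤ i
  have hcount : Nat.count S (t + Fintype.card κ * d) = t + d := by
    rw [Nat.count_eq_card_filter_range]
    have : (Finset.range (t + Fintype.card κ * d)).filter S = Finset.range t ∪ T := by
      ext i
      simp only [Finset.mem_filter, Finset.mem_range, Finset.mem_union, S]
      constructor
      · rintro ⟨h, h1 | h1 | h1⟩
        · exact Or.inl h1
        · exact Or.inr h1
        · omega
      · rintro (h | h)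
        · exact ⟨by omega, Or.inl h⟩
        · exact ⟨(hTm i h).2.1, Or.inr (Or.inl h)⟩
    rw [this, Finset.card_union_of_disjoint, Finset.card_range, hTc]
    rw [Finset.disjoint_left]
    intro i hi hi'
    have := (hTm i hi').1
    simp at hi
    omega
  have hR : R t (t + Fintype.card κ * d) (t + d) (enumMap S) :=
    enumMap_R ht (by omega) (fun i hi => Or.inl hi) (fun i hi => Or.inr (Or.inr hi))
      (by rw [← hcount]; congr)
  refine ⟨enumMap S, hR, c0, fun q Q h1 h2 h3 => ?_⟩
  by_cases hS : S Q
  · rcases hS with h | h | h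
    · have := hR.idt Q h; omega
    · exact (hTm Q h).2.2
    · have := hR.tail (Q - (t + Fintype.card κ * d))
      rw [show t + Fintype.card κ * d + (Q - (t + Fintype.card κ * d)) = Q by omega] at this
      omega
  · rw [enumMap, if_neg hS] at h3
    omega

lemma gr_step (t n : ℕ) (ht : 1 ≤ t) (htn : t ≤ n) (H : t < n → GR (t + 1) n) : GR t n := by
  classical
  intro m htm κ _
  obtain ⟨d, rfl⟩ := Nat.exists_eq_add_of_le htm
  have S1 : ∀ M, t ≤ M → ∃ N, ∀ χ : (ℕ → ℕ) → κ, ∃ F, R t N M F ∧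
      ∀ g g', R t M n g → R t M n g' → pre t g = pre t g' → χ (g ∘ F) = χ (g' ∘ F) := by
    intro M hM
    obtain ⟨e, rfl⟩ := Nat.exists_eq_add_of_le hM
    rcases htn.eq_or_lt with rfl | h
    · refine ⟨t + e, fun χ => ⟨_root_.id, R.id _ _, fun g g' hg hg' hp => ?_⟩⟩
      have fs : ∀ g, R t (t + e) t g → Fst t (t + e) g := fun g hg =>
        ⟨hg.idt, by simpa using hg.tail 0, hg.lt⟩
      congr 2
      funext i
      rcases lt_or_ge i (t + e) with hi | hi
      · rw [← (fs g hg).pre_lt hi, ← (fs g' hg').pre_lt hi, hp]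
      · obtain ⟨j, rfl⟩ := Nat.exists_eq_add_of_le hi
        rw [hg.tail, hg'.tail]
    · exact stage_one t n h (H h) e κ
  -- choose the collapsing dimension
  have PG : ∃ d', ∀ c : ℕ → κ, ∃ h, R t (t + d') (t + d) h ∧
      ∀ g g' Q Q', R t (t + d) n g → R t (t + d) n g' → Fst t Q (g ∘ h) → Fst t Q' (g' ∘ h) →
        c Q = c Q' := by
    rcases htn.eq_or_lt with rfl | h
    · refine ⟨d, fun c => ⟨_root_.id, R.id _ _, fun g g' Q Q' hg hg' hQ hQ' => ?_⟩⟩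
      have fs : ∀ g, R t (t + d) t g → Fst t (t + d) g := fun g hg =>
        ⟨hg.idt, by simpa using hg.tail 0, hg.lt⟩
      rw [hQ.unique (fs g hg), hQ'.unique (fs g' hg')]
    · obtain ⟨d', hd'⟩ := pigeon t d ht κ
      refine ⟨d', fun c => ?_⟩
      obtain ⟨h', hR, c0, hc0⟩ := hd' c
      have key : ∀ g Q, R t (t + d) n g → Fst t Q (g ∘ h') → c Q = c0 := by
        intro g Q hg hQ
        obtain ⟨q, hq, hq1, hq2⟩ := hg.exists_fst htn
        have hqm := hg.fst_lt h hq
        obtain ⟨Q2, -, hQ2, hQ2'⟩ := hR.fst_comp hq2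
        rw [hQ.unique (hQ2' g hq)]
        exact hc0 q Q2 hq1 hqm hQ2
      exact ⟨h', hR, fun g g' Q Q' hg hg' hQ hQ' => by rw [key g Q hg hQ, key g' Q' hg' hQ']⟩
  obtain ⟨d', hd'⟩ := PG
  obtain ⟨M, hM⟩ := stage_two t d' κ
  by_cases htM : t ≤ M
  swap
  · refine ⟨0, fun χ => ?_⟩
    obtain ⟨F, hF, -⟩ := hM χ
    exact absurd (hF.le (by omega)) htM
  obtain ⟨N, hN⟩ := S1 M htM
  refine ⟨N, fun χ => ?_⟩
  obtain ⟨F1, hF1, hF1'⟩ := hN χ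
  let φ : (ℕ → ℕ) → κ := fun w =>
    if h : ∃ g, R t M n g ∧ pre t g = w then χ (h.choose ∘ F1) else χ w
  have hφ : ∀ g, R t M n g → χ (g ∘ F1) = φ (pre t g) := by
    intro g hg
    have h : ∃ g', R t M n g' ∧ pre t g' = pre t g := ⟨g, hg, rfl⟩
    simp only [φ]
    rw [dif_pos h]
    exact hF1' _ _ hg h.choose_spec.1 h.choose_spec.2.symm
  obtain ⟨F2, hF2, hF2'⟩ := hM φ
  let can : ℕ → ℕ → ℕ := fun Q i => if i < t then i else if i < Q then 0 else t
  have hcan : ∀ Q, t ≤ Q → Fst t Q (can Q) := by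
    intro Q hQ
    refine ⟨fun i hi => by simp [can, hi], ?_, fun i hi => ?_⟩
    · simp only [can]; rw [if_neg (by omega), if_neg (by omega)]
    · simp only [can]; split_ifs <;> omega
  obtain ⟨h, hh, hh'⟩ := hd' (fun Q => φ (pre t (can Q ∘ F2)))
  refine ⟨h ∘ F2 ∘ F1, hF1.comp (hF2.comp hh), ?_⟩
  have key : ∀ g, R t (t + d) n g → ∃ Q, Fst t Q (g ∘ h) ∧
      χ (g ∘ h ∘ F2 ∘ F1) = φ (pre t (can Q ∘ F2)) := by
    intro g hg
    have hgh := hh.comp hg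
    obtain ⟨Q, hQ, hQ1, hQ2⟩ := hgh.exists_fst htn
    refine ⟨Q, hQ, ?_⟩
    rw [← hF2' Q _ _ hQ1 hQ2 hQ (hcan Q hQ1)]
    exact hφ _ (hF2.comp hgh)
  intro g g' hg hg'
  obtain ⟨Q, hQ, e⟩ := key g hg
  obtain ⟨Q', hQ', e'⟩ := key g' hg'
  rw [e, e']
  exact hh' g g' Q Q' hg hg' hQ hQ'

theorem gr (d : ℕ) : ∀ t, 1 ≤ t → GR t (t + d) := by
  induction d with
  | zero => exact fun t ht => gr_step t _ ht (by omega) (fun h => by omega)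
  | succ d ih =>
    intro t ht
    refine gr_step t _ ht (by omega) (fun _ => ?_)
    have := ih (t + 1) (by omega)
    rwa [show t + 1 + d = t + (d + 1) by omega] at this

end DualRamsey

namespace OrdAlgU

open DualRamsey

lemma exists_enum_of_sto (α : Type) [Fintype α] (r : α → α → Prop) (h : IsStrictTotalOrder α r) :
    ∃ e : Fin (Fintype.card α) ≃ α, ∀ i j, r (e i) (e j) ↔ j < i := by
  classical
  have h' : IsStrictTotalOrder α (Function.swap r) := inferInstance
  let L : LinearOrder α := linearOrderOfSTO (Function.swap r)
  let o := Fintype.orderIsoFinOfCardEq α rfl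
  refine ⟨o.toEquiv, fun i j => ?_⟩
  exact o.lt_iff_lt (x := j) (y := i)

/-- `a` enumerates the atoms in decreasing order. -/
structure Enum (A : OrdAlgU) (n : ℕ) (a : ℕ → A.carrier) : Prop where
  atom : ∀ i < n, IsAtom (a i)
  surj : ∀ x, IsAtom x → ∃ i < n, a i = x
  inj : ∀ i < n, ∀ j < n, a i = a j → i = j
  lt : ∀ i < n, ∀ j < n, (A.lt (a i) (a j) ↔ j < i)

lemma InNaBu.exists_enum {A : OrdAlgU} (hA : A.InNaBu) :
    ∃ n a, 1 ≤ n ∧ Enum A n a ∧ a 0 ∉ A.P := by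
  classical
  obtain ⟨hI, ⟨hsto, hprop, hlex⟩, x, ⟨hx, hxP⟩, huniq⟩ := hA
  let T := {x : A.carrier // IsAtom x}
  have hs : IsStrictTotalOrder T (fun x y => A.lt x.1 y.1) :=
    { trichotomous := fun u v h1 h2 => Subtype.ext (hsto.trichotomous _ _ h1 h2)
      irrefl := fun u => hsto.irrefl _
      trans := fun u v w => hsto.trans _ _ _ }
  obtain ⟨e, he⟩ := exists_enum_of_sto T _ hs
  have hn : 1 ≤ Fintype.card T := Fintype.card_pos_iff.2 ⟨⟨x, hx⟩⟩
  let a : ℕ → A.carrier := fun i => if h : i < Fintype.card T then (e ⟨i, h⟩).1 else ⊥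
  have ha : ∀ i (h : i < Fintype.card T), a i = (e ⟨i, h⟩).1 := fun i h => by simp [a, h]
  have hE : Enum A (Fintype.card T) a := by
    refine ⟨fun i hi => ?_, fun y hy => ?_, fun i hi j hj hij => ?_, fun i hi j hj => ?_⟩
    · rw [ha i hi]; exact (e _).2
    · refine ⟨e.symm ⟨y, hy⟩, Fin.is_lt _, ?_⟩
      rw [ha _ (Fin.is_lt _)]
      simp
    · rw [ha i hi, ha j hj] at hij
      have := e.injective (Subtype.ext hij)
      simpa using this
    · rw [ha i hi, ha j hj]
      exact (he _ _).trans (by simp)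
  refine ⟨_, a, hn, hE, fun h0 => ?_⟩
  obtain ⟨i, hi, hix⟩ := hE.surj x hx
  have := hprop (a 0) x (hE.atom 0 hn) hx h0 hxP
  rw [← hix, hE.lt 0 hn i hi] at this
  omega

lemma atom_le_compl {α : Type} [BooleanAlgebra α] {a x : α} (ha : IsAtom a) :
    a ≤ xᶜ ↔ ¬ a ≤ x := by
  rw [ha.not_le_iff_disjoint, le_compl_iff_disjoint_right]

lemma atom_le_sup {α : Type} [BooleanAlgebra α] {a x y : α} (ha : IsAtom a) :
    a ≤ x ⊔ y ↔ a ≤ x ∨ a ≤ y := by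
  constructor
  · intro h
    by_contra hc
    push Not at hc
    have h1 := (atom_le_compl ha).2 hc.1
    have h2 := (atom_le_compl ha).2 hc.2
    have h3 : a ≤ (x ⊔ y)ᶜ := by rw [compl_sup]; exact le_inf h1 h2
    exact (atom_le_compl ha).1 h3 h
  · rintro (h | h)
    · exact h.trans le_sup_left
    · exact h.trans le_sup_right

lemma Enum.eq_of {A : OrdAlgU} {n : ℕ} {a : ℕ → A.carrier} (hE : Enum A n a) {x y : A.carrier}
    (h : ∀ i < n, (a i ≤ x ↔ a i ≤ y)) : x = y := by
  rw [BooleanAlgebra.eq_iff_atom_le_iff]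
  intro c hc
  obtain ⟨i, hi, rfl⟩ := hE.surj c hc
  exact h i hi

lemma Enum.le_iff {A : OrdAlgU} {n : ℕ} {a : ℕ → A.carrier} (hE : Enum A n a) {i j : ℕ}
    (hi : i < n) (hj : j < n) : a i ≤ a j ↔ i = j := by
  rw [(hE.atom j hj).le_iff]
  constructor
  · rintro (h | h)
    · exact absurd h (hE.atom i hi).1
    · exact hE.inj i hi j hj h
  · rintro rfl
    exact Or.inr rfl

/-- The antilexicographic order in terms of the enumeration. -/
lemma Enum.lt_iff {A : OrdAlgU} {n : ℕ} {a : ℕ → A.carrier} (hE : Enum A n a) (hN : A.Natural)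
    (x y : A.carrier) : A.lt x y ↔ ∃ v < n, a v ≤ y ∧ ¬ a v ≤ x ∧
      ∀ w < v, (a w ≤ x ↔ a w ≤ y) := by
  obtain ⟨hsto, -, hlex⟩ := hN
  by_cases hxy : x = y
  · subst hxy
    constructor
    · intro h; exact absurd h (hsto.irrefl x)
    · rintro ⟨v, -, h1, h2, -⟩; exact absurd h1 h2
  rw [hlex x y hxy]
  constructor
  · rintro ⟨c, hc, h1, h2, h3⟩
    obtain ⟨v, hv, rfl⟩ := hE.surj c hc
    refine ⟨v, hv, h1, h2, fun w hw => ?_⟩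
    by_contra hcon
    rcases h3 (a w) (hE.atom w (by omega)) hcon with h | h
    · have := hE.inj w (by omega) v hv h; omega
    · rw [hE.lt w (by omega) v hv] at h; omega
  · rintro ⟨v, hv, h1, h2, h3⟩
    refine ⟨a v, hE.atom v hv, h1, h2, fun d hd hcon => ?_⟩
    obtain ⟨w, hw, rfl⟩ := hE.surj d hd
    rcases lt_trichotomy w v with h | h | h
    · exact absurd (h3 w h) hcon
    · left; rw [h]
    · right; rw [hE.lt w hw v hv]; exact h

lemma Emb.mono {A B : OrdAlgU} (e : Emb A B) {x y : A.carrier} (h : x ≤ y) :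
    e.toFun x ≤ e.toFun y := by
  have := e.map_sup x y
  rw [sup_eq_right.2 h] at this
  rw [this]
  exact le_sup_left

/-- An embedding is dual to a rigid surjection. -/
lemma Emb.exists_R {A B : OrdAlgU} {n m : ℕ} {a : ℕ → A.carrier} {b : ℕ → B.carrier}
    (ha : Enum A n a) (hb : Enum B m b) (hA : A.Natural) (hB : B.Natural) (e : Emb A B) :
    ∃ g, R 1 m n g ∧ ∀ j < m, ∀ x, (b j ≤ e.toFun x ↔ a (g j) ≤ x) := by
  classical
  have hex : ∀ j < m, ∃ v < n, b j ≤ e.toFun (a v) := by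
    intro j hj
    obtain ⟨x, hx, hmin⟩ := wellFounded_lt.has_min {x : A.carrier | b j ≤ e.toFun x}
      ⟨⊤, by simp [e.map_top]⟩
    simp only [Set.mem_ofPred_eq] at hx hmin
    have hat : IsAtom x := by
      refine ⟨?_, fun y hy => ?_⟩
      · rintro rfl
        rw [e.map_bot] at hx
        exact (hb.atom j hj).1 (le_bot_iff.1 hx)
      · have h1 : ¬ b j ≤ e.toFun y := fun h => hmin y h hy
        have h2 : b j ≤ e.toFun (x ⊓ yᶜ) := by
          rw [e.map_inf, e.map_compl]
          exact le_inf hx ((atom_le_compl (hb.atom j hj)).2 h1)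
        have h3 : x ⊓ yᶜ = x := by
          by_contra hne
          exact hmin _ h2 (lt_of_le_of_ne inf_le_left hne)
        have h4 : x ≤ yᶜ := inf_eq_left.1 h3
        have h5 : y ≤ yᶜ := hy.le.trans h4
        exact le_compl_self.1 h5
    obtain ⟨v, hv, rfl⟩ := ha.surj x hat
    exact ⟨v, hv, hx⟩
  choose! g0 hg0 hg0' using hex
  let g : ℕ → ℕ := fun j => if j < m then g0 j else n + (j - m)
  have hg : ∀ j < m, g j = g0 j := fun j hj => by simp [g, hj]
  have hgn : ∀ j < m, g j < n := fun j hj => by rw [hg j hj]; exact hg0 j hj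
  have htail : ∀ j, g (m + j) = n + j := fun j => by simp [g]
  have hiff : ∀ j < m, ∀ x, (b j ≤ e.toFun x ↔ a (g j) ≤ x) := by
    intro j hj x
    have hbj := hg0' j hj
    rw [← hg j hj] at hbj
    constructor
    · intro h
      by_contra hc
      have h1 := e.mono ((atom_le_compl (ha.atom _ (hgn j hj))).2 hc)
      rw [e.map_compl] at h1
      exact (atom_le_compl (hb.atom j hj)).1 (hbj.trans h1) h
    · intro h
      exact hbj.trans (e.mono h)
  have hrig : Rig g := by
    intro v
    by_cases hv : v < n
    · have hexj : ∃ j, j < m ∧ g j = v := by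
        by_contra hc
        push Not at hc
        have : e.toFun (a v) = ⊥ := by
          apply hb.eq_of
          intro j hj
          rw [hiff j hj, ha.le_iff (hgn j hj) hv]
          constructor
          · intro h; exact absurd h (hc j hj)
          · intro h; exact absurd (le_bot_iff.1 h) (hb.atom j hj).1
        rw [← e.map_bot] at this
        exact (ha.atom v hv).1 (e.inj this)
      obtain ⟨hjm, hjv⟩ := Nat.find_spec hexj
      refine ⟨Nat.find hexj, hjv, fun i hi => ?_⟩
      have him : i < m := hi.trans hjm
      have hne : g i ≠ v := fun h => Nat.find_min hexj hi ⟨him, h⟩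
      by_contra hc
      have hw : v < g i := by omega
      have hlt := (ha.lt (g i) (hgn i him) v hv).2 hw
      rw [e.map_lt, hb.lt_iff hB] at hlt
      obtain ⟨j0, hj0, h1, h2, h3⟩ := hlt
      rw [hiff j0 hj0, ha.le_iff (hgn j0 hj0) hv] at h1
      have hle := Nat.find_min' hexj ⟨hj0, h1⟩
      have := h3 i (by omega)
      rw [hiff i him, hiff i him, ha.le_iff (hgn i him) (hgn i him),
        ha.le_iff (hgn i him) hv] at this
      exact hne (this.1 rfl)
    · refine ⟨m + (v - n), by rw [htail]; omega, fun j hj => ?_⟩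
      by_cases hjm : j < m
      · have := hgn j hjm; omega
      · obtain ⟨l, rfl⟩ := Nat.exists_eq_add_of_le (not_lt.1 hjm)
        rw [htail]; omega
  refine ⟨g, ⟨hrig, fun i hi => ?_, hgn, htail⟩, hiff⟩
  obtain ⟨l, hl, hl'⟩ := hrig 0
  have : l = 0 := by
    by_contra h
    have := hl' 0 (by omega)
    omega
  have hi0 : i = 0 := by omega
  rw [hi0, ← this, hl, this]

/-- The canonical member of the class with `N + 1` atoms. -/
noncomputable def canon (N : ℕ) : OrdAlgU :=
  { carrier := Set (Fin (N + 1))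
    fin := Fintype.ofFinite _
    P := {s | (0 : Fin (N + 1)) ∉ s}
    lt := fun s t => ∃ i : Fin (N + 1), i ∈ t ∧ i ∉ s ∧ ∀ j < i, (j ∈ s ↔ j ∈ t) }

lemma canon_inNaBu (N : ℕ) : (canon N).InNaBu := by
  have hsing : ∀ i j : Fin (N + 1), (canon N).lt ({i} : Set _) ({j} : Set _) ↔ j < i := by
    intro i j
    simp only [canon]
    constructor
    · rintro ⟨l, h1, h2, h3⟩
      simp only [Set.mem_singleton_iff] at h1 h2 h3
      subst h1
      rcases lt_trichotomy l i with h | h | h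
      · exact h
      · exact absurd h h2
      · have := (h3 i h).1 rfl
        exact absurd this.symm h2
    · intro h
      refine ⟨j, rfl, ?_, fun l hl => ?_⟩
      · simp only [Set.mem_singleton_iff]; exact h.ne
      · simp only [Set.mem_singleton_iff]
        constructor
        · rintro rfl; exact absurd (hl.trans h) (lt_irrefl _)
        · rintro rfl; exact absurd hl (lt_irrefl _)
  refine ⟨⟨?_, ?_, ?_⟩, ⟨?_, ?_, ?_⟩, ?_⟩
  · intro h
    exact h (Set.mem_univ _)
  · intro x hx y hy h0
    exact hx (hy h0)
  · intro x hx y hy h0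
    rcases h0 with h | h
    · exact hx h
    · exact hy h
  · refine { trichotomous := ?_, irrefl := ?_, trans := ?_ }
    · intro (s : Set (Fin (N + 1))) (t : Set (Fin (N + 1))) h1 h2
      classical
      by_contra hne
      have hex : ∃ i : Fin (N + 1), ¬ (i ∈ s ↔ i ∈ t) := by
        by_contra hc
        push Not at hc
        exact hne (Set.ext hc)
      obtain ⟨i, hi, hmin⟩ := wellFounded_lt.has_min
        {i : Fin (N + 1) | ¬ (i ∈ s ↔ i ∈ t)} hex
      simp only [Set.mem_ofPred_eq, not_imp_not] at hi hmin
      have hmin' : ∀ j < i, (j ∈ s ↔ j ∈ t) := by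
        intro j hj
        by_contra hc
        exact hc (hmin j hj)
      by_cases his : i ∈ s
      · exact h2 ⟨i, his, fun h => hi ⟨fun _ => h, fun _ => his⟩, fun j hj => (hmin' j hj).symm⟩
      · refine h1 ⟨i, ?_, his, hmin'⟩
        by_contra h
        exact hi ⟨fun h' => absurd h' his, fun h' => absurd h' h⟩
    · rintro s ⟨i, h1, h2, -⟩
      exact h2 h1
    · rintro s t u ⟨i, h1, h2, h3⟩ ⟨j, k1, k2, k3⟩
      rcases lt_trichotomy i j with h | h | h
      · exact ⟨i, (k3 i h).1 h1, h2, fun l hl => (h3 l hl).trans (k3 l (hl.trans h))⟩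
      · subst h; exact absurd h1 k2
      · exact ⟨j, k1, fun hs => k2 ((h3 j h).1 hs), fun l hl => (h3 l (hl.trans h)).trans (k3 l hl)⟩
  · intro x y hx hy hxP hyP
    obtain ⟨i, rfl⟩ := Set.isAtom_iff.1 hx
    obtain ⟨j, rfl⟩ := Set.isAtom_iff.1 hy
    rw [hsing]
    have h1 : (0 : Fin (N + 1)) ≠ i := fun h => hxP h
    have h2 : (0 : Fin (N + 1)) = j := by
      by_contra h; exact hyP (fun h' => h h')
    rw [← h2]
    exact Fin.pos_of_ne_zero h1.symm
  · intro x y hxy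
    constructor
    · rintro ⟨i, h1, h2, h3⟩
      refine ⟨({i} : Set (Fin (N + 1))), Set.isAtom_singleton i, Set.singleton_subset_iff.2 h1,
        fun h => h2 (Set.singleton_subset_iff.1 h), fun d hd hcon => ?_⟩
      obtain ⟨j, rfl⟩ := Set.isAtom_iff.1 hd
      rcases lt_trichotomy j i with h | h | h
      · refine absurd ?_ hcon
        exact Set.singleton_subset_iff.trans ((h3 j h).trans Set.singleton_subset_iff.symm)
      · left; rw [h]
      · right; rw [hsing]; exact h
    · rintro ⟨c, hc, h1, h2, h3⟩
      obtain ⟨i, rfl⟩ := Set.isAtom_iff.1 hc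
      refine ⟨i, Set.singleton_subset_iff.1 h1, fun h => h2 (Set.singleton_subset_iff.2 h),
        fun j hj => ?_⟩
      by_contra hcon
      rcases h3 ({j} : Set (Fin (N + 1))) (Set.isAtom_singleton j) (fun h => hcon
        (Set.singleton_subset_iff.symm.trans (h.trans Set.singleton_subset_iff))) with h | h
      · have : j = i := Set.singleton_injective h
        exact absurd this hj.ne
      · rw [hsing] at h
        exact absurd (h.trans hj) (lt_irrefl _)
  · refine ⟨({0} : Set (Fin (N + 1))), ⟨Set.isAtom_singleton _, fun h => h rfl⟩, ?_⟩
    rintro y ⟨hy, hyP⟩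
    obtain ⟨j, rfl⟩ := Set.isAtom_iff.1 hy
    have h2 : (0 : Fin (N + 1)) = j := by
      by_contra h; exact hyP (fun h' => h h')
    rw [h2]

lemma InNaBu.mem_P_iff {B : OrdAlgU} (hB : B.InNaBu) {m : ℕ} {b : ℕ → B.carrier}
    (hm : 1 ≤ m) (hb : Enum B m b) (h0 : b 0 ∉ B.P) (hbot : ⊥ ∈ B.P) (x : B.carrier) :
    x ∈ B.P ↔ ¬ b 0 ≤ x := by
  obtain ⟨⟨-, hdown, hsup⟩, -, y, -, huniq⟩ := hB
  constructor
  · intro hx h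
    exact h0 (hdown x hx _ h)
  · intro hx
    have hall : ∀ c, IsAtom c → c ≤ x → c ∈ B.P := by
      intro c hc hcx
      by_contra hcP
      have h1 := huniq c ⟨hc, hcP⟩
      have h2 := huniq (b 0) ⟨hb.atom 0 hm, h0⟩
      rw [h2, ← h1] at hx
      exact hx hcx
    clear hx
    revert hall
    refine wellFounded_lt.induction (C := fun x => (∀ c, IsAtom c → c ≤ x → c ∈ B.P) → x ∈ B.P) x ?_
    · intro x ih hall
      rcases eq_bot_or_exists_atom_le x with rfl | ⟨c, hc, hcx⟩
      · exact hbot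
      · have h1 : x \ c < x := by
          refine lt_of_le_of_ne sdiff_le (fun h => ?_)
          rw [sdiff_eq_left] at h
          exact hc.1 (le_bot_iff.1 (h hcx le_rfl))
        have h2 := ih _ h1 (fun d hd hdx => hall d hd (hdx.trans sdiff_le))
        have h3 := hsup _ (hall c hc hcx) _ h2
        rwa [sup_sdiff_cancel_right hcx] at h3

/-- The set dual map attached to `h`. -/
def dual (N : ℕ) {A : OrdAlgU} (a : ℕ → A.carrier) (h : ℕ → ℕ) (x : A.carrier) :
    Set (Fin (N + 1)) := {i | a (h i) ≤ x}

lemma exists_emb {B : OrdAlgU} (hB : B.InNaBu) {m N : ℕ} {b : ℕ → B.carrier}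
    (hm : 1 ≤ m) (hb : Enum B m b) (h0 : b 0 ∉ B.P) (hbot : ⊥ ∈ B.P) {F : ℕ → ℕ}
    (hF : R 1 (N + 1) m F) : ∃ e : Emb B (canon N), e.toFun = dual N b F := by
  have hat : ∀ i : Fin (N + 1), IsAtom (b (F i)) := fun i => hb.atom _ (hF.lt _ i.2)
  have hfirst : ∀ v < m, ∃ i : Fin (N + 1), F i = v ∧ ∀ j < (i : ℕ), F j < v := by
    intro v hv
    obtain ⟨i, hi, hi'⟩ := hF.rig v
    refine ⟨⟨i, ?_⟩, hi, hi'⟩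
    by_contra hc
    obtain ⟨l, rfl⟩ := Nat.exists_eq_add_of_le (not_lt.1 hc)
    rw [hF.tail] at hi
    omega
  refine ⟨{ toFun := dual N b F, inj := ?_, map_sup := ?_, map_inf := ?_, map_compl := ?_,
            map_bot := ?_, map_top := ?_, map_lt := ?_, map_P := ?_ }, rfl⟩
  · intro x y hxy
    apply hb.eq_of
    intro v hv
    obtain ⟨i, hi, -⟩ := hfirst v hv
    have : i ∈ dual N b F x ↔ i ∈ dual N b F y := by rw [hxy]
    simpa [dual, hi] using this
  · intro x y
    exact Set.ext fun i => atom_le_sup (hat i)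
  · intro x y
    exact Set.ext fun i => le_inf_iff
  · intro x
    exact Set.ext fun i => atom_le_compl (hat i)
  · exact Set.ext fun i => ⟨fun h => (hat i).1 (le_bot_iff.1 h), fun h => h.elim⟩
  · exact Set.ext fun i => ⟨fun _ => trivial, fun _ => le_top (α := B.carrier)⟩
  · intro x y
    rw [hb.lt_iff hB.2.1]
    constructor
    · rintro ⟨v, hv, h1, h2, h3⟩
      obtain ⟨i, hi, hi'⟩ := hfirst v hv
      refine ⟨i, ?_, ?_, fun j hj => h3 _ (hi' j hj)⟩
      · show b (F i) ≤ y
        rw [hi]; exact h1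
      · show ¬ b (F i) ≤ x
        rw [hi]; exact h2
    · rintro ⟨i, h1, h2, h3⟩
      refine ⟨F i, hF.lt _ i.2, h1, h2, fun w hw => ?_⟩
      obtain ⟨l, hl, hl'⟩ := hfirst w (hw.trans (hF.lt _ i.2))
      have hli : l < i := by
        by_contra hc
        rcases (not_lt.1 hc).eq_or_lt with h | h
        · rw [h] at hw; omega
        · have := hl' i h; omega
      have := h3 l hli
      rw [← hl]
      exact this
  · intro x
    rw [hB.mem_P_iff hm hb h0 hbot]
    show _ ↔ ¬ b (F ((0 : Fin (N + 1)) : ℕ)) ≤ x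
    rw [Fin.val_zero, hF.idt 0 (by omega)]

/-- Factor an embedding through another one. -/
lemma Emb.factor {A B C : OrdAlgU} (e' : Emb A C) (e : Emb B C)
    (h : Set.range e'.toFun ⊆ Set.range e.toFun) :
    ∃ f : Emb A B, ∀ x, e.toFun (f.toFun x) = e'.toFun x := by
  have h' : ∀ x, ∃ y, e.toFun y = e'.toFun x := fun x => h ⟨x, rfl⟩
  choose f hf using h'
  refine ⟨{ toFun := f, inj := ?_, map_sup := ?_, map_inf := ?_, map_compl := ?_,
            map_bot := ?_, map_top := ?_, map_lt := ?_, map_P := ?_ }, hf⟩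
  · intro x y hxy
    apply e'.inj
    rw [← hf, ← hf, hxy]
  · intro x y
    apply e.inj
    rw [hf, e'.map_sup, e.map_sup, hf, hf]
  · intro x y
    apply e.inj
    rw [hf, e'.map_inf, e.map_inf, hf, hf]
  · intro x
    apply e.inj
    rw [hf, e'.map_compl, e.map_compl, hf]
  · apply e.inj
    rw [hf, e'.map_bot, e.map_bot]
  · apply e.inj
    rw [hf, e'.map_top, e.map_top]
  · intro x y
    rw [e'.map_lt, e.map_lt, hf, hf]
  · intro x
    rw [e'.map_P, e.map_P, hf]

/-- The degenerate case of an empty predicate. -/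
lemma degenerate {B : OrdAlgU} (hB : B.InNaBu) (hbot : ⊥ ∉ B.P) (x : B.carrier) :
    x = ⊥ ∨ x = ⊤ := by
  obtain ⟨⟨-, hdown, -⟩, -, y, ⟨hy, -⟩, huniq⟩ := hB
  have hP : ∀ z, z ∉ B.P := fun z hz => hbot (hdown z hz ⊥ bot_le)
  rcases eq_bot_or_exists_atom_le x with h | ⟨c, hc, hcx⟩
  · exact Or.inl h
  rcases eq_bot_or_exists_atom_le xᶜ with h | ⟨d, hd, hdx⟩
  · exact Or.inr (compl_eq_bot.1 h)
  · exfalso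
    have h1 := huniq c ⟨hc, hP c⟩
    have h2 := huniq d ⟨hd, hP d⟩
    rw [h2, ← h1] at hdx
    exact (atom_le_compl hc).1 hdx hcx

end OrdAlgU

theorem naBu_ramsey_property
    (A B : OrdAlgU) (hA : A.InNaBu) (hB : B.InNaBu)
    (hAB : Nonempty (OrdAlgU.Emb A B))
    (k : ℕ) (hk : 2 ≤ k) :
    ∃ C : OrdAlgU, C.InNaBu ∧
      ∀ χ : Set C.carrier → Fin k,
        ∃ e : OrdAlgU.Emb B C,
          ∀ S₁ ∈ OrdAlgU.Copies A C, ∀ S₂ ∈ OrdAlgU.Copies A C,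
            S₁ ⊆ Set.range e.toFun → S₂ ⊆ Set.range e.toFun → χ S₁ = χ S₂ := by
  by_cases hbot : ⊥ ∈ B.P
  swap
  · refine ⟨B, hB, fun χ => ⟨⟨id, fun _ _ h => h, fun _ _ => rfl, fun _ _ => rfl, fun _ => rfl, rfl,
      rfl, fun _ _ => Iff.rfl, fun _ => Iff.rfl⟩, ?_⟩⟩
    have huniv : ∀ S ∈ OrdAlgU.Copies A B, S = Set.univ := by
      rintro S ⟨e, rfl⟩
      refine Set.eq_univ_of_forall (fun x => ?_)
      rcases OrdAlgU.degenerate hB hbot x with rfl | rfl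
      · exact ⟨⊥, e.map_bot⟩
      · exact ⟨⊤, e.map_top⟩
    intro S₁ h1 S₂ h2 _ _
    rw [huniv S₁ h1, huniv S₂ h2]
  obtain ⟨n, a, hn, ha, -⟩ := hA.exists_enum
  obtain ⟨m, b, hm, hb, hb0⟩ := hB.exists_enum
  obtain ⟨d, rfl⟩ := Nat.exists_eq_add_of_le hn
  obtain ⟨N, hN⟩ := DualRamsey.gr d 1 le_rfl m hm (Fin k)
  have hN1 : 1 ≤ N := by
    obtain ⟨F, hF, -⟩ := hN (fun _ => ⟨0, by omega⟩)
    exact hF.le hm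
  obtain ⟨N, rfl⟩ := Nat.exists_eq_add_of_le' hN1
  refine ⟨OrdAlgU.canon N, OrdAlgU.canon_inNaBu N, fun χ => ?_⟩
  obtain ⟨F, hF, hmono⟩ := hN (fun h => χ (Set.range (OrdAlgU.dual N a h)))
  obtain ⟨e, he⟩ := OrdAlgU.exists_emb hB hm hb hb0 hbot hF
  have key : ∀ S ∈ OrdAlgU.Copies A (OrdAlgU.canon N), S ⊆ Set.range e.toFun →
      ∃ g, DualRamsey.R 1 m (1 + d) g ∧ S = Set.range (OrdAlgU.dual N a (g ∘ F)) := by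
    rintro S ⟨e', rfl⟩ hS
    obtain ⟨f, hf⟩ := e'.factor e hS
    obtain ⟨g, hg, hg'⟩ := f.exists_R ha hb hA.2.1 hB.2.1
    refine ⟨g, hg, ?_⟩
    have : e'.toFun = OrdAlgU.dual N a (g ∘ F) := by
      funext x
      rw [← hf, he]
      exact Set.ext fun i => hg' _ (hF.lt _ i.2) x
    rw [this]
    rfl
  refine ⟨e, fun S₁ h1 S₂ h2 hs1 hs2 => ?_⟩
  obtain ⟨g1, hg1, rfl⟩ := key S₁ h1 hs1
  obtain ⟨g2, hg2, rfl⟩ := key S₂ h2 hs2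
  exact hmono g1 g2 hg1 hg2
end

section
/- The class na(B_J^u) satisfies the Ramsey property: for all structures (A, <_A), (B, <_B) in na(B_J^u) such that (A, <_A) embeds into (B, <_B), and every integer k ≥ 2, there exists a structure (C, <_C) in na(B_J^u) such that for every coloring of the copies of (A, <_A) in (C, <_C) with k colors there is a copy B' of (B, <_B) in (C, <_C) all of whose copies of (A, <_A) receive the same color. -/
/-- A finite Boolean algebra with a `J`-indexed family of distinguished subsets
and a distinguished binary relation (the linear ordering). -/
structure OrdAlg (J : Type) [LinearOrder J] : Type 1 where
  carrier : Type
  [ba : BooleanAlgebra carrier]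
  [fin : Fintype carrier]
  P : J → Set carrier
  lt : carrier → carrier → Prop

attribute [instance] OrdAlg.ba OrdAlg.fin

namespace OrdAlg

variable {J : Type} [LinearOrder J]

/-- The predicates form an increasing family of (nontrivial) ideals: this makes
the structure a `J`-algebra. -/
def IdealFam (A : OrdAlg J) : Prop :=
  (∀ j : J, (⊤ : A.carrier) ∉ A.P j) ∧
  (∀ j : J, ∀ x ∈ A.P j, ∀ y : A.carrier, y ≤ x → y ∈ A.P j) ∧
  (∀ j : J, ∀ x ∈ A.P j, ∀ y ∈ A.P j, x ⊔ y ∈ A.P j) ∧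
  (∀ i j : J, i ≤ j → A.P i ⊆ A.P j)

/-- The ordering is proper on atoms: atoms in some ideal `P i` come before atoms not in `P i`. -/
def Proper (A : OrdAlg J) : Prop :=
  ∀ a b : A.carrier, IsAtom a → IsAtom b → (∃ i : J, a ∈ A.P i ∧ b ∉ A.P i) → A.lt a b

/-- The ordering is natural: a strict total (i.e. linear) order whose restriction to the
atoms is proper, and which is the antilexicographical extension of its restriction to atoms:
for distinct `a`, `b`, `a < b` iff the `<`-greatest atom lying below exactly one of `a`, `b`
lies below `b`. -/
def Natural (A : OrdAlg J) : Prop :=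
  IsStrictTotalOrder A.carrier A.lt ∧ A.Proper ∧
  ∀ a b : A.carrier, a ≠ b →
    (A.lt a b ↔ ∃ c : A.carrier, IsAtom c ∧ c ≤ b ∧ ¬ c ≤ a ∧
      ∀ d : A.carrier, IsAtom d → ¬ (d ≤ a ↔ d ≤ b) → d = c ∨ A.lt d c)

/-- Membership in the class `na(B_J)`: a naturally ordered `J`-algebra with at least one
atom lying in no `P j`. -/
def InNaBJ (A : OrdAlg J) : Prop :=
  A.IdealFam ∧ A.Natural ∧ ∃ a : A.carrier, IsAtom a ∧ ∀ j : J, a ∉ A.P j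

/-- Membership in the class `na(B_J^u)`: a naturally ordered `J`-algebra in which all atoms
except exactly one belong to some `P j`. -/
def InNaBJu (A : OrdAlg J) : Prop :=
  A.IdealFam ∧ A.Natural ∧ ∃! a : A.carrier, IsAtom a ∧ ∀ j : J, a ∉ A.P j

/-- An embedding of ordered `J`-algebras: an injective map preserving `⊔`, `⊓`, `ᶜ`,
`⊥`, `⊤`, the linear order and each predicate. -/
structure Emb (A B : OrdAlg J) : Type where
  toFun : A.carrier → B.carrier
  inj : Function.Injective toFun
  map_sup : ∀ x y : A.carrier, toFun (x ⊔ y) = toFun x ⊔ toFun y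
  map_inf : ∀ x y : A.carrier, toFun (x ⊓ y) = toFun x ⊓ toFun y
  map_compl : ∀ x : A.carrier, toFun xᶜ = (toFun x)ᶜ
  map_bot : toFun ⊥ = ⊥
  map_top : toFun ⊤ = ⊤
  map_lt : ∀ x y : A.carrier, A.lt x y ↔ B.lt (toFun x) (toFun y)
  map_P : ∀ (j : J) (x : A.carrier), x ∈ A.P j ↔ toFun x ∈ B.P j

/-- The copies of `A` in `C`: images of embeddings of `A` into `C`. -/
def Copies (A C : OrdAlg J) : Set (Set C.carrier) :=
  {S | ∃ e : Emb A C, Set.range e.toFun = S}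

end OrdAlg

/-!
STATEMENT 9: The class na(B_J^u) satisfies the Ramsey property.
-/

/-- `s` is a surjection whose fibres have first elements `p`, with `p` increasing and
label preserving. -/
structure Rig {X Y L : Type} [LinearOrder X] [LinearOrder Y] (lX : X → L) (lY : Y → L)
    (s : X → Y) (p : Y → X) : Prop where
  mono : StrictMono p
  sec : ∀ y, s (p y) = y
  le : ∀ x, p (s x) ≤ x
  lab : ∀ y, lX (p y) = lY y

theorem Rig.comp {X Y Z L : Type} [LinearOrder X] [LinearOrder Y] [LinearOrder Z]
    {lX : X → L} {lY : Y → L} {lZ : Z → L} {v : X → Y} {pv : Y → X} {u : Y → Z} {pu : Z → Y}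
    (hv : Rig lX lY v pv) (hu : Rig lY lZ u pu) : Rig lX lZ (u ∘ v) (pv ∘ pu) where
  mono := hv.mono.comp hu.mono
  sec y := by simp [hv.sec, hu.sec]
  le x := (hv.mono.monotone (hu.le (v x))).trans (hv.le x)
  lab y := by simp [hv.lab, hu.lab]

theorem Rig.refl {X L : Type} [LinearOrder X] (lX : X → L) : Rig lX lX id id where
  mono := strictMono_id
  sec _ := rfl
  le _ := le_rfl
  lab _ := rfl

/-- If `s` factors through `v` (i.e. is constant on fibres of `v`) then the factor is rigid. -/
theorem Rig.factor {X Y Z L : Type} [LinearOrder X] [LinearOrder Y] [LinearOrder Z]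
    {lX : X → L} {lY : Y → L} {lZ : Z → L} {v : X → Y} {pv : Y → X} {s : X → Z} {ps : Z → X}
    (hv : Rig lX lY v pv) (hs : Rig lX lZ s ps) (h : ∀ x x', v x = v x' → s x = s x') :
    Rig lY lZ (s ∘ pv) (v ∘ ps) ∧ (s ∘ pv) ∘ v = s := by
  have h1 : ∀ x, s (pv (v x)) = s x := fun x => h _ _ (hv.sec _)
  have h2 : ∀ y, pv (v (ps y)) = ps y := fun y => by
    apply le_antisymm (hv.le _)
    have := hs.le (pv (v (ps y)))
    rwa [h1, hs.sec] at this
  refine ⟨⟨?_, ?_, ?_, ?_⟩, ?_⟩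
  · intro y y' hy
    have := hs.mono hy
    rw [← h2 y, ← h2 y'] at this
    exact hv.mono.lt_iff_lt.1 this
  · intro y; simp [h2, hs.sec]
  · intro x
    have := hs.le (pv x)
    rw [← h2] at this
    exact hv.mono.le_iff_le.1 this
  · intro y
    simp only [Function.comp]
    rw [← hv.lab, h2, hs.lab]
  · funext x; exact h1 x

/-- Admissible label words. -/
structure Adm {L : Type} [PartialOrder L] [OrderBot L] {b : ℕ} (l : Fin b → L) : Prop where
  pos : 0 < b
  mono : Monotone l
  bot : ∀ i, l i = ⊥ ↔ i.val = 0

section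
variable {L : Type} [PartialOrder L] [OrderBot L]

/-- The Ramsey statement for `A` -/
def RamA {n : ℕ} (lA : Fin n → L) : Prop :=
  ∀ (k b : ℕ) (lB : Fin b → L), Adm lB → ∃ (c : ℕ) (lC : Fin c → L), Adm lC ∧
    (∀ i, ∃ j, lC i = lB j) ∧ ∀ χ : (Fin c → Fin n) → Fin k, ∃ v p, Rig lC lB v p ∧
      ∀ u pu u' pu', Rig lB lA u pu → Rig lB lA u' pu' → χ (u ∘ v) = χ (u' ∘ v)

/-- The intermediate statement: colour depends only on the position of the last letter. -/
def PosA {n : ℕ} (lA : Fin (n+1) → L) (k b : ℕ) (lB : Fin b → L) : Prop :=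
  ∃ (c : ℕ) (lC : Fin c → L), Adm lC ∧
    (∀ i, ∃ j, lC i = lB j) ∧ ∀ χ : (Fin c → Fin (n+1)) → Fin k, ∃ v p, Rig lC lB v p ∧
      ∀ u pu u' pu', Rig lB lA u pu → Rig lB lA u' pu' → pu (Fin.last n) = pu' (Fin.last n) →
        χ (u ∘ v) = χ (u' ∘ v)

theorem Rig.zero {b n : ℕ} {lB : Fin b → L} {lA : Fin n → L} {u pu} (h : Rig lB lA u pu)
    (y : Fin n) (hy : 0 < y.val) : 0 < (pu y).val := by
  have : pu ⟨0, by omega⟩ < pu y := h.mono (by simpa [Fin.lt_def] using hy)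
  have := Fin.lt_def.1 this
  omega

/-- extending a word by a block -/
noncomputable def extW {m n : ℕ} {ι : Type} [Fintype ι] (f : ι → Option (Fin m)) (w : Fin m → Fin n) (a : Fin n) :
    Fin (m + Fintype.card ι) → Fin n :=
  Fin.append w (fun i => ((f ((Fintype.equivFin ι).symm i)).map w).getD a)

theorem extW_rig {m b : ℕ} {ι : Type} [Fintype ι] (f : ι → Option (Fin m)) (hf : ∃ i, f i = none)
    (lM : Fin m → L) (lB : Fin (b+1) → L) (v : Fin m → Fin b) (p : Fin b → Fin m)
    (h : Rig lM (lB ∘ Fin.castSucc) v p) :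
    ∃ p', Rig (Fin.append lM (fun _ : Fin (Fintype.card ι) => lB (Fin.last b))) lB
      (extW f (Fin.castSucc ∘ v) (Fin.last b)) p' := by
  classical
  let g : Fin (Fintype.card ι) → Option (Fin m) := fun i => f ((Fintype.equivFin ι).symm i)
  have hg : ∃ i, g i = none := by
    obtain ⟨i, hi⟩ := hf
    exact ⟨Fintype.equivFin ι i, by simpa [g] using hi⟩
  let S : Finset (Fin (Fintype.card ι)) := Finset.univ.filter (fun i => g i = none)
  have hS : S.Nonempty := by
    obtain ⟨i, hi⟩ := hg
    exact ⟨i, by simpa [S] using hi⟩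
  let i0 := S.min' hS
  have h0 : g i0 = none := by
    have := S.min'_mem hS
    simpa [S] using this
  have h0' : ∀ i, g i = none → i0 ≤ i := fun i hi => S.min'_le i (by simpa [S] using hi)
  refine ⟨Fin.lastCases (motive := fun _ => Fin (m + Fintype.card ι)) (Fin.natAdd m i0)
    (fun j => Fin.castAdd _ (p j)), ?_, ?_, ?_, ?_⟩
  · intro y y' hy
    induction y using Fin.lastCases with
    | last => exact absurd hy (not_lt.2 (Fin.le_last _))
    | cast y =>
      induction y' using Fin.lastCases with
      | last => simp [Fin.lt_def]; omega
      | cast y' =>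
        simp only [Fin.lastCases_castSucc]
        have := h.mono (Fin.castSucc_lt_castSucc_iff.1 hy)
        exact this
  · intro y
    induction y using Fin.lastCases with
    | last =>
      simp only [Fin.lastCases_last, extW, Fin.append_right]
      change ((g i0).map _).getD _ = _
      rw [h0]; rfl
    | cast y => simp [extW, h.sec]
  · intro x
    induction x using Fin.addCases with
    | left x =>
      simp only [extW, Fin.append_left, Function.comp, Fin.lastCases_castSucc]
      exact h.le x
    | right x =>
      simp only [extW, Fin.append_right]
      change Fin.lastCases (motive := fun _ => Fin (m + Fintype.card ι)) _ _
        (((g x).map _).getD _) ≤ _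
      rcases hx : g x with _ | z
      · have := h0' x hx
        simp only [Option.map_none, Option.getD_none, Fin.lastCases_last]
        exact (Fin.natAdd_le_natAdd_iff m).2 this
      · simp [Fin.le_def]; omega
  · intro y
    induction y using Fin.lastCases with
    | last => simp
    | cast y => simpa using h.lab y

theorem extW_comp {m n n' : ℕ} {ι : Type} [Fintype ι] (f : ι → Option (Fin m)) (w : Fin m → Fin n)
    (a : Fin n) (u : Fin n → Fin n') : u ∘ extW f w a = extW f (u ∘ w) (u a) := by
  funext x
  induction x using Fin.addCases with
  | left x => simp [extW]
  | right x =>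
    simp only [extW, Function.comp, Fin.append_right]
    rcases f ((Fintype.equivFin ι).symm x) with _ | z <;> simp

theorem posA {n : ℕ} (lA : Fin (n+2) → L) (hR : RamA (lA ∘ Fin.castSucc)) (k b : ℕ) :
    ∀ (lB : Fin (b+1) → L), Adm lB → PosA lA k (b+1) lB := by
  induction b with
  | zero =>
    intro lB hB
    refine ⟨1, lB, hB, fun i => ⟨i, rfl⟩, fun χ => ⟨id, id, Rig.refl _, ?_⟩⟩
    intro u pu u' pu' hu hu' _
    have := hu.zero (Fin.last _) (by simp)
    omega
  | succ b ih =>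
    intro lB hB
    have hB' : Adm (lB ∘ Fin.castSucc) :=
      ⟨by omega, hB.mono.comp Fin.strictMono_castSucc.monotone, fun i => by simp [hB.bot]⟩
    obtain ⟨e, lE, hE, hEB, hE2⟩ := ih (lB ∘ Fin.castSucc) hB'
    obtain ⟨m, lM, hM, hME, hM2⟩ := hR k e lE hE
    obtain ⟨ι, _, hι⟩ := Combinatorics.Line.exists_mono_in_high_dimension (Fin m)
      ((Fin m → Fin (n+2)) → Fin k)
    refine ⟨m + Fintype.card ι, Fin.append lM (fun _ => lB (Fin.last _)), ?_, ?_, ?_⟩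
    · refine ⟨by have := hM.pos; omega, ?_, ?_⟩
      · intro x y hxy
        induction x using Fin.addCases with
        | left x =>
          induction y using Fin.addCases with
          | left y => 
            simp only [Fin.append_left]
            exact hM.mono hxy
          | right y =>
            simp only [Fin.append_left, Fin.append_right]
            obtain ⟨j, hj⟩ := hME x
            obtain ⟨j', hj'⟩ := hEB j
            rw [hj, hj']
            exact hB.mono (Fin.le_last _)
        | right x =>
          induction y using Fin.addCases with
          | left y => simp [Fin.le_def] at hxy; omega
          | right y => simp
      · intro x
        induction x using Fin.addCases with
        | left x => simp [hM.bot]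
        | right x => 
          have := hM.pos
          simp [hB.bot]; omega
    · intro x
      induction x using Fin.addCases with
      | left x =>
        obtain ⟨j, hj⟩ := hME x
        obtain ⟨j', hj'⟩ := hEB j
        exact ⟨Fin.castSucc j', by simp [hj, hj']⟩
      | right x => exact ⟨Fin.last _, by simp⟩
    · intro χ
      obtain ⟨l, χm, hl⟩ := hι (fun W w => χ (extW (fun i => some (W i)) w (w ⟨0, hM.pos⟩)))
      obtain ⟨v2, p2, hv2, hv2'⟩ := hM2 (fun w => χ (extW l.idxFun (Fin.castSucc ∘ w) (Fin.last _)))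
      obtain ⟨v1, p1, hv1, hv1'⟩ := hE2 (fun w => χm (w ∘ v2))
      obtain ⟨p', hp'⟩ := extW_rig l.idxFun l.proper lM lB (v1 ∘ v2) _ (hv2.comp hv1)
      refine ⟨_, p', hp', ?_⟩
      have key : ∀ (w : Fin m → Fin (n+2)) (x : Fin m), χ (extW l.idxFun w (w x)) = χm w := by
        intro w x
        have := congrFun (hl x) w
        rw [← this]
        congr 1
        simp only [extW]
        congr 1
        funext i
        simp only [Combinatorics.Line.toFun]
        rcases l.idxFun ((Fintype.equivFin ι).symm i) with _ | z <;> simp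
      have key1 : ∀ u pu (q : Fin (b+1)), Rig lB lA u pu → pu (Fin.last _) = Fin.castSucc q →
          (∃ pu', Rig (lB ∘ Fin.castSucc) lA (u ∘ Fin.castSucc) pu' ∧ pu' (Fin.last _) = q) ∧
          χ (u ∘ extW l.idxFun (Fin.castSucc ∘ v1 ∘ v2) (Fin.last _)) =
            χm ((u ∘ Fin.castSucc) ∘ v1 ∘ v2) := by
        intro u pu q hu hq
        have h1 : ∀ y, ∃ z, pu y = Fin.castSucc z := by
          intro y
          have h2 : pu y ≤ pu (Fin.last _) := hu.mono.monotone (Fin.le_last _)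
          rw [hq] at h2
          have h3 := q.2
          simp only [Fin.le_def, Fin.val_castSucc] at h2
          exact ⟨⟨(pu y).val, by omega⟩, rfl⟩
        choose pu' hpu' using h1
        have hr : Rig (lB ∘ Fin.castSucc) lA (u ∘ Fin.castSucc) pu' := by
          refine ⟨?_, ?_, ?_, ?_⟩
          · intro y y' hy
            have := hu.mono hy
            rw [hpu', hpu'] at this
            exact Fin.castSucc_lt_castSucc_iff.1 this
          · intro y
            simp [← hpu', hu.sec]
          · intro x
            have := hu.le (Fin.castSucc x)
            rw [hpu'] at this
            exact Fin.castSucc_le_castSucc_iff.1 this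
          · intro y
            simp [← hpu', hu.lab]
        refine ⟨⟨pu', hr, ?_⟩, ?_⟩
        · apply Fin.castSucc_injective
          rw [← hpu', hq]
        · rw [extW_comp]
          have hc := (hv2.comp hv1).comp hr
          have hs := hc.sec (u (Fin.last _))
          rw [← key _ _, hs]
          rfl
      have key2 : ∀ u pu, Rig lB lA u pu → pu (Fin.last _) = Fin.last _ →
          ∃ w pw, Rig (lB ∘ Fin.castSucc) (lA ∘ Fin.castSucc) w pw ∧
            u ∘ extW l.idxFun (Fin.castSucc ∘ v1 ∘ v2) (Fin.last _) =
              extW l.idxFun (Fin.castSucc ∘ (w ∘ v1) ∘ v2) (Fin.last _) := by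
        intro u pu hu hq
        have h1 : ∀ x, ∃ z, u (Fin.castSucc x) = Fin.castSucc z := by
          intro x
          have h2 : u (Fin.castSucc x) ≠ Fin.last _ := by
            intro h
            have := hu.le (Fin.castSucc x)
            rw [h, hq] at this
            exact absurd this (not_le.2 (Fin.castSucc_lt_last x))
          exact ⟨_, (Fin.castSucc_castPred _ h2).symm⟩
        have h2 : ∀ y : Fin (n+1), ∃ z, pu (Fin.castSucc y) = Fin.castSucc z := by
          intro y
          have h2 : pu (Fin.castSucc y) ≠ Fin.last _ := by
            rw [← hq]
            exact (hu.mono (Fin.castSucc_lt_last y)).ne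
          exact ⟨_, (Fin.castSucc_castPred _ h2).symm⟩
        choose w hw using h1
        choose pw hpw using h2
        refine ⟨w, pw, ⟨?_, ?_, ?_, ?_⟩, ?_⟩
        · intro y y' hy
          have := hu.mono (Fin.castSucc_lt_castSucc_iff.2 hy)
          rw [hpw, hpw] at this
          exact Fin.castSucc_lt_castSucc_iff.1 this
        · intro y
          apply Fin.castSucc_injective
          rw [← hw, ← hpw, hu.sec]
        · intro x
          apply Fin.castSucc_le_castSucc_iff.1
          rw [← hpw, ← hw]
          exact hu.le _
        · intro y
          simp [← hpw, hu.lab]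
        · rw [extW_comp]
          have h3 : u (Fin.last _) = Fin.last _ := by
            conv_lhs => rw [← hq]
            exact hu.sec _
          rw [h3]
          congr 1
          funext x
          simp [hw]
      intro u pu u' pu' hu hu' hq
      rcases Fin.eq_castSucc_or_eq_last (pu (Fin.last _)) with ⟨q, hq1⟩ | hq1
      · obtain ⟨⟨a, ha, ha'⟩, h1⟩ := key1 u pu q hu hq1
        obtain ⟨⟨a', hb, hb'⟩, h2⟩ := key1 u' pu' q hu' (hq ▸ hq1)
        rw [h1, h2]
        exact hv1' _ _ _ _ ha hb (ha'.trans hb'.symm)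
      · obtain ⟨w, pw, hw, h1⟩ := key2 u pu hu hq1
        obtain ⟨w', pw', hw', h2⟩ := key2 u' pu' hu' (hq ▸ hq1)
        rw [h1, h2]
        exact hv2' _ _ _ _ (hv1.comp hw) (hv1.comp hw')

theorem pigeon (k b : ℕ) (lB : Fin b → L) (hB : Adm lB) (r : L) (j0 : Fin b) (hj0 : lB j0 = r)
    (h0 : 0 < j0.val) : ∃ (c : ℕ) (lC : Fin c → L), Adm lC ∧ (∀ i, ∃ j, lC i = lB j) ∧
      ∀ χ : Fin c → Fin k, ∃ v p, Rig lC lB v p ∧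
        ∀ j j', lB j = r → lB j' = r → χ (p j) = χ (p j') := by
  classical
  let K := k * b
  let h : Fin (b + K) → Fin b := fun i =>
    ⟨if i.val ≤ j0.val then i.val else if i.val ≤ j0.val + K then j0.val else i.val - K, by
      have := i.2; have := j0.2; split_ifs <;> omega⟩
  have hh : Monotone h := by
    intro i i' hi
    simp only [h, Fin.le_def] at hi ⊢
    split_ifs <;> omega
  have hlm : Monotone (lB ∘ h) := hB.mono.comp hh
  have hbp := hB.pos
  refine ⟨b + K, lB ∘ h, ⟨by omega, hlm, ?_⟩, fun i => ⟨_, rfl⟩, ?_⟩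
  · intro i
    simp only [Function.comp, hB.bot, h]
    split_ifs <;> omega
  · intro χ
    let χ' : Fin K → Fin k := fun i => χ ⟨j0.val + i.val, by have := j0.2; omega⟩
    have hk : 0 < k := (χ ⟨0, by omega⟩).pos
    have : Nonempty (Fin k) := ⟨⟨0, hk⟩⟩
    obtain ⟨y, hy⟩ := Fintype.exists_le_card_fiber_of_mul_le_card (n := b) χ' (by simp [K])
    obtain ⟨F, hF, hFc⟩ := Finset.exists_subset_card_eq hy
    let g := F.orderEmbOfFin hFc
    have hg : ∀ i, χ' (g i) = y := by
      intro i
      have := hF (F.orderEmbOfFin_mem hFc i)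
      simpa using this
    let p : Fin b → Fin (b + K) := fun j =>
      if lB j = r then ⟨j0.val + (g j).val, by have := j0.2; omega⟩
      else if j.val < j0.val then ⟨j.val, by omega⟩ else ⟨j.val + K, by omega⟩
    have hpl : ∀ j, lB (h (p j)) = lB j := by
      intro j
      by_cases hj : lB j = r
      · have : h (p j) = j0 := by
          simp only [p, hj, if_true, h, Fin.ext_iff]
          have := (g j).2
          split_ifs <;> omega
        rw [this, hj0, hj]
      · have hne : j.val ≠ j0.val := fun h => hj (by rw [Fin.ext h, hj0])
        congr 1
        simp only [p, hj, if_false, h, Fin.ext_iff]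
        split_ifs <;> simp_all <;> omega
    have hpm : StrictMono p := by
      intro j j' hjj
      by_cases hl : lB j = lB j'
      · by_cases hr : lB j = r
        · have hr' : lB j' = r := hl ▸ hr
          have : g j < g j' := g.strictMono hjj
          simp only [p, hr, hr', if_true, Fin.lt_def] at this ⊢
          omega
        · have hr' : ¬ lB j' = r := hl ▸ hr
          simp only [p, hr, hr', if_false, Fin.lt_def] at hjj ⊢
          split_ifs <;> simp <;> omega
      · by_contra hcon
        have := hlm (not_lt.1 hcon)
        simp only [Function.comp, hpl] at this
        exact hl (le_antisymm (hB.mono hjj.le) this)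
    have hp0 : p ⟨0, hbp⟩ = ⟨0, by omega⟩ := by
      have hr : lB ⟨0, hbp⟩ ≠ r := by
        rw [(hB.bot ⟨0, hbp⟩).2 rfl]
        intro h
        rw [← h, hB.bot] at hj0
        omega
      simp only [p, hr, if_false, if_pos h0]
    refine ⟨fun x => if hx : ∃ j, p j = x then hx.choose else ⟨0, hbp⟩, p, ⟨hpm, ?_, ?_, hpl⟩, ?_⟩
    · intro y
      have hx : ∃ j, p j = p y := ⟨y, rfl⟩
      simp only [hx, dif_pos]
      exact hpm.injective hx.choose_spec
    · intro x
      by_cases hx : ∃ j, p j = x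
      · simp only [hx, dif_pos]
        exact hx.choose_spec.le
      · simp only [hx, dif_neg, not_false_eq_true]
        rw [hp0]
        simp [Fin.le_def]
    · have : ∀ j, lB j = r → χ (p j) = y := by
        intro j hj
        rw [← hg j]
        simp only [p, hj, if_true, χ']
      intro j j' hj hj'
      rw [this j hj, this j' hj']

theorem ramA (n : ℕ) : ∀ lA : Fin (n+1) → L, RamA lA := by
  induction n with
  | zero =>
    intro lA k b lB hB
    refine ⟨b, lB, hB, fun i => ⟨i, rfl⟩, fun χ => ⟨id, id, Rig.refl _, ?_⟩⟩
    intro u pu u' pu' hu hu'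
    congr 1
    funext x
    exact Fin.ext (by omega)
  | succ n ih =>
    intro lA k b lB hB
    by_cases hj : ∃ j0 : Fin b, lB j0 = lA (Fin.last _) ∧ 0 < j0.val
    · obtain ⟨j0, hj0, h0⟩ := hj
      obtain ⟨d, lD, hD, hDB, hD2⟩ := pigeon k b lB hB _ j0 hj0 h0
      obtain ⟨d, rfl⟩ : ∃ d', d = d' + 1 := ⟨d - 1, by have := hD.pos; omega⟩
      obtain ⟨c, lC, hC, hCD, hC2⟩ := posA lA (ih _) k d lD hD
      refine ⟨c, lC, hC, ?_, ?_⟩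
      · intro i
        obtain ⟨j, hj⟩ := hCD i
        obtain ⟨j', hj'⟩ := hDB j
        exact ⟨j', hj.trans hj'⟩
      · intro χ
        obtain ⟨v, p, hv, hv'⟩ := hC2 χ
        classical
        have hk : 0 < k := (χ (fun _ => 0)).pos
        let col : Fin (d+1) → Fin k := fun q =>
          if hq : ∃ u pu, Rig lD lA u pu ∧ pu (Fin.last _) = q then χ (hq.choose ∘ v) else ⟨0, hk⟩
        have hcol : ∀ u pu, Rig lD lA u pu → χ (u ∘ v) = col (pu (Fin.last _)) := by
          intro u pu hu
          have hq : ∃ u' pu', Rig lD lA u' pu' ∧ pu' (Fin.last _) = pu (Fin.last _) :=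
            ⟨u, pu, hu, rfl⟩
          simp only [col, hq, dif_pos]
          obtain ⟨pu', h1, h2⟩ := hq.choose_spec
          exact hv' _ _ _ _ hu h1 h2.symm
        obtain ⟨v0, p0, hv0, hv0'⟩ := hD2 col
        refine ⟨_, _, hv.comp hv0, ?_⟩
        intro u pu u' pu' hu hu'
        have h1 := hcol _ _ (hv0.comp hu)
        have h2 := hcol _ _ (hv0.comp hu')
        rw [← Function.comp_assoc, ← Function.comp_assoc, h1, h2]
        exact hv0' _ _ (hu.lab _) (hu'.lab _)
    · refine ⟨b, lB, hB, fun i => ⟨i, rfl⟩, fun χ => ⟨id, id, Rig.refl _, ?_⟩⟩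
      intro u pu u' pu' hu hu'
      exact absurd ⟨pu (Fin.last _), hu.lab _, hu.zero _ (by simp)⟩ hj

end
namespace OrdAlg
variable {J : Type} [LinearOrder J]

theorem natural_trans {A : OrdAlg J} (h : A.Natural) {a b c : A.carrier} (h1 : A.lt a b)
    (h2 : A.lt b c) : A.lt a c := by
  have := h.1
  exact _root_.trans h1 h2

theorem natural_irrefl {A : OrdAlg J} (h : A.Natural) (a : A.carrier) : ¬ A.lt a a := by
  have := h.1
  exact irrefl a

theorem natural_tri {A : OrdAlg J} (h : A.Natural) (a b : A.carrier) (hab : a ≠ b) :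
    A.lt a b ∨ A.lt b a := by
  have := h.1
  by_contra hc
  push Not at hc
  exact hab (Std.Trichotomous.trichotomous (r := A.lt) a b hc.1 hc.2)

/-- `at` enumerates the atoms in decreasing order -/
structure Enum (A : OrdAlg J) {n : ℕ} (f : Fin n → A.carrier) : Prop where
  atom : ∀ i, IsAtom (f i)
  surj : ∀ a, IsAtom a → ∃ i, f i = a
  lt : ∀ i i', A.lt (f i') (f i) ↔ i < i'

theorem exists_fin_enum {S : Type} [Finite S] (r : S → S → Prop) (hr : IsStrictTotalOrder S r) :
    ∃ (n : ℕ) (e : Fin n ≃ S), ∀ i i', r (e i) (e i') ↔ i < i' := by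
  classical
  have := Fintype.ofFinite S
  let o : LinearOrder S := linearOrderOfSTO r
  let e := monoEquivOfFin S rfl
  exact ⟨Fintype.card S, e.toEquiv, fun i i' => e.lt_iff_lt⟩

theorem exists_enum {A : OrdAlg J} (h : A.Natural) : ∃ (n : ℕ) (f : Fin n → A.carrier), A.Enum f := by
  classical
  have := h.1
  let S := {a : A.carrier // IsAtom a}
  let r : S → S → Prop := fun a b => A.lt b.1 a.1
  have hr : IsStrictTotalOrder S r :=
    { trichotomous := fun a b h1 h2 =>
        Subtype.ext (Std.Trichotomous.trichotomous (r := A.lt) a.1 b.1 h2 h1)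
      irrefl := fun a => natural_irrefl h a.1
      trans := fun a b c h1 h2 => natural_trans h h2 h1 }
  obtain ⟨n, e, he⟩ := exists_fin_enum r hr
  exact ⟨n, fun i => (e i).1, fun i => (e i).2, fun a ha => ⟨e.symm ⟨a, ha⟩, by simp⟩, he⟩

theorem Enum.inj {A : OrdAlg J} (h : A.Natural) {n : ℕ} {f : Fin n → A.carrier} (hf : A.Enum f) :
    Function.Injective f := by
  intro i j hij
  by_contra hne
  rcases lt_or_gt_of_ne hne with h1 | h1
  · have := (hf.lt _ _).2 h1
    rw [hij] at this
    exact natural_irrefl h _ this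
  · have := (hf.lt _ _).2 h1
    rw [hij] at this
    exact natural_irrefl h _ this

theorem Enum.ext {A : OrdAlg J} {n : ℕ} {f : Fin n → A.carrier} (hf : A.Enum f) {x y : A.carrier}
    (h : ∀ i, f i ≤ x → f i ≤ y) : x ≤ y := by
  by_contra hxy
  have h1 : x ⊓ yᶜ ≠ ⊥ := by
    intro h1
    exact hxy (by rwa [← sdiff_eq, sdiff_eq_bot_iff] at h1)
  obtain ⟨a, ha, hle⟩ := (IsAtomic.eq_bot_or_exists_atom_le (x ⊓ yᶜ)).resolve_left h1
  obtain ⟨i, rfl⟩ := hf.surj a ha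
  have h2 := h i (hle.trans inf_le_left)
  have h3 : f i ≤ yᶜ := hle.trans inf_le_right
  have h4 : f i ≤ y ⊓ yᶜ := le_inf h2 h3
  rw [inf_compl_eq_bot, le_bot_iff] at h4
  exact ha.1 h4

theorem atom_le_compl {α : Type} [BooleanAlgebra α] {a x : α} (ha : IsAtom a) :
    a ≤ xᶜ ↔ ¬ a ≤ x := by
  rw [ha.not_le_iff_disjoint, le_compl_iff_disjoint_right]

theorem atom_le_sup {α : Type} [BooleanAlgebra α] {a x y : α} (ha : IsAtom a) :
    a ≤ x ⊔ y ↔ a ≤ x ∨ a ≤ y := by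
  rw [← not_iff_not, not_or, ha.not_le_iff_disjoint, ha.not_le_iff_disjoint,
    ha.not_le_iff_disjoint, disjoint_sup_right]

/-- labels of atoms -/
def lab (A : OrdAlg J) {n : ℕ} (f : Fin n → A.carrier) : Fin n → Set J := fun i => {j | f i ∈ A.P j}

theorem lab_adm {A : OrdAlg J} (h : A.InNaBJu) {n : ℕ} {f : Fin n → A.carrier} (hf : A.Enum f) :
    Adm (A.lab f) := by
  obtain ⟨hI, hN, a, ⟨ha, haP⟩, hu⟩ := h
  obtain ⟨i0, rfl⟩ := hf.surj a ha
  have hpos : 0 < n := i0.pos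
  have hm : Monotone (A.lab f) := by
    intro i i' hi j hj
    by_contra hj'
    have := hN.2.1 (f i) (f i') (hf.atom _) (hf.atom _) ⟨j, hj, hj'⟩
    exact absurd ((hf.lt _ _).1 this) (not_lt.2 hi)
  have h0 : A.lab f i0 = ⊥ := by
    rw [Set.bot_eq_empty, Set.eq_empty_iff_forall_notMem]
    exact haP
  have h1 : ∀ i, A.lab f i = ⊥ → i = i0 := by
    intro i hi
    apply hf.inj hN
    apply hu
    refine ⟨hf.atom i, fun j hj => ?_⟩
    have : j ∈ A.lab f i := hj
    rw [hi] at this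
    exact this
  have h2 : i0.val = 0 := by
    have h3 : A.lab f ⟨0, hpos⟩ ≤ A.lab f i0 := hm (by simp [Fin.le_def])
    rw [h0, le_bot_iff] at h3
    rw [← h1 _ h3]
  refine ⟨hpos, hm, fun i => ⟨fun hi => by rw [h1 i hi, h2], fun hi => ?_⟩⟩
  have : i = i0 := Fin.ext (by omega)
  rw [this, h0]

/-- The algebra of subsets of `Fin c`, labelled by `l`. -/
noncomputable def setAlg (U : Set J) {c : ℕ} (l : Fin c → Set J) : OrdAlg J where
  carrier := Set (Fin c)
  fin := Fintype.ofFinite _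
  P j := {x | j ∈ U ∧ ∀ i ∈ x, j ∈ l i}
  lt x y := ∃ i, i ∈ y ∧ i ∉ x ∧ ∀ i' < i, (i' ∈ x ↔ i' ∈ y)

theorem setAlg_mem {U : Set J} {c : ℕ} {l : Fin c → Set J} {j : J} {x : Set (Fin c)} :
    x ∈ (setAlg U l).P j ↔ j ∈ U ∧ ∀ i ∈ x, j ∈ l i := Iff.rfl

theorem setAlg_lt {U : Set J} {c : ℕ} {l : Fin c → Set J} {x y : Set (Fin c)} :
    (setAlg U l).lt x y ↔ ∃ i, i ∈ y ∧ i ∉ x ∧ ∀ i' < i, (i' ∈ x ↔ i' ∈ y) := Iff.rfl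

theorem setAlg_lt_single {U : Set J} {c : ℕ} {l : Fin c → Set J} {x y : Fin c} :
    (setAlg U l).lt ({x} : Set (Fin c)) ({y} : Set (Fin c)) ↔ y < x := by
  rw [setAlg_lt]
  constructor
  · rintro ⟨i, hi, hix, h⟩
    rw [Set.mem_singleton_iff] at hi hix
    subst hi
    by_contra hc
    have hlt : x < i := lt_of_le_of_ne (not_lt.1 hc) (fun h => hix h.symm)
    have := (h x hlt).1 rfl
    rw [Set.mem_singleton_iff] at this
    exact hix this.symm
  · intro h
    refine ⟨y, rfl, h.ne, fun i' hi' => ?_⟩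
    simp only [Set.mem_singleton_iff]
    constructor
    · rintro rfl; exact absurd h hi'.not_gt
    · rintro rfl; exact absurd hi' (lt_irrefl _)

theorem setAlg_sto (U : Set J) {c : ℕ} (l : Fin c → Set J) :
    IsStrictTotalOrder (Set (Fin c)) (setAlg U l).lt where
  irrefl x := by
    rintro ⟨i, h1, h2, _⟩
    exact h2 h1
  trans x y z := by
    rintro ⟨i, h1, h2, h3⟩ ⟨i', h1', h2', h3'⟩
    rcases lt_trichotomy i i' with h | rfl | h
    · exact ⟨i, (h3' i h).1 h1, h2, fun t ht => (h3 t ht).trans (h3' t (ht.trans h))⟩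
    · exact absurd h1 h2'
    · exact ⟨i', h1', fun h4 => h2' ((h3 _ h).1 h4),
        fun t ht => (h3 t (ht.trans h)).trans (h3' t ht)⟩
  trichotomous x y := by
    intro h1 h2
    by_contra hne
    classical
    let S : Finset (Fin c) := Finset.univ.filter (fun i => ¬ (i ∈ x ↔ i ∈ y))
    have hS : S.Nonempty := by
      by_contra hS
      rw [Finset.not_nonempty_iff_eq_empty, Finset.filter_eq_empty_iff] at hS
      exact hne (Set.ext fun i => by simpa using hS (Finset.mem_univ i))
    have hm := S.min'_mem hS
    have hmin : ∀ i' < S.min' hS, (i' ∈ x ↔ i' ∈ y) := by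
      intro i' hi'
      by_contra hc
      exact absurd (S.min'_le i' (by simpa [S] using hc)) (not_le.2 hi')
    rw [Finset.mem_filter] at hm
    by_cases hx : S.min' hS ∈ x
    · exact h2 ⟨_, hx, fun hy => hm.2 ⟨fun _ => hy, fun _ => hx⟩, fun i hi => (hmin i hi).symm⟩
    · by_cases hy : S.min' hS ∈ y
      · exact h1 ⟨_, hy, hx, hmin⟩
      · exact hm.2 ⟨fun h => absurd h hx, fun h => absurd h hy⟩

theorem setAlg_atom {U : Set J} {c : ℕ} {l : Fin c → Set J} {x : (setAlg U l).carrier} :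
    IsAtom x ↔ ∃ i : Fin c, x = ({i} : Set (Fin c)) :=
  Set.isAtom_iff (s := (x : Set (Fin c)))

theorem setAlg_le {U : Set J} {c : ℕ} {l : Fin c → Set J} {x : Set (Fin c)} {i : Fin c} :
    @LE.le (setAlg U l).carrier _ ({i} : Set (Fin c)) x ↔ i ∈ x :=
  Set.singleton_subset_iff (s := x)

theorem setAlg_in {U : Set J} {c : ℕ} {l : Fin c → Set J} (hl : Adm l)
    (hU : ∀ i j, i ≤ j → i ∈ U → j ∈ U) (hlU : ∀ i, l i ⊆ U)
    (hup : ∀ t, ∀ i j, i ≤ j → i ∈ l t → j ∈ l t) : (setAlg U l).InNaBJu := by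
  refine ⟨⟨?_, ?_, ?_, ?_⟩, ⟨setAlg_sto U l, ?_, ?_⟩, ?_⟩
  · rintro j ⟨_, h⟩
    have h1 := h ⟨0, hl.pos⟩ trivial
    rw [(hl.bot ⟨0, hl.pos⟩).2 rfl] at h1
    exact h1
  · rintro j x ⟨h1, h2⟩ y hy
    exact ⟨h1, fun i hi => h2 i (hy hi)⟩
  · rintro j x ⟨h1, h2⟩ y ⟨_, h3⟩
    exact ⟨h1, fun i hi => hi.elim (h2 i) (h3 i)⟩
  · rintro i j hij x ⟨h1, h2⟩
    exact ⟨hU _ _ hij h1, fun t ht => hup _ _ _ hij (h2 t ht)⟩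
  · intro a b ha hb
    obtain ⟨i, rfl⟩ := setAlg_atom.1 ha
    obtain ⟨i', rfl⟩ := setAlg_atom.1 hb
    rintro ⟨j, ⟨h1, h2⟩, h3⟩
    apply setAlg_lt_single.2
    by_contra hc
    refine h3 ⟨h1, fun t ht => ?_⟩
    rw [Set.mem_singleton_iff] at ht
    rw [ht]
    exact hl.mono (not_lt.1 hc) (h2 i rfl)
  · intro a b hab
    constructor
    · rintro ⟨i, h1, h2, h3⟩
      refine ⟨({i} : Set (Fin c)), setAlg_atom.2 ⟨i, rfl⟩, setAlg_le.2 h1, fun h => h2 (setAlg_le.1 h), ?_⟩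
      intro d hd hne
      obtain ⟨i', rfl⟩ := setAlg_atom.1 hd
      by_cases he : i' = i
      · left; rw [he]
      · right
        apply setAlg_lt_single.2
        by_contra hc
        exact hne ((setAlg_le.trans (h3 i' (lt_of_le_of_ne (not_lt.1 hc) he))).trans setAlg_le.symm)
    · rintro ⟨d, hd, h1, h2, h3⟩
      obtain ⟨i, rfl⟩ := setAlg_atom.1 hd
      refine ⟨i, setAlg_le.1 h1, fun h => h2 (setAlg_le.2 h), ?_⟩
      intro i' hi'
      by_contra hc
      rcases h3 ({i'} : Set (Fin c)) (setAlg_atom.2 ⟨i', rfl⟩) 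
          (fun h => hc (setAlg_le.symm.trans (h.trans setAlg_le))) with h | h
      · exact hi'.ne (Set.singleton_injective h)
      · exact absurd (setAlg_lt_single.1 h) hi'.not_gt
  · refine ⟨({⟨0, hl.pos⟩} : Set (Fin c)), ⟨setAlg_atom.2 ⟨_, rfl⟩, ?_⟩, ?_⟩
    · rintro j ⟨_, h⟩
      have h1 := h ⟨0, hl.pos⟩ rfl
      rw [(hl.bot ⟨0, hl.pos⟩).2 rfl] at h1
      exact h1
    · rintro y ⟨hy, hyP⟩
      obtain ⟨i, rfl⟩ := setAlg_atom.1 hy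
      have : l i = ⊥ := by
        rw [Set.bot_eq_empty, Set.eq_empty_iff_forall_notMem]
        intro j hj
        refine hyP j ⟨hlU i hj, fun t ht => ?_⟩
        rw [Set.mem_singleton_iff] at ht
        rwa [ht]
      have h0 := (hl.bot i).1 this
      have : i = ⟨0, hl.pos⟩ := Fin.ext h0
      rw [this]

/-- The map induced by a word. -/
def wmap (A : OrdAlg J) {n c : ℕ} (f : Fin n → A.carrier) (s : Fin c → Fin n) (x : A.carrier) :
    Set (Fin c) := {i | f (s i) ≤ x}

theorem mem_of_atoms {B : OrdAlg J} (hI : B.IdealFam) {n : ℕ} {f : Fin n → B.carrier}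
    (hf : B.Enum f) (j : J) (h0 : ⊥ ∈ B.P j) (x : B.carrier)
    (h : ∀ i, f i ≤ x → f i ∈ B.P j) : x ∈ B.P j := by
  classical
  have h1 : ∀ S : Finset (Fin n), (∀ i ∈ S, f i ≤ x) → S.sup f ∈ B.P j := by
    intro S
    induction S using Finset.induction_on with
    | empty => intro _; simpa using h0
    | insert a S ha ih =>
      intro hS
      rw [Finset.sup_insert]
      exact hI.2.2.1 j _ (h a (hS a (by simp))) _ (ih fun i hi => hS i (by simp [hi]))
  refine hI.2.1 j _ (h1 (Finset.univ.filter fun i => f i ≤ x) (by simp)) x ?_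
  apply hf.ext
  intro i hi
  exact Finset.le_sup (f := f) (by simpa using hi)

theorem exists_emb {B : OrdAlg J} (hB : B.InNaBJu) {n : ℕ} {f : Fin n → B.carrier} (hf : B.Enum f)
    {c : ℕ} {l : Fin c → Set J} (hl : Adm l) {v p} (hv : Rig l (B.lab f) v p) :
    ∃ e : Emb B (setAlg {j | ⊥ ∈ B.P j} l), e.toFun = B.wmap f v := by
  obtain ⟨hI, hN, -⟩ := hB
  have hinj : Function.Injective (B.wmap f v) := by
    intro x y hxy
    have h : ∀ i, f i ≤ x ↔ f i ≤ y := by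
      intro i
      have : p i ∈ B.wmap f v x ↔ p i ∈ B.wmap f v y := by rw [hxy]
      simpa [wmap, hv.sec] using this
    exact le_antisymm (hf.ext fun i => (h i).1) (hf.ext fun i => (h i).2)
  have hlt : ∀ x y, B.lt x y → (setAlg {j | ⊥ ∈ B.P j} l).lt (B.wmap f v x) (B.wmap f v y) := by
    intro x y hxy
    have hne : x ≠ y := by
      rintro rfl
      exact natural_irrefl hN _ hxy
    obtain ⟨d, hd, h1, h2, h3⟩ := (hN.2.2 x y hne).1 hxy
    obtain ⟨i, rfl⟩ := hf.surj d hd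
    refine ⟨p i, by simpa [wmap, hv.sec] using h1, by simpa [wmap, hv.sec] using h2, ?_⟩
    intro i' hi'
    by_contra hc
    have hle : i ≤ v i' := by
      rcases h3 (f (v i')) (hf.atom _) hc with h | h
      · exact (hf.inj hN h).ge
      · exact ((hf.lt _ _).1 h).le
    exact absurd ((hv.mono.monotone hle).trans (hv.le i')) (not_le.2 hi')
  refine ⟨⟨B.wmap f v, hinj, ?_, ?_, ?_, ?_, ?_, ?_, ?_⟩, rfl⟩
  · intro x y
    exact Set.ext fun i => atom_le_sup (hf.atom _)
  · intro x y
    exact Set.ext fun i => le_inf_iff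
  · intro x
    exact Set.ext fun i => atom_le_compl (hf.atom _)
  · exact Set.ext fun i => ⟨fun h => (hf.atom _).1 (le_bot_iff.1 h), fun h => h.elim⟩
  · exact Set.ext fun i => ⟨fun _ => trivial, fun _ => le_top (a := f (v i))⟩
  · intro x y
    refine ⟨hlt x y, fun h => ?_⟩
    have hs := setAlg_sto {j | ⊥ ∈ B.P j} l
    have hne : x ≠ y := by
      rintro rfl
      exact hs.irrefl _ h
    rcases natural_tri hN x y hne with h1 | h1
    · exact h1
    · exact absurd (hs.trans _ _ _ h (hlt _ _ h1)) (hs.irrefl _)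
  · intro j x
    constructor
    · intro hx
      refine ⟨hI.2.1 j x hx ⊥ bot_le, fun i hi => ?_⟩
      have h1 : j ∈ B.lab f (v i) := hI.2.1 j x hx _ hi
      rw [← hv.lab] at h1
      exact hl.mono (hv.le i) h1
    · rintro ⟨h0, h⟩
      apply mem_of_atoms hI hf j h0
      intro i hi
      have h1 : j ∈ l (p i) := h (p i) (by simpa [wmap, hv.sec] using hi)
      rw [hv.lab] at h1
      exact h1

theorem rig_of_emb {A : OrdAlg J} (hA : A.InNaBJu) {n : ℕ} {f : Fin n → A.carrier} (hf : A.Enum f)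
    {c : ℕ} {l : Fin c → Set J} (hl : Adm l) {U : Set J} (hlU : ∀ i, l i ⊆ U)
    (e : Emb A (setAlg U l)) : ∃ s p, Rig l (A.lab f) s p ∧ e.toFun = A.wmap f s := by
  classical
  obtain ⟨hI, hN, -⟩ := hA
  let E : A.carrier → Set (Fin c) := e.toFun
  have Esup : ∀ x y, E (x ⊔ y) = E x ∪ E y := e.map_sup
  have Einf : ∀ x y, E (x ⊓ y) = E x ∩ E y := e.map_inf
  have Ecompl : ∀ x, E xᶜ = (E x)ᶜ := e.map_compl
  have Ebot : E ⊥ = ∅ := e.map_bot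
  have Etop : E ⊤ = Set.univ := e.map_top
  have Einj : Function.Injective E := e.inj
  have Emono : ∀ x y, x ≤ y → E x ⊆ E y := by
    intro x y hxy
    have := Esup x y
    rw [sup_eq_right.2 hxy] at this
    rw [this]
    exact Set.subset_union_left
  have hex : ∀ i, ∃ y, i ∈ E (f y) := by
    intro i
    by_contra hc
    push Not at hc
    have h1 : ∀ S : Finset (Fin n), i ∉ E (S.sup f) := by
      intro S
      induction S using Finset.induction_on with
      | empty => simp [Ebot]
      | insert a S ha ih =>
        rw [Finset.sup_insert, Esup]
        rintro (h | h)
        · exact hc a h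
        · exact ih h
    have h2 : (Finset.univ.sup f : A.carrier) = ⊤ := by
      rw [eq_top_iff]
      apply hf.ext
      intro t _
      exact Finset.le_sup (f := f) (Finset.mem_univ t)
    apply h1 Finset.univ
    rw [h2, Etop]
    trivial
  choose s hs using hex
  have hE : ∀ x i, i ∈ E x ↔ f (s i) ≤ x := by
    intro x i
    constructor
    · intro hi
      by_contra hc
      have := Emono _ _ ((atom_le_compl (hf.atom _)).2 hc) (hs i)
      rw [Ecompl] at this
      exact this hi
    · intro h
      exact Emono _ _ h (hs i)
  have hEf : ∀ y i, i ∈ E (f y) ↔ s i = y := by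
    intro y i
    rw [hE]
    constructor
    · intro h
      apply hf.inj hN
      exact ((hf.atom y).le_iff.1 h).resolve_left (hf.atom _).1
    · rintro rfl; exact le_rfl
  have hne : ∀ y, (Finset.univ.filter fun i => s i = y).Nonempty := by
    intro y
    by_contra hc
    rw [Finset.not_nonempty_iff_eq_empty, Finset.filter_eq_empty_iff] at hc
    apply (hf.atom y).1
    apply Einj
    rw [Ebot, Set.eq_empty_iff_forall_notMem]
    intro i hi
    exact hc (Finset.mem_univ i) ((hEf y i).1 hi)
  let p : Fin n → Fin c := fun y => (Finset.univ.filter fun i => s i = y).min' (hne y)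
  have hsec : ∀ y, s (p y) = y := by
    intro y
    have := (Finset.univ.filter fun i => s i = y).min'_mem (hne y)
    exact (Finset.mem_filter.1 this).2
  have hle : ∀ x, p (s x) ≤ x := fun x => Finset.min'_le _ _ (by simp)
  refine ⟨s, p, ⟨?_, hsec, hle, ?_⟩, ?_⟩
  · intro y y' hy
    obtain ⟨i, h1, h2, h3⟩ := (e.map_lt _ _).1 ((hf.lt y y').2 hy)
    have h1' : s i = y := (hEf y i).1 h1
    have hpi : p y ≤ i := by rw [← h1']; exact hle i
    by_contra hc
    have hle' : p y' ≤ p y := not_lt.1 hc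
    have hne' : p y' ≠ p y := by
      intro h
      have := congrArg s h
      rw [hsec, hsec] at this
      exact hy.ne this.symm
    have h4 := (h3 (p y') (lt_of_lt_of_le (lt_of_le_of_ne hle' hne') hpi)).1 ((hEf y' _).2 (hsec y'))
    have h5 : s (p y') = y := (hEf y _).1 h4
    rw [hsec] at h5
    exact hy.ne h5.symm
  · intro y
    apply Set.ext
    intro j
    have h1 : f y ∈ A.P j ↔ (j ∈ U ∧ ∀ i ∈ E (f y), j ∈ l i) := e.map_P j (f y)
    change j ∈ l (p y) ↔ f y ∈ A.P j
    rw [h1]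
    constructor
    · intro h
      refine ⟨hlU _ h, fun i hi => ?_⟩
      have h2 : s i = y := (hEf y i).1 hi
      have h3 := hle i
      rw [h2] at h3
      exact hl.mono h3 h
    · rintro ⟨_, h⟩
      exact h _ ((hEf y _).2 (hsec y))
  · funext x
    exact Set.ext fun i => hE x i

end OrdAlg

theorem naBJu_ramsey_property {J : Type} [LinearOrder J]
    (A B : OrdAlg J) (hA : A.InNaBJu) (hB : B.InNaBJu)
    (hAB : Nonempty (OrdAlg.Emb A B))
    (k : ℕ) (hk : 2 ≤ k) :
    ∃ C : OrdAlg J, C.InNaBJu ∧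
      ∀ χ : Set C.carrier → Fin k,
        ∃ e : OrdAlg.Emb B C,
          ∀ S₁ ∈ OrdAlg.Copies A C, ∀ S₂ ∈ OrdAlg.Copies A C,
            S₁ ⊆ Set.range e.toFun → S₂ ⊆ Set.range e.toFun → χ S₁ = χ S₂ := by
  obtain ⟨n, f, hf⟩ := OrdAlg.exists_enum hA.2.1
  obtain ⟨b, g, hg⟩ := OrdAlg.exists_enum hB.2.1
  have hlA := OrdAlg.lab_adm hA hf
  have hlB := OrdAlg.lab_adm hB hg
  obtain ⟨n, rfl⟩ : ∃ n', n = n' + 1 := ⟨n - 1, by have := hlA.pos; omega⟩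
  obtain ⟨c, l, hl, hlr, hR⟩ := ramA n (A.lab f) k b (B.lab g) hlB
  have hI := hB.1
  have hlU : ∀ i, l i ⊆ {j | ⊥ ∈ B.P j} := by
    intro i j hj
    obtain ⟨i', hi'⟩ := hlr i
    rw [hi'] at hj
    exact hI.2.1 j _ hj ⊥ bot_le
  refine ⟨OrdAlg.setAlg {j | ⊥ ∈ B.P j} l, OrdAlg.setAlg_in hl ?_ hlU ?_, ?_⟩
  · intro i j hij h
    exact hI.2.2.2 i j hij h
  · intro t i j hij h
    obtain ⟨t', ht'⟩ := hlr t
    rw [ht'] at h ⊢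
    exact hI.2.2.2 i j hij h
  · intro χ
    obtain ⟨v, p, hv, hv'⟩ := hR (fun s => χ (Set.range (A.wmap f s)))
    obtain ⟨e, he⟩ := OrdAlg.exists_emb hB hg hl hv
    refine ⟨e, ?_⟩
    have key : ∀ S ∈ OrdAlg.Copies A (OrdAlg.setAlg {j | ⊥ ∈ B.P j} l), S ⊆ Set.range e.toFun →
        ∃ u pu, Rig (B.lab g) (A.lab f) u pu ∧ S = Set.range (A.wmap f (u ∘ v)) := by
      rintro S ⟨e', rfl⟩ hS
      obtain ⟨s, ps, hs, hes⟩ := OrdAlg.rig_of_emb hA hf hl hlU e'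
      have hfac : ∀ x x', v x = v x' → s x = s x' := by
        intro x x' hx
        obtain ⟨z, hz⟩ := hS ⟨f (s x), rfl⟩
        rw [he, hes] at hz
        have h1 : x ∈ A.wmap f s (f (s x)) := le_rfl (a := f (s x))
        rw [← hz] at h1
        have h2 : x' ∈ B.wmap g v z := by
          change g (v x') ≤ z
          rw [← hx]
          exact h1
        rw [hz] at h2
        have h3 : f (s x') ≤ f (s x) := h2
        apply hf.inj hA.2.1
        exact (((hf.atom _).le_iff.1 h3).resolve_left (hf.atom _).1).symm
      obtain ⟨h1, h2⟩ := hv.factor hs hfac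
      exact ⟨_, _, h1, by rw [h2, hes]; rfl⟩
    intro S₁ h₁ S₂ h₂ hs₁ hs₂
    obtain ⟨u, pu, hu, rfl⟩ := key S₁ h₁ hs₁
    obtain ⟨u', pu', hu', rfl⟩ := key S₂ h₂ hs₂
    exact hv' u pu u' pu' hu hu'
end

section
/- The class na(B_J) is order forgetful: if (A, (P_j^A)) and (B, (P_j^B)) are members of B_J that are isomorphic as Boolean algebras with predicates (there is a Boolean algebra isomorphism h : A → B with x ∈ P_j^A ⟺ h(x) ∈ P_j^B for all j ∈ J), then for any natural ordering <_A on A and any natural ordering <_B on B there exists an isomorphism from (A, (P_j^A), <_A) to (B, (P_j^B), <_B) that additionally preserves the linear orders. -/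
/-!
STATEMENT 10: The class na(B_J) is order forgetful: if two members of B_J are isomorphic
as Boolean algebras with predicates, then for any natural orderings on them there is an
isomorphism that additionally preserves the linear orders.
-/

theorem aux_order {J α β : Type} [Finite α] [Finite β] (r : α → α → Prop) (s : β → β → Prop)
    (hr : IsStrictTotalOrder α r) (hs : IsStrictTotalOrder β s) (S : J → Set α) (T : J → Set β)
    (hS : ∀ j a b, a ∈ S j → r b a → b ∈ S j) (hT : ∀ j a b, a ∈ T j → s b a → b ∈ T j)
    (g : α ≃ β) (hg : ∀ j a, a ∈ S j ↔ g a ∈ T j) :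
    ∃ f : α ≃ β, (∀ a b, r a b ↔ s (f a) (f b)) ∧ ∀ j a, a ∈ S j ↔ f a ∈ T j := by
  classical
  let := linearOrderOfSTO r
  let := linearOrderOfSTO s
  have := Fintype.ofFinite α
  have := Fintype.ofFinite β
  let f : α ≃o β := (Fintype.orderIsoFinOfCardEq α rfl).symm.trans
    (Fintype.orderIsoFinOfCardEq β (Fintype.card_congr g).symm)
  refine ⟨f.toEquiv, fun a b => (f.lt_iff_lt (x := a) (y := b)).symm, fun j a => ?_⟩
  have h1 : IsLowerSet (f '' S j) := by
    rintro _ b hb ⟨a, ha, rfl⟩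
    refine ⟨f.symm b, ?_, by simp⟩
    have : f.symm b ≤ a := by simpa using f.symm.monotone hb
    rcases this.eq_or_lt with h | h
    · rwa [h]
    · exact hS j _ _ ha h
  have h2 : IsLowerSet (T j) := by
    intro a b hb ha
    rcases hb.eq_or_lt with h | h
    · rwa [h]
    · exact hT j _ _ ha h
  have hc : (f '' S j).ncard = (T j).ncard := by
    have : T j = g '' S j := by
      ext b
      constructor
      · intro hb
        exact ⟨g.symm b, (hg j _).2 (by simpa using hb), by simp⟩
      · rintro ⟨a, ha, rfl⟩
        exact (hg j a).1 ha
    rw [this, Set.ncard_image_of_injective _ f.injective, Set.ncard_image_of_injective _ g.injective]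
  have he : f '' S j = T j := by
    rcases h1.total h2 with h | h
    · exact Set.eq_of_subset_of_ncard_le h hc.ge (Set.toFinite _)
    · exact (Set.eq_of_subset_of_ncard_le h hc.le (Set.toFinite _)).symm
  rw [← he]
  exact (f.injective.mem_set_image).symm

theorem aux_ext {α : Type} [BooleanAlgebra α] [Finite α] {x y : α}
    (h : ∀ a, IsAtom a → a ≤ x → a ≤ y) : x ≤ y := by
  have : IsAtomic α := Finite.to_isAtomic
  by_contra hn
  have : x \ y ≠ ⊥ := fun h' => hn (sdiff_eq_bot_iff.1 h')
  obtain ⟨a, ha, hle⟩ := (eq_bot_or_exists_atom_le (x \ y)).resolve_left this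
  have h1 := h a ha (hle.trans sdiff_le)
  have h2 : Disjoint a y := disjoint_sdiff_self_left.mono_left hle
  exact ha.1 (h2.eq_bot_of_le h1)

/-- element with prescribed atoms -/
theorem aux_sup {α : Type} [BooleanAlgebra α] [Fintype α] [DecidableEq α] (s : Finset α)
    (hs : ∀ a ∈ s, IsAtom a) (a : α) (ha : IsAtom a) : a ≤ s.sup id ↔ a ∈ s := by
  constructor
  · intro h
    by_contra hn
    have : Disjoint a (s.sup id) := by
      rw [Finset.disjoint_sup_right]
      intro i hi
      exact ha.disjoint_of_ne (hs i hi) (fun e => hn (e ▸ hi))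
    exact ha.1 (this.eq_bot_of_le h)
  · intro h
    exact Finset.le_sup (f := id) h

theorem aux_iso {α β : Type} [BooleanAlgebra α] [Fintype α] [BooleanAlgebra β] [Fintype β]
    (f : {a : α // IsAtom a} ≃ {b : β // IsAtom b}) :
    ∃ e : α ≃o β, ∀ (a : {a : α // IsAtom a}) (x : α), (a : α) ≤ x ↔ (f a : β) ≤ e x := by
  classical
  let F : α → β := fun x =>
    ((Finset.univ.filter fun a : {a : α // IsAtom a} => (a : α) ≤ x).image
      fun a => (f a : β)).sup id
  let G : β → α := fun x =>
    ((Finset.univ.filter fun a : {a : β // IsAtom a} => (a : β) ≤ x).image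
      fun a => (f.symm a : α)).sup id
  have hF : ∀ (b : {b : β // IsAtom b}) (x : α), (b : β) ≤ F x ↔ (f.symm b : α) ≤ x := by
    intro b x
    have := aux_sup ((Finset.univ.filter fun a : {a : α // IsAtom a} => (a : α) ≤ x).image
      fun a => (f a : β)) (by
        intro a ha
        obtain ⟨c, _, rfl⟩ := Finset.mem_image.1 ha
        exact (f c).2) b b.2
    refine this.trans ?_
    simp only [Finset.mem_image, Finset.mem_filter, Finset.mem_univ, true_and]
    constructor
    · rintro ⟨a, ha, he⟩
      have : f a = b := Subtype.ext he
      rw [← this]; simpa using ha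
    · intro h
      exact ⟨f.symm b, h, by simp⟩
  have hG : ∀ (b : {a : α // IsAtom a}) (x : β), (b : α) ≤ G x ↔ (f b : β) ≤ x := by
    intro b x
    have := aux_sup ((Finset.univ.filter fun a : {a : β // IsAtom a} => (a : β) ≤ x).image
      fun a => (f.symm a : α)) (by
        intro a ha
        obtain ⟨c, _, rfl⟩ := Finset.mem_image.1 ha
        exact (f.symm c).2) b b.2
    refine this.trans ?_
    simp only [Finset.mem_image, Finset.mem_filter, Finset.mem_univ, true_and]
    constructor
    · rintro ⟨a, ha, he⟩
      have : f.symm a = b := Subtype.ext he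
      rw [← this]; simpa using ha
    · intro h
      exact ⟨f b, h, by simp⟩
  have mF : Monotone F := fun x y hxy => aux_ext fun a ha h =>
    (hF ⟨a, ha⟩ y).2 (((hF ⟨a, ha⟩ x).1 h).trans hxy)
  have mG : Monotone G := fun x y hxy => aux_ext fun a ha h =>
    (hG ⟨a, ha⟩ y).2 (((hG ⟨a, ha⟩ x).1 h).trans hxy)
  have GF : ∀ x, G (F x) = x := by
    intro x
    have : ∀ a : {a : α // IsAtom a}, (a : α) ≤ G (F x) ↔ (a : α) ≤ x := by
      intro a; rw [hG, hF]; simp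
    exact le_antisymm (aux_ext fun a ha h => (this ⟨a, ha⟩).1 h)
      (aux_ext fun a ha h => (this ⟨a, ha⟩).2 h)
  have FG : ∀ x, F (G x) = x := by
    intro x
    have : ∀ a : {a : β // IsAtom a}, (a : β) ≤ F (G x) ↔ (a : β) ≤ x := by
      intro a; rw [hF, hG]; simp
    exact le_antisymm (aux_ext fun a ha h => (this ⟨a, ha⟩).1 h)
      (aux_ext fun a ha h => (this ⟨a, ha⟩).2 h)
  refine ⟨Equiv.toOrderIso ⟨F, G, GF, FG⟩ mF mG, fun a x => ?_⟩
  have := hF (f a) x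
  simp only [Equiv.symm_apply_apply] at this
  exact this.symm

theorem aux_mem {J : Type} [LinearOrder J] (A : OrdAlg J) (hA : A.IdealFam) (j : J)
    (x : A.carrier) :
    x ∈ A.P j ↔ ⊥ ∈ A.P j ∧ ∀ a : {a : A.carrier // IsAtom a}, (a : A.carrier) ≤ x →
      (a : A.carrier) ∈ A.P j := by
  classical
  obtain ⟨-, h2, h3, -⟩ := hA
  constructor
  · exact fun h => ⟨h2 j x h _ bot_le, fun a ha => h2 j x h _ ha⟩
  · rintro ⟨h0, h⟩
    have : (Finset.univ.filter fun a : A.carrier => IsAtom a ∧ a ≤ x).sup id ∈ A.P j := by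
      refine Finset.sup_induction (p := fun y => y ∈ A.P j) h0 (fun a ha b hb => h3 j a ha b hb) ?_
      intro a ha
      simp only [Finset.mem_filter, Finset.mem_univ, true_and] at ha
      exact h ⟨a, ha.1⟩ ha.2
    refine h2 j _ this _ (aux_ext fun a ha hle => ?_)
    exact Finset.le_sup (f := id) (by simp [ha, hle])

theorem aux_lower {J : Type} [LinearOrder J] (A : OrdAlg J) (hA : A.Natural) (j : J)
    (a b : {a : A.carrier // IsAtom a}) (h : (a : A.carrier) ∈ A.P j) (hl : A.lt b a) :
    (b : A.carrier) ∈ A.P j := by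
  obtain ⟨hs, hp, -⟩ := hA
  by_contra hn
  exact hs.toIsStrictOrder.toIrrefl.irrefl _
    (hs.toIsStrictOrder.toIsTrans.trans _ _ _ hl (hp a b a.2 b.2 ⟨j, h, hn⟩))

theorem aux_sto {α : Type} (r : α → α → Prop) (p : α → Prop) (h : IsStrictTotalOrder α r) :
    IsStrictTotalOrder {a // p a} (fun a b => r a b) :=
  (Subtype.relEmbedding r p).isStrictTotalOrder

theorem aux_lt {J : Type} [LinearOrder J] (A B : OrdAlg J) (hA : A.Natural) (hB : B.Natural)
    (f : {a : A.carrier // IsAtom a} ≃ {b : B.carrier // IsAtom b})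
    (hf : ∀ a b : {a : A.carrier // IsAtom a}, A.lt a b ↔ B.lt (f a) (f b))
    (e : A.carrier → B.carrier) (he' : Function.Injective e)
    (he : ∀ (a : {a : A.carrier // IsAtom a}) (x : A.carrier),
      (a : A.carrier) ≤ x ↔ (f a : B.carrier) ≤ e x) (x y : A.carrier) :
    A.lt x y ↔ B.lt (e x) (e y) := by
  by_cases hxy : x = y
  · subst hxy
    exact iff_of_false (hA.1.toIsStrictOrder.toIrrefl.irrefl _)
      (hB.1.toIsStrictOrder.toIrrefl.irrefl _)
  rw [hA.2.2 x y hxy, hB.2.2 _ _ (he'.ne hxy)]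
  constructor
  · rintro ⟨c, hc, h1, h2, h3⟩
    refine ⟨f ⟨c, hc⟩, (f ⟨c, hc⟩).2, (he ⟨c, hc⟩ y).1 h1, fun h => h2 ((he ⟨c, hc⟩ x).2 h), ?_⟩
    intro d hd hn
    obtain ⟨d', hd'⟩ := f.surjective ⟨d, hd⟩
    have hd2 : d = f d' := by rw [hd']
    subst hd2
    rw [← he, ← he] at hn
    rcases h3 d' d'.2 hn with h | h
    · left
      have : d' = ⟨c, hc⟩ := Subtype.ext h
      rw [this]
    · right
      exact (hf d' ⟨c, hc⟩).1 h
  · rintro ⟨c, hc, h1, h2, h3⟩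
    obtain ⟨c', hc'⟩ := f.surjective ⟨c, hc⟩
    have hc2 : c = f c' := by rw [hc']
    subst hc2
    refine ⟨c', c'.2, (he c' y).2 h1, fun h => h2 ((he c' x).1 h), ?_⟩
    intro d hd hn
    rw [he ⟨d, hd⟩, he ⟨d, hd⟩] at hn
    rcases h3 _ (f ⟨d, hd⟩).2 hn with h | h
    · left
      exact congrArg Subtype.val (f.injective (Subtype.ext h))
    · right
      exact (hf ⟨d, hd⟩ c').2 h

theorem naBJ_order_forgetful {J : Type} [LinearOrder J]
    (A B : OrdAlg J)
    -- A and B are members of B_J (the orderings A.lt, B.lt are the given natural orderings)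
    (hA : A.IdealFam ∧ (∃ a : A.carrier, IsAtom a ∧ ∀ j : J, a ∉ A.P j) ∧ A.Natural)
    (hB : B.IdealFam ∧ (∃ b : B.carrier, IsAtom b ∧ ∀ j : J, b ∉ B.P j) ∧ B.Natural)
    -- h is an isomorphism of the Boolean algebras with predicates (ignoring the orders)
    (h : A.carrier ≃ B.carrier)
    (h_sup : ∀ x y : A.carrier, h (x ⊔ y) = h x ⊔ h y)
    (h_inf : ∀ x y : A.carrier, h (x ⊓ y) = h x ⊓ h y)
    (h_compl : ∀ x : A.carrier, h xᶜ = (h x)ᶜ)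
    (h_bot : h ⊥ = ⊥) (h_top : h ⊤ = ⊤)
    (h_P : ∀ (j : J) (x : A.carrier), x ∈ A.P j ↔ h x ∈ B.P j) :
    -- then there is an isomorphism that also preserves the linear orders
    ∃ e : A.carrier ≃ B.carrier,
      (∀ x y : A.carrier, e (x ⊔ y) = e x ⊔ e y) ∧
      (∀ x y : A.carrier, e (x ⊓ y) = e x ⊓ e y) ∧
      (∀ x : A.carrier, e xᶜ = (e x)ᶜ) ∧
      e ⊥ = ⊥ ∧ e ⊤ = ⊤ ∧
      (∀ (j : J) (x : A.carrier), x ∈ A.P j ↔ e x ∈ B.P j) ∧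
      (∀ x y : A.carrier, A.lt x y ↔ B.lt (e x) (e y)) := by
  obtain ⟨hA1, -, hA2⟩ := hA
  obtain ⟨hB1, -, hB2⟩ := hB
  have hle : ∀ {a b : A.carrier}, h a ≤ h b ↔ a ≤ b := by
    intro a b
    rw [← sup_eq_right, ← h_sup, h.injective.eq_iff, sup_eq_right]
  let H : A.carrier ≃o B.carrier := ⟨h, hle⟩
  let g : {a : A.carrier // IsAtom a} ≃ {b : B.carrier // IsAtom b} :=
    H.toEquiv.subtypeEquiv fun a => (H.isAtom_iff a).symm
  obtain ⟨f, hf1, hf2⟩ := aux_order (J := J) (fun a b : {a : A.carrier // IsAtom a} => A.lt a b)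
    (fun a b : {b : B.carrier // IsAtom b} => B.lt a b)
    (aux_sto _ _ hA2.1) (aux_sto _ _ hB2.1)
    (fun j => {a | (a : A.carrier) ∈ A.P j}) (fun j => {a | (a : B.carrier) ∈ B.P j})
    (aux_lower A hA2) (aux_lower B hB2) g (fun j a => h_P j a)
  obtain ⟨e, he⟩ := aux_iso f
  refine ⟨e.toEquiv, map_sup e, map_inf e, map_compl e, map_bot e, map_top e, ?_,
    aux_lt A B hA2 hB2 f hf1 e e.injective he⟩
  intro j x
  rw [aux_mem A hA1, aux_mem B hB1]
  refine and_congr (by rw [h_P, h_bot]) ?_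
  rw [← f.forall_congr_right]
  exact forall_congr' fun a => imp_congr (he a x) (hf2 j a)
end

section
/- Let X be the Cantor space and let M be a maximal chain of nonempty closed subsets of X. Then for every nonempty clopen subset C of X, the set M_C ∩ C is a singleton, where M_C = ⋂{M ∈ M : M ∩ C ≠ ∅}. -/
/-- The Cantor space. -/
abbrev CantorSpace : Type := ℕ → Bool

/-- `M` is a maximal chain of nonempty closed subsets of `X`: a family of nonempty closed
subsets linearly ordered by inclusion, not properly contained in any other such family. -/
def IsMaxChainOfClosed {X : Type} [TopologicalSpace X] (M : Set (Set X)) : Prop :=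
  (∀ A ∈ M, A.Nonempty ∧ IsClosed A) ∧ IsChain (· ⊆ ·) M ∧
  ∀ M' : Set (Set X), (∀ A ∈ M', A.Nonempty ∧ IsClosed A) → IsChain (· ⊆ ·) M' →
    M ⊆ M' → M' = M

/-- `chainInter M C` is the set `M_C = ⋂ {A ∈ M : A ∩ C ≠ ∅}`. -/
def chainInter {X : Type} [TopologicalSpace X] (M : Set (Set X)) (C : Set X) : Set X :=
  ⋂₀ {A | A ∈ M ∧ (A ∩ C).Nonempty}

/-!
STATEMENT 12: Let X be the Cantor space and M a maximal chain of nonempty closed subsets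
of X. Then for every nonempty clopen C ⊆ X, the set M_C ∩ C is a singleton.
-/

/-- A nonempty closed set comparable with all members of a maximal chain belongs to it. -/
theorem IsMaxChainOfClosed.mem_of_comparable {X : Type} [TopologicalSpace X] {M : Set (Set X)}
    (hM : IsMaxChainOfClosed M) {B : Set X} (hne : B.Nonempty) (hcl : IsClosed B)
    (hcomp : ∀ A ∈ M, B ⊆ A ∨ A ⊆ B) : B ∈ M := by
  obtain ⟨h1, h2, h3⟩ := hM
  have h := h3 (insert B M) ?_ ?_ (Set.subset_insert B M)
  · rw [← h]
    exact Set.mem_insert B M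
  · rintro A (rfl | hA)
    · exact ⟨hne, hcl⟩
    · exact h1 A hA
  · exact h2.insert fun A hA _ => hcomp A hA

theorem maxChain_inter_clopen_singleton
    (M : Set (Set CantorSpace)) (hM : IsMaxChainOfClosed M)
    (C : Set CantorSpace) (hC : C.Nonempty) (hCclopen : IsClopen C) :
    ∃ x : CantorSpace, chainInter M C ∩ C = {x} := by
  have huniv : Set.univ ∈ M := hM.mem_of_comparable Set.univ_nonempty isClosed_univ
    fun A _ => Or.inr (Set.subset_univ A)
  obtain ⟨h1, h2, -⟩ := id hM
  have hcmp : ∀ A ∈ M, ∀ D ∈ M, A ⊆ D ∨ D ⊆ A := fun A hA D hD => h2.total hA hD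
  have hclK : IsClosed (chainInter M C) := isClosed_sInter fun A hA => (h1 A hA.1).2
  -- compactness: the intersection meets `C`
  have hne : (chainInter M C ∩ C).Nonempty := by
    let T : Set (Set CantorSpace) := Set.image (fun A => A ∩ C) {A | A ∈ M ∧ (A ∩ C).Nonempty}
    have hT : (⋂₀ T).Nonempty := by
      have : Nonempty T := ⟨_, Set.univ, ⟨huniv, by simpa using hC⟩, rfl⟩
      apply IsCompact.nonempty_sInter_of_directed_nonempty_isCompact_isClosed
      · rintro _ ⟨A, hA, rfl⟩ _ ⟨D, hD, rfl⟩
        rcases hcmp A hA.1 D hD.1 with h | h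
        · exact ⟨A ∩ C, ⟨A, hA, rfl⟩, subset_rfl, Set.inter_subset_inter_left C h⟩
        · exact ⟨D ∩ C, ⟨D, hD, rfl⟩, Set.inter_subset_inter_left C h, subset_rfl⟩
      · rintro _ ⟨A, hA, rfl⟩
        exact hA.2
      · rintro _ ⟨A, hA, rfl⟩
        exact ((h1 A hA.1).2.inter hCclopen.1).isCompact
      · rintro _ ⟨A, hA, rfl⟩
        exact (h1 A hA.1).2.inter hCclopen.1
    obtain ⟨x, hx⟩ := hT
    refine ⟨x, fun A hA => (hx (A ∩ C) ⟨A, hA, rfl⟩).1, ?_⟩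
    exact (hx (Set.univ ∩ C) ⟨Set.univ, ⟨huniv, by simpa using hC⟩, rfl⟩).2
  obtain ⟨x, hxK, hxC⟩ := hne
  have hB : (chainInter M C \ C) ∪ {x} ∈ M := by
    apply hM.mem_of_comparable ⟨x, Or.inr rfl⟩
    · exact (hclK.sdiff hCclopen.2).union isClosed_singleton
    · intro A hA
      by_cases hAC : (A ∩ C).Nonempty
      · left
        rintro y (hy | rfl)
        · exact hy.1 A ⟨hA, hAC⟩
        · exact hxK A ⟨hA, hAC⟩
      · right
        intro y hy
        refine Or.inl ⟨fun D hD => ?_, fun hyC => hAC ⟨y, hy, hyC⟩⟩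
        rcases hcmp A hA D hD.1 with h | h
        · exact h hy
        · exact absurd (hD.2.mono (Set.inter_subset_inter_left C h)) hAC
  refine ⟨x, Set.Subset.antisymm ?_ ?_⟩
  · rintro y ⟨hyK, hyC⟩
    rcases hyK _ ⟨hB, x, Or.inr rfl, hxC⟩ with h | h
    · exact absurd hyC h.2
    · exact h
  · rintro y rfl
    exact ⟨hxK, hxC⟩
end

section
/- Let X be the Cantor space and let M be a maximal chain of nonempty closed subsets of X. For nonempty clopen subsets C, D of X: (1) if C ⊆ D then M_D ⊆ M_C; (2) if C ∩ D = ∅ then M_C ≠ M_D. Here M_C = ⋂{M ∈ M : M ∩ C ≠ ∅}. -/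
/-!
STATEMENT 13: Let X be the Cantor space and M a maximal chain of nonempty closed subsets of
X. For nonempty clopen C, D ⊆ X: (1) if C ⊆ D then M_D ⊆ M_C; (2) if C ∩ D = ∅ then
M_C ≠ M_D.
-/

theorem chainInter_inter_nonempty
    (M : Set (Set CantorSpace)) (hM : IsMaxChainOfClosed M)
    (C : Set CantorSpace) (hC : C.Nonempty) (hCc : IsClopen C) :
    (chainInter M C ∩ C).Nonempty := by
  obtain ⟨h1, h2, -⟩ := hM
  by_cases hne : Nonempty {A | A ∈ M ∧ (A ∩ C).Nonempty}
  · have := IsCompact.nonempty_iInter_of_directed_nonempty_isCompact_isClosed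
      (fun A : {A | A ∈ M ∧ (A ∩ C).Nonempty} => (A : Set CantorSpace) ∩ C)
      (by
        intro A B
        rcases h2.total A.2.1 B.2.1 with h | h
        · exact ⟨A, subset_rfl, Set.inter_subset_inter_left _ h⟩
        · exact ⟨B, Set.inter_subset_inter_left _ h, subset_rfl⟩)
      (fun A => A.2.2)
      (fun A => ((h1 _ A.2.1).2.inter hCc.1).isCompact)
      (fun A => (h1 _ A.2.1).2.inter hCc.1)
    obtain ⟨x, hx⟩ := this
    rw [Set.mem_iInter] at hx
    obtain ⟨A⟩ := hne
    exact ⟨x, fun B hB => (hx ⟨B, hB⟩).1, (hx A).2⟩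
  · obtain ⟨x, hx⟩ := hC
    exact ⟨x, fun B hB => (hne ⟨⟨B, hB⟩⟩).elim, hx⟩

theorem maxChain_inter_monotone_and_disjoint
    (M : Set (Set CantorSpace)) (hM : IsMaxChainOfClosed M)
    (C D : Set CantorSpace) (hC : C.Nonempty) (hCclopen : IsClopen C)
    (hD : D.Nonempty) (hDclopen : IsClopen D) :
    (C ⊆ D → chainInter M D ⊆ chainInter M C) ∧
    (C ∩ D = ∅ → chainInter M C ≠ chainInter M D) := by
  refine ⟨fun h x hx A hA => hx A ⟨hA.1, hA.2.mono (Set.inter_subset_inter_right _ h)⟩, ?_⟩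
  intro hdis heq
  obtain ⟨x, hxN, hxC⟩ := chainInter_inter_nonempty M hM C hC hCclopen
  obtain ⟨y, hyN, hyD⟩ := chainInter_inter_nonempty M hM D hD hDclopen
  obtain ⟨h1, h2, h3⟩ := hM
  have hxD : x ∉ D := fun h => (Set.mem_empty_iff_false x).1 (hdis ▸ ⟨hxC, h⟩)
  have hcl : IsClosed (chainInter M C \ D) := by
    refine IsClosed.sdiff ?_ hDclopen.2
    exact isClosed_sInter fun A hA => (h1 A hA.1).2
  have hcomp : ∀ A ∈ M, chainInter M C \ D ⊆ A ∨ A ⊆ chainInter M C \ D := by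
    intro A hA
    by_cases hAC : (A ∩ C).Nonempty
    · exact Or.inl fun z hz => hz.1 A ⟨hA, hAC⟩
    by_cases hAD : (A ∩ D).Nonempty
    · exact Or.inl fun z hz => (heq ▸ hz.1 : z ∈ chainInter M D) A ⟨hA, hAD⟩
    refine Or.inr fun z hz => ⟨fun B hB => ?_, fun hzD => hAD ⟨z, hz, hzD⟩⟩
    rcases h2.total hA hB.1 with h | h
    · exact h hz
    · exact (hAC (hB.2.mono (Set.inter_subset_inter_left _ h))).elim
  have hE : chainInter M C \ D ∈ M := by
    have := h3 (insert (chainInter M C \ D) M) ?_ ?_ (Set.subset_insert _ _)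
    · exact this.subset (Set.mem_insert _ _)
    · rintro A (rfl | hA)
      · exact ⟨⟨x, hxN, hxD⟩, hcl⟩
      · exact h1 A hA
    · exact h2.insert fun A hA _ => hcomp A hA
  rw [← heq] at hyN
  exact (hyN _ ⟨hE, x, ⟨hxN, hxD⟩, hxC⟩).2 hyD
end

section
/- Let X be the Cantor space, let M be a maximal chain of nonempty closed subsets of X, and let E ∈ M. If a and b are nonempty clopen subsets of X with a ∩ E = ∅ and b ∩ E ≠ ∅, then M_b is a proper subset of M_a, where M_c = ⋂{M ∈ M : M ∩ c ≠ ∅}. In particular M_b ⊆ E ⊆ M_a and M_a ∩ a ≠ ∅ while M_b ∩ a = ∅. -/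
/-!
STATEMENT 14: Let X be the Cantor space, M a maximal chain of nonempty closed subsets of X,
and E ∈ M. If a, b are nonempty clopen subsets of X with a ∩ E = ∅ and b ∩ E ≠ ∅, then
M_b ⊊ M_a; in particular M_b ⊆ E ⊆ M_a, (M_a ∩ a) ≠ ∅ and M_b ∩ a = ∅.
-/

theorem maxChain_inter_strict_subset
    (M : Set (Set CantorSpace)) (hM : IsMaxChainOfClosed M)
    (E : Set CantorSpace) (hE : E ∈ M)
    (a b : Set CantorSpace)
    (ha : a.Nonempty) (haclopen : IsClopen a)
    (hb : b.Nonempty) (hbclopen : IsClopen b)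
    (haE : a ∩ E = ∅) (hbE : (b ∩ E).Nonempty) :
    chainInter M b ⊂ chainInter M a ∧
    chainInter M b ⊆ E ∧ E ⊆ chainInter M a ∧
    (chainInter M a ∩ a).Nonempty ∧ chainInter M b ∩ a = ∅ := by
  have h1 : chainInter M b ⊆ E := by
    apply Set.sInter_subset_of_mem
    exact ⟨hE, by rwa [Set.inter_comm]⟩
  have h2 : E ⊆ chainInter M a := by
    apply Set.subset_sInter
    rintro A ⟨hA, x, hxA, hxa⟩
    rcases hM.2.1.total hA hE with h | h
    · exact absurd (show x ∈ a ∩ E from ⟨hxa, h hxA⟩) (by simp [haE])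
    · exact h
  have h3 : (chainInter M a ∩ a).Nonempty := by
    rcases Set.eq_empty_or_nonempty {A | A ∈ M ∧ (A ∩ a).Nonempty} with h | h
    · unfold chainInter
      rw [h]
      simpa using ha
    · haveI : Nonempty {A | A ∈ M ∧ (A ∩ a).Nonempty} := h.to_subtype
      have hcl : ∀ A : {A | A ∈ M ∧ (A ∩ a).Nonempty}, IsClosed (A.1 ∩ a) := fun A =>
        (hM.1 A.1 A.2.1).2.inter haclopen.1
      have key := IsCompact.nonempty_iInter_of_directed_nonempty_isCompact_isClosed
        (fun A : {A | A ∈ M ∧ (A ∩ a).Nonempty} => A.1 ∩ a)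
        (by
          intro A B
          rcases hM.2.1.total A.2.1 B.2.1 with h | h
          · exact ⟨A, subset_rfl, Set.inter_subset_inter_left _ h⟩
          · exact ⟨B, Set.inter_subset_inter_left _ h, subset_rfl⟩)
        (fun A => A.2.2) (fun A => (hcl A).isCompact) hcl
      obtain ⟨x, hx⟩ := key
      rw [Set.mem_iInter] at hx
      obtain ⟨A0, hA0⟩ := h
      exact ⟨x, fun A hA => (hx ⟨A, hA⟩).1, (hx ⟨A0, hA0⟩).2⟩
  have h4 : chainInter M b ∩ a = ∅ := by
    rw [Set.eq_empty_iff_forall_notMem]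
    rintro x ⟨hx, hxa⟩
    exact absurd (show x ∈ a ∩ E from ⟨hxa, h1 hx⟩) (by simp [haE])
  refine ⟨⟨h1.trans h2, fun h => ?_⟩, h1, h2, h3, h4⟩
  obtain ⟨x, hx, hxa⟩ := h3
  exact absurd (show x ∈ chainInter M b ∩ a from ⟨h hx, hxa⟩) (by simp [h4])
end

section
/- Let X be a nonempty compact Hausdorff space and let M be a maximal chain of nonempty closed subsets of X. Then ⋂M is a singleton: there exists x ∈ X with ⋂M = {x}. -/
/-!
STATEMENT 15: Let X be a nonempty compact Hausdorff space and M a maximal chain of nonempty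
closed subsets of X. Then ⋂ M is a singleton.
-/

theorem maxChain_sInter_singleton
    {X : Type} [TopologicalSpace X] [CompactSpace X] [T2Space X] [Nonempty X]
    (M : Set (Set X)) (hM : IsMaxChainOfClosed M) :
    ∃ x : X, ⋂₀ M = {x} := by
  obtain ⟨h1, h2, h3⟩ := hM
  have hne : (⋂₀ M).Nonempty := by
    rcases M.eq_empty_or_nonempty with rfl | hMne
    · simp
    · have : Nonempty M := hMne.to_subtype
      refine IsCompact.nonempty_sInter_of_directed_nonempty_isCompact_isClosed
        (S := M) ?_ (fun A hA => (h1 A hA).1) (fun A hA => (h1 A hA).2.isCompact)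
        (fun A hA => (h1 A hA).2)
      intro A hA B hB
      rcases h2.total hA hB with h | h
      · exact ⟨A, hA, subset_rfl, h⟩
      · exact ⟨B, hB, h, subset_rfl⟩
  obtain ⟨x, hx⟩ := hne
  refine ⟨x, ?_⟩
  have hmem : ({x} : Set X) ∈ M := by
    rw [← h3 (insert {x} M) ?_ ?_ (Set.subset_insert _ _)]
    · exact Set.mem_insert _ _
    · rintro A (rfl | hA)
      · exact ⟨Set.singleton_nonempty x, isClosed_singleton⟩
      · exact h1 A hA
    · exact h2.insert fun B hB _ => Or.inl (Set.singleton_subset_iff.2 (hx B hB))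
  exact Set.Subset.antisymm (Set.sInter_subset_of_mem hmem) (Set.singleton_subset_iff.2 hx)
end

section
/- Dual Ramsey Theorem (Graham–Rothschild): the class of finite Boolean algebras satisfies the Ramsey property: for all finite Boolean algebras A and B such that A embeds into B, and every integer k ≥ 2, there exists a finite Boolean algebra C such that for every coloring of the Boolean subalgebras of C isomorphic to A with k colors, there exists a Boolean subalgebra B' of C isomorphic to B such that all Boolean subalgebras of B' isomorphic to A receive the same color. -/
/-- A bundled finite Boolean algebra. -/
structure FiniteBoolAlg : Type 1 where
  carrier : Type
  [ba : BooleanAlgebra carrier]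
  [fin : Fintype carrier]

attribute [instance] FiniteBoolAlg.ba FiniteBoolAlg.fin

/-- An embedding of Boolean algebras: an injective map preserving `⊔`, `⊓`, `ᶜ`, `⊥`, `⊤`. -/
def IsBoolEmb {α β : Type} [BooleanAlgebra α] [BooleanAlgebra β] (f : α → β) : Prop :=
  Function.Injective f ∧
  (∀ x y : α, f (x ⊔ y) = f x ⊔ f y) ∧
  (∀ x y : α, f (x ⊓ y) = f x ⊓ f y) ∧
  (∀ x : α, f xᶜ = (f x)ᶜ) ∧
  f ⊥ = ⊥ ∧ f ⊤ = ⊤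

/-- `S` is a Boolean subalgebra of `C` isomorphic to `A`, i.e. a copy of `A` in `C`:
the image of an embedding of `A` into `C`. -/
def IsCopyOf (A : FiniteBoolAlg) {C : Type} [BooleanAlgebra C] (S : Set C) : Prop :=
  ∃ f : A.carrier → C, IsBoolEmb f ∧ Set.range f = S

/-!
STATEMENT 16 (Dual Ramsey Theorem, Graham–Rothschild): the class of finite Boolean algebras
satisfies the Ramsey property: for all finite Boolean algebras A and B such that A embeds
into B, and every integer k ≥ 2, there exists a finite Boolean algebra C such that for every
coloring of the Boolean subalgebras of C isomorphic to A with k colors, there is a Boolean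
subalgebra B' of C isomorphic to B all of whose Boolean subalgebras isomorphic to A receive
the same color.
-/


/-- `Rig a l b`: reading `l` with `a` letters known, every letter is either known or
the next new one; at the end `b` letters are known. -/
inductive Rig_s16 : ℕ → List ℕ → ℕ → Prop
  | nil (a : ℕ) : Rig_s16 a [] a
  | old {a x b : ℕ} {l : List ℕ} : x < a → Rig_s16 a l b → Rig_s16 a (x :: l) b
  | new {a b : ℕ} {l : List ℕ} : Rig_s16 (a + 1) l b → Rig_s16 a (a :: l) b

theorem Rig_s16.le {a b : ℕ} {l : List ℕ} (h : Rig_s16 a l b) : a ≤ b := by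
  induction h <;> omega

theorem Rig_s16.mem_lt {a b : ℕ} {l : List ℕ} (h : Rig_s16 a l b) : ∀ x ∈ l, x < b := by
  induction h with
  | nil => simp
  | old hx h ih => have := h.le; intro y hy; rcases List.mem_cons.1 hy with rfl | hy; omega; exact ih _ hy
  | new h ih => have := h.le; intro y hy; rcases List.mem_cons.1 hy with rfl | hy; omega; exact ih _ hy

theorem Rig_s16.append {a b c : ℕ} {p q : List ℕ} (h : Rig_s16 a p b) (h' : Rig_s16 b q c) :
    Rig_s16 a (p ++ q) c := by
  induction h with
  | nil => simpa
  | old hx h ih => exact .old hx (ih h')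
  | new h ih => exact .new (ih h')

theorem Rig_s16.of_lt {a : ℕ} {l : List ℕ} (h : ∀ x ∈ l, x < a) : Rig_s16 a l a := by
  induction l with
  | nil => exact .nil _
  | cons x l ih => exact .old (h x (by simp)) (ih fun y hy => h y (by simp [hy]))

theorem Rig_s16.of_mem {a : ℕ} {l : List ℕ} (h : ∀ x ∈ l, x ≤ a) (ha : a ∈ l) : Rig_s16 a l (a + 1) := by
  induction l with
  | nil => simp at ha
  | cons x l ih =>
    rcases (h x (by simp)).lt_or_eq with hx | rfl
    · refine .old hx (ih (fun y hy => h y (by simp [hy])) ?_)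
      rcases List.mem_cons.1 ha with h | h
      · omega
      · exact h
    · exact .new (.of_lt fun y hy => Nat.lt_succ_of_le (h y (by simp [hy])))

theorem Rig_s16.decomp {a b : ℕ} {l : List ℕ} (h : Rig_s16 a l b) : ∀ c, a ≤ c → c < b →
    ∃ p q, l = p ++ c :: q ∧ Rig_s16 a p c ∧ Rig_s16 (c + 1) q b := by
  induction h with
  | nil => intro c h1 h2; omega
  | @old a x b l hx h ih =>
    intro c h1 h2
    obtain ⟨p, q, rfl, hp, hq⟩ := ih c h1 h2
    exact ⟨x :: p, q, rfl, .old hx hp, hq⟩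
  | @new a b l h ih =>
    intro c h1 h2
    rcases h1.lt_or_eq with h1 | rfl
    · obtain ⟨p, q, rfl, hp, hq⟩ := ih c h1 h2
      exact ⟨a :: p, q, rfl, .new hp, hq⟩
    · exact ⟨[], l, rfl, .nil _, h⟩

theorem Rig_s16.map {b b' : ℕ} {W : List ℕ} (h : Rig_s16 b W b') (σ : ℕ → ℕ) : ∀ c c',
    (∀ x < b, σ x < c) → Rig_s16 c ((List.range' b (b' - b)).map σ) c' → Rig_s16 c (W.map σ) c' := by
  induction h with
  | nil => intro c c' h1 h2; simpa using h2
  | old hx h ih => intro c c' h1 h2; exact .old (h1 _ hx) (ih _ _ h1 h2)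
  | @new a b l h ih =>
    intro c c' h1 h2
    have hle := h.le
    obtain ⟨t, ht⟩ : ∃ t, b - a = t + 1 := ⟨b - a - 1, by omega⟩
    have ht' : b - (a + 1) = t := by omega
    rw [ht] at h2
    rw [ht'] at ih
    simp only [List.range'_succ, List.map_cons] at h2 ⊢
    generalize hy : σ a = y at h2 ⊢
    cases h2 with
    | old hx h2 =>
      refine .old hx (ih _ _ (fun x hx' => ?_) h2)
      rcases Nat.lt_succ_iff_lt_or_eq.1 hx' with h | rfl
      · exact h1 _ h
      · omega
    | new h2 =>
      refine .new (ih _ _ (fun x hx' => ?_) h2)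
      rcases Nat.lt_succ_iff_lt_or_eq.1 hx' with h | rfl
      · exact Nat.lt_succ_of_lt (h1 _ h)
      · omega

/-- Substitution of `v` for the variables `a, a+1, …`. -/
def sub (a : ℕ) (v : List ℕ) (x : ℕ) : ℕ := if x < a then x else v.getD (x - a) 0

def shift (a x : ℕ) : ℕ := if x < a then x else x + 1

theorem Rig_s16.shift {a b b' : ℕ} {l : List ℕ} (h : Rig_s16 b l b') (hab : a ≤ b) :
    Rig_s16 (b + 1) (l.map (shift a)) (b' + 1) := by
  induction h with
  | nil => exact .nil _
  | old hx h ih => refine .old ?_ (ih hab); unfold _root_.shift; split <;> omega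
  | @new c b l h ih =>
    have : _root_.shift a c = c + 1 := by unfold _root_.shift; split <;> omega
    rw [List.map_cons, this]
    exact .new (ih (by omega))

theorem sub_shift (a b x : ℕ) (u : List ℕ) : sub a (b :: u) (shift a x) = sub a u x := by
  unfold sub shift
  by_cases h : x < a
  · simp [h]
  · have : x + 1 - a = (x - a) + 1 := by omega
    have h' : ¬ (x + 1 < a) := by omega
    simp [h, this, h']

theorem sub_self_cons (a x : ℕ) (s : List ℕ) : sub a (a :: s) x = sub (a + 1) s x := by
  unfold sub
  rcases lt_trichotomy x a with h | rfl | h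
  · have : x < a + 1 := by omega
    simp [h, this]
  · simp
  · have h1 : ¬ x < a := by omega
    have h2 : ¬ x < a + 1 := by omega
    have : x - a = (x - (a + 1)) + 1 := by omega
    rw [if_neg h1, if_neg h2, this]; simp

theorem sub_comp {a : ℕ} (ha : 0 < a) (u v : List ℕ) (x : ℕ) :
    sub a u (sub a v x) = sub a (v.map (sub a u)) x := by
  by_cases h : x < a
  · simp [sub, h]
  · have e1 : sub a v x = v.getD (x - a) 0 := by simp [sub, h]
    have e2 : sub a (v.map (sub a u)) x = (v.map (sub a u)).getD (x - a) 0 := by simp [sub, h]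
    rw [e1, e2]
    have : (0 : ℕ) = sub a u 0 := by simp [sub, ha]
    conv_rhs => rw [this]
    rw [List.getD_map]

theorem map_sub_sub {a : ℕ} (ha : 0 < a) (u v W : List ℕ) :
    (W.map (sub a v)).map (sub a u) = W.map (sub a (v.map (sub a u))) := by
  rw [List.map_map]; exact List.map_congr_left fun x _ => sub_comp ha u v x

theorem sub_append {a x : ℕ} (u s : List ℕ) (hx : x < a + u.length) :
    sub a (u ++ s) x = sub a u x := by
  unfold sub
  split
  · rfl
  · rw [List.getD_append]; omega

theorem map_sub_append {a b : ℕ} {p : List ℕ} (u s : List ℕ) (h : Rig_s16 a p b)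
    (hb : b ≤ a + u.length) : p.map (sub a (u ++ s)) = p.map (sub a u) :=
  List.map_congr_left fun x hx => sub_append u s (by have := h.mem_lt x hx; omega)

theorem range'_map_sub (a : ℕ) (u v : List ℕ) :
    (List.range' (a + u.length) v.length).map (sub a (u ++ v)) = v := by
  apply List.ext_getElem
  · simp
  · intro i h1 h2
    have : a + u.length + i - a = u.length + i := by omega
    simp [sub, this, List.getD_eq_getElem?_getD, h2]
    omega

/-- Composition, in a position where the prefix `u` has been read. -/
theorem Rig_s16.comp_aux {a b b' c c' : ℕ} {q u v : List ℕ} (hq : Rig_s16 b q b')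
    (hb : b = a + u.length) (hb' : b' = b + v.length) (hu : Rig_s16 a u c) (hv : Rig_s16 c v c') :
    Rig_s16 c (q.map (sub a (u ++ v))) c' := by
  subst hb hb'
  refine hq.map _ _ _ ?_ ?_
  · intro x hx
    rw [sub_append _ _ hx]
    unfold sub
    split
    · have := hu.le; omega
    · rw [List.getD_eq_getElem _ _ (by omega)]
      exact hu.mem_lt _ (List.getElem_mem _)
  · rw [Nat.add_sub_cancel_left, range'_map_sub]
    exact hv

theorem Rig_s16.comp {a b c : ℕ} {W v : List ℕ} (hW : Rig_s16 a W b) (hb : b = a + v.length)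
    (hv : Rig_s16 a v c) : Rig_s16 a (W.map (sub a v)) c := by
  simpa using hW.comp_aux (u := []) (by simp) hb (.nil a) hv

theorem Rig_s16.comp_split {a j n m : ℕ} {p q u s : List ℕ} (hp : Rig_s16 a p (a + j))
    (hq : Rig_s16 (a + j + 1) q (a + n)) (hu : Rig_s16 a u a) (hs : Rig_s16 (a + 1) s (a + 1 + m))
    (hj : u.length = j) (hn : (u ++ a :: s).length = n) :
    (p ++ (a + j) :: q).map (sub a (u ++ a :: s)) =
      p.map (sub a u) ++ a :: q.map (sub a (u ++ a :: s)) ∧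
    Rig_s16 a (p.map (sub a u)) a ∧ Rig_s16 (a + 1) (q.map (sub a (u ++ a :: s))) (a + 1 + m) := by
  refine ⟨?_, hp.comp (by omega) hu, ?_⟩
  · rw [List.map_append, List.map_cons, map_sub_append _ _ hp (by omega)]
    congr 2
    simp [sub, ← hj]
  · have : u ++ a :: s = (u ++ [a]) ++ s := by simp
    rw [this]
    refine hq.comp_aux ?_ ?_ (hu.append (.new (.nil _))) hs
    · simp; omega
    · simp at hn; omega

theorem rig_vec {a L : ℕ} {y : List ℕ} (h : Rig_s16 a y a) (hL : y.length = L) :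
    ∃ f : Fin L → Fin a, List.ofFn (fun i => (f i : ℕ)) = y := by
  subst hL
  exact ⟨fun i => ⟨y[i], h.mem_lt _ (List.getElem_mem _)⟩, by simp⟩

theorem hj_one (a : ℕ) (K : Type) [Finite K] : ∃ L, ∀ c : List ℕ → K, ∃ l : List ℕ,
    l.length = L ∧ Rig_s16 a l (a + 1) ∧
    ∀ b b', b < a → b' < a → c (l.map (sub a [b])) = c (l.map (sub a [b'])) := by
  obtain ⟨ι, _, h⟩ := Combinatorics.Line.exists_mono_in_high_dimension (Fin a) K
  let e := (Fintype.equivFin ι).symm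
  refine ⟨Fintype.card ι, fun c => ?_⟩
  obtain ⟨l, k, hl⟩ := h fun f => c (List.ofFn fun i => (f (e i) : ℕ))
  let W : List ℕ := List.ofFn fun i => ((l.idxFun (e i)).elim a (fun x => (x : ℕ)))
  have key : ∀ b (hb : b < a), c (W.map (sub a [b])) = k := by
    intro b hb
    rw [← hl ⟨b, hb⟩]
    congr 1
    simp only [W, List.map_ofFn]
    congr 1
    funext i
    simp only [Function.comp, Combinatorics.Line.apply_def]
    cases hx : l.idxFun (e i) <;> simp [sub]
  refine ⟨W, by simp [W], .of_mem ?_ ?_, fun b b' hb hb' => (key b hb).trans (key b' hb').symm⟩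
  · intro x hx
    simp only [W, List.mem_ofFn] at hx
    obtain ⟨i, rfl⟩ := hx
    cases hx : l.idxFun (e i) with
    | none => simp
    | some y => simp
  · obtain ⟨i, hi⟩ := l.proper
    simp only [W, List.mem_ofFn]
    exact ⟨e.symm i, by simp [hi]⟩

theorem rig_replicate {a : ℕ} (ha : 0 < a) (j : ℕ) : Rig_s16 a (List.replicate j 0) a :=
  .of_lt fun x hx => by rw [List.eq_of_mem_replicate hx]; exact ha

/-- Colour of a word prefix depends only on the number of variables in the prefix. -/
theorem prefix_lemma (a : ℕ) (ha : 0 < a) (n : ℕ) : ∀ (K : Type) [Finite K], ∃ N,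
    ∀ c : List ℕ → K, ∃ W : List ℕ, W.length = N ∧ Rig_s16 a W (a + n) ∧
    ∀ j ≤ n, ∃ p q, W = p ++ q ∧ Rig_s16 a p (a + j) ∧ (j = n → q = []) ∧
      (j < n → ∃ q', q = (a + j) :: q' ∧ Rig_s16 (a + j + 1) q' (a + n)) ∧
      ∀ u₁ u₂ : List ℕ, u₁.length = j → u₂.length = j → Rig_s16 a u₁ a → Rig_s16 a u₂ a →
        c (p.map (sub a u₁)) = c (p.map (sub a u₂)) := by
  induction n with
  | zero =>
    intro K _
    refine ⟨0, fun c => ⟨[], rfl, .nil _, fun j hj => ⟨[], [], rfl, ?_, fun _ => rfl, ?_, ?_⟩⟩⟩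
    · obtain rfl : j = 0 := by omega
      exact .nil _
    · intro h; omega
    · intros; rfl
  | succ n ih =>
    intro K _
    obtain ⟨L, hL⟩ := hj_one a (Fin (n + 1) → K)
    obtain ⟨N, hN⟩ := ih ((Fin L → Fin a) → K)
    refine ⟨L + N, fun c => ?_⟩
    obtain ⟨W', hW'l, hW', hpre⟩ := hN fun w y => c (List.ofFn (fun i => (y i : ℕ)) ++ w)
    choose! p q hpq hp hq1 hq2 hmono using hpre
    obtain ⟨l, hll, hl, hlm⟩ := hL fun y j => c (y ++ (p j).map (sub a (List.replicate j 0)))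
    obtain ⟨l1, l2, hl12, hl1, hl2⟩ := hl.decomp a le_rfl (by omega)
    refine ⟨l ++ W'.map (shift a), by simp [hll, hW'l], ?_, ?_⟩
    · exact hl.append (hW'.shift le_rfl)
    · intro j hj
      cases j with
      | zero =>
        refine ⟨l1, a :: l2 ++ W'.map (shift a), by simp [hl12], hl1, by omega, ?_, ?_⟩
        · intro _
          exact ⟨_, rfl, hl2.append (hW'.shift le_rfl)⟩
        · intro u₁ u₂ h1 h2 _ _
          rw [List.length_eq_zero_iff] at h1 h2
          rw [h1, h2]
      | succ j =>
        have hj' : j ≤ n := by omega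
        refine ⟨l ++ (p j).map (shift a), (q j).map (shift a), ?_, ?_, ?_, ?_, ?_⟩
        · conv_lhs => rw [hpq j hj']
          simp
        · exact hl.append ((hp j hj').shift le_rfl)
        · intro h; rw [hq1 j hj' (by omega)]; rfl
        · intro h
          obtain ⟨q', h1, h2⟩ := hq2 j hj' (by omega)
          refine ⟨q'.map (shift a), ?_, ?_⟩
          · rw [h1, List.map_cons]
            congr 1
            simp [shift]; omega
          · exact h2.shift (by omega)
        · have key : ∀ b u, b < a → u.length = j → Rig_s16 a u a →
              c ((l ++ (p j).map (shift a)).map (sub a (b :: u))) =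
              c (l.map (sub a [b]) ++ (p j).map (sub a (List.replicate j 0))) := by
            intro b u hb hu hua
            have e1 : (l ++ (p j).map (shift a)).map (sub a (b :: u)) =
                l.map (sub a [b]) ++ (p j).map (sub a u) := by
              rw [List.map_append, List.map_map]
              congr 1
              · exact map_sub_append [b] u hl (by simp)
              · exact List.map_congr_left fun x _ => sub_shift a b x u
            rw [e1]
            have hr : Rig_s16 a (l.map (sub a [b])) a := hl.comp (by simp) (.old hb (.nil _))
            obtain ⟨f, hf⟩ := rig_vec hr (by simpa using hll)
            have := congrFun (hmono j hj' u (List.replicate j 0) hu (by simp) hua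
              (rig_replicate ha j)) f
            simpa only [hf] using this
          rintro (_ | ⟨b₁, u₁⟩) (_ | ⟨b₂, u₂⟩) h1 h2 h3 h4
          · simp at h1
          · simp at h1
          · simp at h2
          · have hb₁ := h3.mem_lt b₁ (by simp)
            have hb₂ := h4.mem_lt b₂ (by simp)
            rw [key b₁ u₁ hb₁ (by simpa using h1) (.of_lt fun x hx => h3.mem_lt x (by simp [hx])),
              key b₂ u₂ hb₂ (by simpa using h2) (.of_lt fun x hx => h4.mem_lt x (by simp [hx]))]
            exact congrFun (hlm b₁ b₂ hb₁ hb₂) ⟨j, by omega⟩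

/-- The Graham–Rothschild statement for `m` parameters. -/
def GR (m : ℕ) : Prop := ∀ a, 0 < a → ∀ (n : ℕ) (K : Type) [Finite K], ∃ N, ∀ χ : List ℕ → K,
  ∃ W : List ℕ, W.length = N ∧ Rig_s16 a W (a + n) ∧ ∀ v₁ v₂ : List ℕ, v₁.length = n → v₂.length = n →
    Rig_s16 a v₁ (a + m) → Rig_s16 a v₂ (a + m) → χ (W.map (sub a v₁)) = χ (W.map (sub a v₂))

theorem gr_zero : GR 0 := by
  intro a ha n K _
  obtain ⟨N, hN⟩ := prefix_lemma a ha n K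
  refine ⟨N, fun χ => ?_⟩
  obtain ⟨W, h1, h2, h3⟩ := hN χ
  obtain ⟨p, q, h4, h5, h6, -, h7⟩ := h3 n le_rfl
  obtain rfl := h6 rfl
  obtain rfl : W = p := by simpa using h4
  exact ⟨W, h1, h2, fun v₁ v₂ e1 e2 r1 r2 => h7 v₁ v₂ e1 e2 r1 r2⟩

theorem tail_lemma {m : ℕ} (hm : GR m) (a : ℕ) (ha : 0 < a) (n : ℕ) :
    ∀ (K : Type) [Finite K], ∃ N, ∀ χ : List ℕ → K,
    ∃ W : List ℕ, W.length = N ∧ Rig_s16 a W (a + n) ∧ ∀ u s₁ s₂ : List ℕ, Rig_s16 a u a →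
      u.length + 1 + s₁.length = n → u.length + 1 + s₂.length = n →
      Rig_s16 (a + 1) s₁ (a + 1 + m) → Rig_s16 (a + 1) s₂ (a + 1 + m) →
      χ (W.map (sub a (u ++ a :: s₁))) = χ (W.map (sub a (u ++ a :: s₂))) := by
  induction n with
  | zero =>
    intro K _
    exact ⟨0, fun χ => ⟨[], rfl, .nil _, fun _ _ _ _ _ _ _ _ => rfl⟩⟩
  | succ n ih =>
    intro K _
    obtain ⟨N', hN'⟩ := ih (Fin a → K)
    obtain ⟨M, hM⟩ := hm (a + 1) (by omega) N' K
    refine ⟨M + 1, fun χ => ?_⟩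
    obtain ⟨W₀, hW₀l, hW₀, hW₀m⟩ := hM fun s => χ (a :: s)
    have hW₁ : Rig_s16 a (a :: W₀) (a + (N' + 1)) := by
      have : a + (N' + 1) = a + 1 + N' := by omega
      rw [this]; exact .new hW₀
    obtain ⟨W₂, hW₂l, hW₂, hW₂m⟩ := hN' fun w b => χ ((a :: W₀).map (sub a (b :: w)))
    have hS : Rig_s16 (a + 1) (W₂.map (shift a)) (a + 1 + n) := by
      have := hW₂.shift (le_refl a)
      rwa [show a + n + 1 = a + 1 + n by omega] at this
    have hV : Rig_s16 a (a :: W₂.map (shift a)) (a + (n + 1)) := by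
      have : a + (n + 1) = a + 1 + n := by omega
      rw [this]; exact .new hS
    refine ⟨(a :: W₀).map (sub a (a :: W₂.map (shift a))), by simp [hW₀l],
      hW₁.comp (by simp [hW₂l]) hV, ?_⟩
    intro u s₁ s₂ hu h1 h2 r1 r2
    rw [map_sub_sub ha, map_sub_sub ha]
    cases u with
    | nil =>
      have key : ∀ s, (a :: W₀).map (sub a ((a :: W₂.map (shift a)).map (sub a ([] ++ a :: s)))) =
          a :: W₀.map (sub (a + 1) ((W₂.map (shift a)).map (sub (a + 1) s))) := by
        intro s
        have e : sub a (a :: s) = sub (a + 1) s := funext fun x => sub_self_cons a x s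
        have e2 : sub (a + 1) s a = a := by simp [sub]
        rw [List.nil_append, e, List.map_cons (f := sub (a + 1) s), e2]
        have e3 : ∀ t, sub a (a :: t) = sub (a + 1) t := fun t => funext fun x => sub_self_cons a x t
        rw [e3, List.map_cons]
        congr 1
        simp [sub]
      rw [key, key]
      simp only [List.length_nil] at h1 h2
      exact hW₀m _ _ (by simp [hW₂l]) (by simp [hW₂l]) (hS.comp (by omega) r1)
        (hS.comp (by omega) r2)
    | cons b u =>
      have hb := hu.mem_lt b (by simp)
      have key : ∀ s, (a :: W₂.map (shift a)).map (sub a (b :: u ++ a :: s)) =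
          b :: W₂.map (sub a (u ++ a :: s)) := by
        intro s
        rw [List.map_cons, List.map_map]
        congr 1
        · simp [sub]
        · exact List.map_congr_left fun x _ => sub_shift a b x _
      rw [key, key]
      simp only [List.length_cons] at h1 h2
      exact congrFun (hW₂m u s₁ s₂ (.of_lt fun x hx => hu.mem_lt x (by simp [hx])) (by omega)
        (by omega) r1 r2) ⟨b, hb⟩

theorem pigeon_s16 (a : ℕ) (ha : 0 < a) (n : ℕ) (K : Type) [Finite K] : ∃ N, ∀ c : ℕ → K,
    ∃ V : List ℕ, V.length = N ∧ Rig_s16 a V (a + n) ∧ ∃ k, ∀ i < n, ∃ p q,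
      V = p ++ (a + i) :: q ∧ Rig_s16 a p (a + i) ∧ Rig_s16 (a + i + 1) q (a + n) ∧ c p.length = k := by
  classical
  have := Fintype.ofFinite K
  refine ⟨Fintype.card K * n + 1, fun c => ?_⟩
  set N := Fintype.card K * n + 1 with hN
  obtain ⟨k, -, hk⟩ := Finset.exists_lt_card_fiber_of_mul_lt_card_of_maps_to
    (s := Finset.range N) (t := Finset.univ) (f := c) (n := n) (by simp) (by simp [hN])
  obtain ⟨J, hJ, hJc⟩ := Finset.exists_subset_card_eq hk.le
  let g : ℕ → ℕ := fun t => if t ∈ J then a + (J.filter (· < t)).card else 0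
  have hr : ∀ t, Rig_s16 a ((List.range t).map g) (a + (J.filter (· < t)).card) := by
    intro t
    induction t with
    | zero => simpa using Rig_s16.nil a
    | succ t ih =>
      rw [List.range_succ, List.map_append]
      refine ih.append ?_
      by_cases ht : t ∈ J
      · have e : (J.filter (· < t + 1)).card = (J.filter (· < t)).card + 1 := by
          rw [← Finset.card_insert_of_notMem (a := t) (by simp)]
          congr 1
          ext x
          simp only [Finset.mem_filter, Finset.mem_insert]
          constructor
          · rintro ⟨h1, h2⟩
            by_cases hx : x = t
            · exact .inl hx
            · exact .inr ⟨h1, by omega⟩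
          · rintro (rfl | ⟨h1, h2⟩)
            · exact ⟨ht, by omega⟩
            · exact ⟨h1, by omega⟩
        rw [e]
        simp only [List.map_cons, List.map_nil, g, if_pos ht]
        exact .new (.nil _)
      · have e : J.filter (· < t + 1) = J.filter (· < t) := by
          refine Finset.filter_congr fun x hx => ?_
          have : x ≠ t := fun h => ht (h ▸ hx)
          omega
        rw [e]
        simp only [List.map_cons, List.map_nil, g, if_neg ht]
        exact .old (by omega) (.nil _)
  have hV := hr N
  have e : J.filter (· < N) = J := by
    refine Finset.filter_true_of_mem fun x hx => ?_
    have := hJ hx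
    simp at this
    exact this.1
  rw [e, hJc] at hV
  refine ⟨_, by simp, hV, k, fun i hi => ?_⟩
  obtain ⟨p, q, h1, h2, h3⟩ := hV.decomp (a + i) (by omega) (by omega)
  refine ⟨p, q, h1, h2, h3, ?_⟩
  have hlt : p.length < ((List.range N).map g).length := by rw [h1]; simp
  have hget : ((List.range N).map g)[p.length] = a + i := by
    simp only [h1]; simp
  have hpJ : p.length ∈ J := by
    by_contra h
    simp [g, h] at hget
    omega
  have := hJ hpJ
  simp at this
  exact this.2

theorem gr_succ {m : ℕ} (hm : GR m) : GR (m + 1) := by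
  intro a ha n K _
  obtain ⟨n₃, h₃⟩ := pigeon_s16 a ha n K
  obtain ⟨n₂, h₂⟩ := prefix_lemma a ha n₃ K
  obtain ⟨N, h₁⟩ := tail_lemma hm a ha n₂ K
  refine ⟨N, fun χ => ?_⟩
  obtain ⟨W₁, hl₁, hW₁, hm₁⟩ := h₁ χ
  let P : List ℕ → List ℕ → Prop := fun u s =>
    u.length + 1 + s.length = n₂ ∧ Rig_s16 (a + 1) s (a + 1 + m)
  let c : List ℕ → K := fun u => χ (W₁.map (sub a (u ++ a :: Classical.epsilon (P u))))
  have hc : ∀ u s, Rig_s16 a u a → P u s → χ (W₁.map (sub a (u ++ a :: s))) = c u := by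
    intro u s hu hs
    have := Classical.epsilon_spec (p := P u) ⟨s, hs⟩
    exact hm₁ u _ _ hu hs.1 this.1 hs.2 this.2
  obtain ⟨W₂, hl₂, hW₂, hm₂⟩ := h₂ c
  choose! p q hpq hp hq1 hq2 hmono using hm₂
  obtain ⟨W₃, hl₃, hW₃, k, hm₃⟩ := h₃ fun t => c ((p t).map (sub a (List.replicate t 0)))
  have hW₂₃ : Rig_s16 a (W₂.map (sub a W₃)) (a + n) := hW₂.comp (by omega) hW₃
  refine ⟨W₁.map (sub a (W₂.map (sub a W₃))), by simp [hl₁], hW₁.comp (by simp [hl₂]) hW₂₃, ?_⟩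
  suffices key : ∀ v : List ℕ, v.length = n → Rig_s16 a v (a + (m + 1)) →
      χ ((W₁.map (sub a (W₂.map (sub a W₃)))).map (sub a v)) = k by
    intro v₁ v₂ e1 e2 r1 r2
    rw [key _ e1 r1, key _ e2 r2]
  intro v hv hr
  rw [map_sub_sub ha, map_sub_sub ha]
  obtain ⟨u, s, rfl, hu, hs⟩ := hr.decomp a le_rfl (by omega)
  have hs' : Rig_s16 (a + 1) s (a + 1 + m) := by
    rwa [show a + (m + 1) = a + 1 + m by omega] at hs
  have hi : u.length < n := by rw [← hv]; simp
  obtain ⟨p₃, q₃, hpq₃, hp₃, hq₃, hk⟩ := hm₃ u.length hi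
  obtain ⟨e₃, hu₃, hs₃⟩ := hp₃.comp_split hq₃ hu hs' rfl hv
  rw [← hpq₃] at e₃
  rw [e₃]
  generalize hs₃e : q₃.map (sub a (u ++ a :: s)) = s₃ at *
  have hlen : (p₃.map (sub a u) ++ a :: s₃).length = n₃ := by
    rw [← e₃]; simpa using hl₃
  have ht : p₃.length < n₃ := by rw [← hlen]; simp
  obtain ⟨q', hq', hqr⟩ := hq2 p₃.length ht.le ht
  obtain ⟨e₂, hu₂, hs₂⟩ := (hp _ ht.le).comp_split hqr hu₃ hs₃ (by simp) hlen
  rw [← hq', ← hpq _ ht.le] at e₂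
  rw [e₂, hc _ _ hu₂ ⟨?_, hs₂⟩, ← hk]
  · exact hmono _ ht.le _ _ (by simp) (by simp) hu₃ (rig_replicate ha _)
  · have := congrArg List.length e₂
    simp at this
    simp
    omega

theorem gr_all (m : ℕ) : GR m := by
  induction m with
  | zero => exact gr_zero
  | succ m ih => exact gr_succ ih

theorem exists_iso (A : Type) [BooleanAlgebra A] [Fintype A] :
    ∃ (α : Type) (_ : Fintype α), Nonempty (A ≃o Set α) := by
  classical
  let _ := Fintype.toCompleteAtomicBooleanAlgebra A
  exact ⟨{a : A // IsAtom a}, inferInstance, ⟨CompleteAtomicBooleanAlgebra.toSetOfIsAtom⟩⟩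

theorem exists_dual {A ι α : Type} [BooleanAlgebra A] [Fintype A] (e : A ≃o Set α)
    (f : A → Set ι) (hf : IsBoolEmb f) :
    ∃ φ : ι → α, Function.Surjective φ ∧ ∀ x i, i ∈ f x ↔ φ i ∈ e x := by
  obtain ⟨hinj, hsup, hinf, hcompl, hbot, htop⟩ := hf
  have key : ∀ i, ∃ t, ∀ x, i ∈ f x ↔ t ∈ e x := by
    intro i
    obtain ⟨x, hx⟩ := Set.Finite.exists_minimal (Set.toFinite {x : A | i ∈ f x})
      ⟨⊤, by simp [htop]⟩
    have hxi : i ∈ f x := hx.1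
    have h : ∀ y, i ∈ f y ↔ x ≤ y := by
      intro y
      constructor
      · intro hy
        have : i ∈ f (x ⊓ y) := by rw [hinf]; exact ⟨hxi, hy⟩
        exact (hx.2 this inf_le_left).trans inf_le_right
      · intro hy
        rw [← sup_eq_right.2 hy, hsup]
        exact .inl hxi
    have hne : (e x).Nonempty := by
      by_contra hne
      rw [Set.not_nonempty_iff_eq_empty] at hne
      have : x = ⊥ := by
        apply e.injective; rw [hne, map_bot]; rfl
      rw [this, hbot] at hxi
      exact hxi
    obtain ⟨t, ht⟩ := hne
    refine ⟨t, fun y => ⟨fun hy => e.monotone ((h y).1 hy) ht, fun hy => ?_⟩⟩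
    by_contra hn
    have h1 : i ∈ f yᶜ := by rw [hcompl]; exact hn
    have h2 := e.monotone ((h _).1 h1) ht
    rw [map_compl] at h2
    exact h2 hy
  choose φ hφ using key
  refine ⟨φ, fun t => ?_, fun x i => hφ i x⟩
  have : f (e.symm {t}) ≠ ∅ := by
    intro h
    have h' : f (e.symm {t}) = f ⊥ := by rw [h, hbot]; rfl
    have := congrArg e (hinj h')
    rw [OrderIso.apply_symm_apply, map_bot] at this
    exact Set.singleton_ne_empty t this
  obtain ⟨i, hi⟩ := Set.nonempty_iff_ne_empty.2 this
  refine ⟨i, ?_⟩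
  have := (hφ i _).1 hi
  simpa using this

/-- Sets saturated for the kernel of `φ`. -/
def Sat {ι β : Type} (φ : ι → β) : Set (Set ι) := {S | ∀ i j, φ i = φ j → (i ∈ S ↔ j ∈ S)}

theorem range_eq_sat {A ι α : Type} [BooleanAlgebra A] (e : A ≃o Set α)
    (f : A → Set ι) (φ : ι → α) (h : ∀ x i, i ∈ f x ↔ φ i ∈ e x) : Set.range f = Sat φ := by
  ext S
  constructor
  · rintro ⟨x, rfl⟩ i j hij
    rw [h, h, hij]
  · intro hS
    refine ⟨e.symm (Set.image φ S), ?_⟩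
    ext i
    rw [h, OrderIso.apply_symm_apply]
    constructor
    · rintro ⟨j, hj, hij⟩
      exact (hS _ _ hij).1 hj
    · intro hi
      exact ⟨i, hi, rfl⟩

theorem rigidify {α : Type} [DecidableEq α] (l : List α) :
    ∃ σ : α → ℕ, (∀ x ∈ l, ∀ y ∈ l, σ x = σ y → x = y) ∧ Rig_s16 0 (l.map σ) l.toFinset.card := by
  induction l using List.reverseRecOn with
  | nil => exact ⟨fun _ => 0, by simp, by simpa using Rig_s16.nil 0⟩
  | append_singleton l x ih =>
    obtain ⟨σ, h1, h2⟩ := ih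
    by_cases hx : x ∈ l
    · refine ⟨σ, ?_, ?_⟩
      · intro y hy z hz
        have hy : y ∈ l := by simp at hy; rcases hy with h | rfl <;> assumption
        have hz : z ∈ l := by simp at hz; rcases hz with h | rfl <;> assumption
        exact h1 y hy z hz
      · have e : (l ++ [x]).toFinset = l.toFinset := by
          ext y; simp; rintro rfl; exact hx
        rw [e, List.map_append]
        exact h2.append (.old (h2.mem_lt _ (List.mem_map_of_mem hx)) (.nil _))
    · have hlt : ∀ y ∈ l, σ y < l.toFinset.card := fun y hy => h2.mem_lt _ (List.mem_map_of_mem hy)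
      refine ⟨Function.update σ x l.toFinset.card, ?_, ?_⟩
      · have hu : ∀ y ∈ l, Function.update σ x l.toFinset.card y = σ y := by
          intro y hy
          exact Function.update_of_ne (by rintro rfl; exact hx hy) _ _
        intro y hy z hz hyz
        simp only [List.mem_append, List.mem_singleton] at hy hz
        rcases hy with hy | rfl <;> rcases hz with hz | rfl
        · rw [hu y hy, hu z hz] at hyz
          exact h1 y hy z hz hyz
        · rw [hu y hy, Function.update_self] at hyz
          have := hlt y hy; omega
        · rw [hu z hz, Function.update_self] at hyz
          have := hlt z hz; omega
        · rfl
      · have e : (l ++ [x]).toFinset.card = l.toFinset.card + 1 := by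
          rw [← Finset.card_insert_of_notMem (a := x) (by simpa using hx)]
          congr 1
          ext y; simp
        have e2 : l.map (Function.update σ x l.toFinset.card) = l.map σ :=
          List.map_congr_left fun y hy => Function.update_of_ne (by rintro rfl; exact hx hy) _ _
        rw [e, List.map_append, e2]
        refine h2.append ?_
        simp only [List.map_cons, List.map_nil, Function.update_self]
        exact .new (.nil _)

theorem sub_one (v : List ℕ) (x : ℕ) : sub 1 v x = (0 :: v).getD x 0 := by
  cases x <;> simp [sub]

theorem sat_comp {ι β γ : Type} (φ : ι → β) (σ : β → γ) (h : ∀ i j, σ (φ i) = σ (φ j) → φ i = φ j) :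
    Sat (fun i => σ (φ i)) = Sat φ := by
  ext S
  exact ⟨fun hS i j hij => hS i j (congrArg σ hij), fun hS i j hij => hS i j (h _ _ hij)⟩

theorem dual_ramsey
    (A B : FiniteBoolAlg) (hAB : ∃ f : A.carrier → B.carrier, IsBoolEmb f)
    (k : ℕ) (hk : 2 ≤ k) :
    ∃ C : FiniteBoolAlg,
      ∀ χ : Set C.carrier → Fin k,
        ∃ g : B.carrier → C.carrier, IsBoolEmb g ∧
          ∀ S₁ S₂ : Set C.carrier, IsCopyOf A S₁ → IsCopyOf A S₂ →
            S₁ ⊆ Set.range g → S₂ ⊆ Set.range g → χ S₁ = χ S₂ := by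
  classical
  obtain ⟨α, _, ⟨eA⟩⟩ := exists_iso A.carrier
  obtain ⟨β, _, ⟨eB⟩⟩ := exists_iso B.carrier
  rcases isEmpty_or_nonempty β with hβ | hβ
  · have hs : Subsingleton B.carrier := eB.injective.subsingleton
    refine ⟨B, fun χ => ⟨id, ⟨Function.injective_id, by simp, by simp, by simp, rfl, rfl⟩, ?_⟩⟩
    rintro S₁ S₂ ⟨f₁, -, rfl⟩ ⟨f₂, -, rfl⟩ - -
    congr 1
    rw [Set.Nonempty.eq_univ (Set.range_nonempty_iff_nonempty.2 ⟨⊥⟩),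
      Set.Nonempty.eq_univ (Set.range_nonempty_iff_nonempty.2 ⟨⊥⟩)]
  obtain ⟨n, hn⟩ : ∃ n, Fintype.card β = n + 1 :=
    ⟨Fintype.card β - 1, by have := Fintype.card_pos (α := β); omega⟩
  let eβ : β ≃ Fin (n + 1) := Fintype.equivFinOfCardEq hn
  obtain ⟨N, hN⟩ := gr_all (Fintype.card α - 1) 1 one_pos n (Fin k)
  refine ⟨⟨Set (Fin (N + 1))⟩, fun χ => ?_⟩
  obtain ⟨W, hWl, hW, hmono⟩ := hN fun v =>
    χ (Sat fun i : Fin (N + 1) => (0 :: v).getD i 0)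
  have hW0 : Rig_s16 0 (0 :: W) (1 + n) := .new hW
  let w : Fin (N + 1) → Fin (n + 1) := fun i => ⟨(0 :: W)[i.1]'(by simp [hWl]; omega), by
    have := hW0.mem_lt _ (List.getElem_mem (l := 0 :: W) (n := i.1) (by simp [hWl]; omega))
    omega⟩
  have hw : Function.Surjective w := by
    intro x
    obtain ⟨p, q, h1, -, -⟩ := hW0.decomp x (by omega) (by omega)
    have hx : x.1 ∈ 0 :: W := by rw [h1]; simp
    obtain ⟨i, hi, hix⟩ := List.getElem_of_mem hx
    exact ⟨⟨i, by simpa [hWl] using hi⟩, Fin.ext hix⟩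
  let g : B.carrier → Set (Fin (N + 1)) := fun b => {i | eβ.symm (w i) ∈ eB b}
  have hg : IsBoolEmb g := by
    refine ⟨?_, ?_, ?_, ?_, ?_, ?_⟩
    · intro x y hxy
      apply eB.injective
      ext t
      obtain ⟨i, hi⟩ := hw (eβ t)
      have := Set.ext_iff.1 hxy i
      simpa [g, hi] using this
    · intro x y; ext i; simp [g]
    · intro x y; ext i; simp [g]
    · intro x; ext i; simp [g]
    · ext i; simp [g]
    · ext i; simp [g]
  refine ⟨g, hg, ?_⟩
  have key : ∀ S : Set (Set (Fin (N + 1))), IsCopyOf A S → S ⊆ Set.range g →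
      ∃ v : List ℕ, v.length = n ∧ Rig_s16 1 v (1 + (Fintype.card α - 1)) ∧
        S = Sat fun i : Fin (N + 1) => (0 :: W.map (sub 1 v)).getD i 0 := by
    rintro S ⟨f, hf, rfl⟩ hS
    obtain ⟨φ, hφs, hφ⟩ := exists_dual eA f hf
    have hcard : 0 < Fintype.card α := Fintype.card_pos_iff.2 ⟨φ 0⟩
    have hfac : ∀ i j, w i = w j → φ i = φ j := by
      intro i j hij
      obtain ⟨b, hb⟩ := hS ⟨eA.symm {φ j}, rfl⟩
      have hj : j ∈ g b := by rw [hb, hφ]; simp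
      have hi : i ∈ g b := by
        change eβ.symm (w i) ∈ eB b
        rw [hij]; exact hj
      rw [hb, hφ] at hi
      simpa using hi
    let ψ : Fin (n + 1) → α := fun x => φ (Function.surjInv hw x)
    have hψ : ∀ i, ψ (w i) = φ i := fun i => hfac _ _ (Function.surjInv_eq hw _)
    obtain ⟨σ, hσ, hr⟩ := rigidify (List.ofFn ψ)
    have hmem : ∀ t, t ∈ List.ofFn ψ := by
      intro t
      obtain ⟨i, rfl⟩ := hφs t
      rw [List.mem_ofFn]; exact ⟨w i, hψ i⟩
    have huniv : (List.ofFn ψ).toFinset = Finset.univ := by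
      ext t; simpa using hmem t
    rw [huniv, Finset.card_univ, List.map_ofFn] at hr
    generalize hV : List.ofFn (σ ∘ ψ) = V at hr
    have hVl : V.length = n + 1 := by rw [← hV]; simp
    generalize hd : Fintype.card α = d at hr hcard
    cases hr with
    | nil => simp at hVl
    | old hx h => omega
    | @new _ _ v h =>
      refine ⟨v, by simpa using hVl, ?_, ?_⟩
      · rwa [show 1 + (d - 1) = d by omega]
      · rw [range_eq_sat eA f φ hφ,
          ← sat_comp φ σ fun i j hij => hσ _ (hmem _) _ (hmem _) hij]
        congr 1
        funext i
        have e1 : (0 :: W.map (sub 1 v)) = (0 :: W).map (sub 1 v) := by simp [sub]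
        have hi : i.1 < (0 :: W).length := by simp [hWl]; omega
        rw [e1, List.getD_eq_getElem _ _ (by simpa using hi), List.getElem_map, sub_one, ← hV]
        change _ = (List.ofFn (σ ∘ ψ)).getD (w i).1 0
        rw [List.getD_eq_getElem _ _ (by rw [List.length_ofFn]; exact (w i).2), List.getElem_ofFn]
        exact congrArg σ (hψ i).symm
  intro S₁ S₂ h1 h2 h1' h2'
  obtain ⟨v₁, l1, r1, rfl⟩ := key S₁ h1 h1'
  obtain ⟨v₂, l2, r2, rfl⟩ := key S₂ h2 h2'
  exact hmono v₁ v₂ l1 l2 r1 r2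
end
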